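/- Let q be a power of an odd prime. Every irreducible complex character of SU_3(q) of degree (q−1)(q²−q+1) whose character field is not contained in ℝ has unitary discriminant q if q ≡ 1 (mod 4) and −q if q ≡ 3 (mod 4). -/

import Mathlib

open Matrix

noncomputable section

namespace Paper

/-- The character of a matrix representation. -/
def charOf {G : Type} [Group G] {n : ℕ} (ρ : G →* GL (Fin n) ℂ) : G → ℂ :=
  fun g => Matrix.trace ((ρ g : Matrix (Fin n) (Fin n) ℂ))

/-- Irreducibility of a complex matrix representation. -/
def IsIrredRep {G : Type} [Group G] {n : ℕ} (ρ : G →* GL (Fin n) ℂ) : Prop :=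
  0 < n ∧ ∀ W : Submodule ℂ (Fin n → ℂ),
    (∀ (g : G), ∀ v ∈ W, (ρ g : Matrix (Fin n) (Fin n) ℂ).mulVec v ∈ W) → W = ⊥ ∨ W = ⊤

/-- `χ` is an irreducible complex character of `G`. -/
def IsIrrChar {G : Type} [Group G] (χ : G → ℂ) : Prop :=
  ∃ (n : ℕ) (ρ : G →* GL (Fin n) ℂ), IsIrredRep ρ ∧ χ = charOf ρ

/-- The character field `ℚ(χ)`, as a subfield of `ℂ`. -/
def charField {G : Type} [Group G] (χ : G → ℂ) : Subfield ℂ :=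
  Subfield.closure (Set.range χ)

/-- The subfield of real numbers inside `ℂ`. -/
def realsIn : Subfield ℂ := Subfield.closure (Set.range ((↑) : ℝ → ℂ))

/-- The character field of `χ` is not contained in `ℝ`. -/
def NotReal {G : Type} [Group G] (χ : G → ℂ) : Prop := ¬ charField χ ≤ realsIn

/-- `χ` has unitary discriminant `d`. -/
def HasUnitaryDisc {G : Type} [Group G] (χ : G → ℂ) (d : ℂ) : Prop :=
  ∀ (n : ℕ) (ρ : G →* GL (Fin n) ℂ),
    χ = charOf ρ →
    (∀ g i j, ((ρ g : Matrix (Fin n) (Fin n) ℂ)) i j ∈ charField χ) →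
    ∀ H : Matrix (Fin n) (Fin n) ℂ,
      (∀ i j, H i j ∈ charField χ) →
      IsUnit H.det →
      H.conjTranspose = H →
      (∀ g, ((ρ g : Matrix (Fin n) (Fin n) ℂ)).conjTranspose * H *
        (ρ g : Matrix (Fin n) (Fin n) ℂ) = H) →
      ∃ z ∈ charField χ, z ≠ 0 ∧
        (-1 : ℂ) ^ (n * (n - 1) / 2) * H.det = d * (z * (starRingEnd ℂ) z)

/-- `χ` has orthogonal discriminant `d`. -/
def HasOrthDisc {G : Type} [Group G] (χ : G → ℂ) (d : ℂ) : Prop :=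
  ∀ (n : ℕ) (ρ : G →* GL (Fin n) ℂ),
    χ = charOf ρ →
    (∀ g i j, ((ρ g : Matrix (Fin n) (Fin n) ℂ)) i j ∈ charField χ) →
    ∀ H : Matrix (Fin n) (Fin n) ℂ,
      (∀ i j, H i j ∈ charField χ) →
      IsUnit H.det →
      H.transpose = H →
      (∀ g, ((ρ g : Matrix (Fin n) (Fin n) ℂ)).transpose * H *
        (ρ g : Matrix (Fin n) (Fin n) ℂ) = H) →
      ∃ z ∈ charField χ, z ≠ 0 ∧
        (-1 : ℂ) ^ (n * (n - 1) / 2) * H.det = d * z ^ 2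

/-- `χ` is a rational character. -/
def IsRationalChar {G : Type} [Group G] (χ : G → ℂ) : Prop :=
  ∀ g, ∃ r : ℚ, χ g = (r : ℂ)

/-- `χ` is the character of a representation over `ℚ`. -/
def RealizableOverQ {G : Type} [Group G] (χ : G → ℂ) : Prop :=
  ∃ (n : ℕ) (ρ : G →* GL (Fin n) ℂ), χ = charOf ρ ∧
    ∀ g i j, ∃ r : ℚ, ((ρ g : Matrix (Fin n) (Fin n) ℂ)) i j = (r : ℂ)

end Paper

namespace Paper

variable (p k : ℕ) (F : Type) [Field F] [Fintype F] [ExpChar F p]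

/-- The Gram matrix `Ω` (anti-diagonal ones). -/
def Om : Matrix (Fin 3) (Fin 3) F :=
  Matrix.of fun i j => if (i : ℕ) + (j : ℕ) = 2 then 1 else 0

/-- Entrywise `q`-power Frobenius `Φ` on `3×3` matrices, where `q = p^k`. -/
def Phi : Matrix (Fin 3) (Fin 3) F →+* Matrix (Fin 3) (Fin 3) F :=
  (iterateFrobenius F p k).mapMatrix

/-- The special unitary group `SU₃(q) = {g ∈ SL₃(F_{q²}) : Φ(g)ᵀ·Ω·g = Ω}`. -/
def SU3 : Subgroup (Matrix.SpecialLinearGroup (Fin 3) F) where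
  carrier := {g | (Phi p k F g.val)ᵀ * Om F * g.val = Om F}
  one_mem' := by
    show (Phi p k F (1 : Matrix.SpecialLinearGroup (Fin 3) F).val)ᵀ * Om F *
        (1 : Matrix.SpecialLinearGroup (Fin 3) F).val = Om F
    simp
  mul_mem' := by
    intro a b ha hb
    show (Phi p k F (a.val * b.val))ᵀ * Om F * (a.val * b.val) = Om F
    have ha' : (Phi p k F a.val)ᵀ * Om F * a.val = Om F := ha
    have hb' : (Phi p k F b.val)ᵀ * Om F * b.val = Om F := hb
    calc (Phi p k F (a.val * b.val))ᵀ * Om F * (a.val * b.val)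
        = (Phi p k F b.val)ᵀ * ((Phi p k F a.val)ᵀ * Om F * a.val) * b.val := by
          rw [_root_.map_mul, Matrix.transpose_mul]; simp only [Matrix.mul_assoc]
      _ = (Phi p k F b.val)ᵀ * Om F * b.val := by rw [ha']
      _ = Om F := hb'
  inv_mem' := by
    intro a ha
    show (Phi p k F (a⁻¹).val)ᵀ * Om F * (a⁻¹).val = Om F
    have ha' : (Phi p k F a.val)ᵀ * Om F * a.val = Om F := ha
    have h1 : a.val * (a⁻¹).val = 1 := by
      rw [← Matrix.SpecialLinearGroup.coe_mul, mul_inv_cancel,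
        Matrix.SpecialLinearGroup.coe_one]
    nth_rewrite 1 [← ha']
    calc (Phi p k F (a⁻¹).val)ᵀ * ((Phi p k F a.val)ᵀ * Om F * a.val) * (a⁻¹).val
        = (Phi p k F a.val * Phi p k F (a⁻¹).val)ᵀ * Om F * (a.val * (a⁻¹).val) := by
          rw [Matrix.transpose_mul]; simp only [Matrix.mul_assoc]
      _ = Om F := by rw [← _root_.map_mul, h1, _root_.map_one, Matrix.transpose_one,
            Matrix.one_mul, Matrix.mul_one]

end Paper

namespace Paper

variable (p k : ℕ) (F : Type) [Field F] [Fintype F] [ExpChar F p]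

/-- The Borel subgroup of `SU₃(q)`: the upper triangular matrices in `SU₃(q)`. -/
def Borel : Subgroup ↥(SU3 p k F) where
  carrier := {g | Matrix.BlockTriangular ((g : Matrix.SpecialLinearGroup (Fin 3) F) :
    Matrix (Fin 3) (Fin 3) F) id}
  one_mem' := by
    show Matrix.BlockTriangular ((1 : Matrix.SpecialLinearGroup (Fin 3) F) :
      Matrix (Fin 3) (Fin 3) F) id
    rw [Matrix.SpecialLinearGroup.coe_one]
    exact Matrix.blockTriangular_one
  mul_mem' := by
    intro a b ha hb
    exact Matrix.BlockTriangular.mul ha hb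
  inv_mem' := by
    intro a ha
    show Matrix.BlockTriangular (((a⁻¹ : ↥(SU3 p k F)) : Matrix.SpecialLinearGroup (Fin 3) F) :
      Matrix (Fin 3) (Fin 3) F) id
    have hcoe : (((a⁻¹ : ↥(SU3 p k F)) : Matrix.SpecialLinearGroup (Fin 3) F) :
        Matrix (Fin 3) (Fin 3) F)
        = (((a : ↥(SU3 p k F)) : Matrix.SpecialLinearGroup (Fin 3) F) :
          Matrix (Fin 3) (Fin 3) F)⁻¹ := by
      rw [show ((a⁻¹ : ↥(SU3 p k F)) : Matrix.SpecialLinearGroup (Fin 3) F)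
        = ((a : ↥(SU3 p k F)) : Matrix.SpecialLinearGroup (Fin 3) F)⁻¹ from rfl]
      rw [Matrix.SpecialLinearGroup.coe_inv, Matrix.inv_def,
        ((a : ↥(SU3 p k F)) : Matrix.SpecialLinearGroup (Fin 3) F).2]
      simp
    rw [hcoe]
    haveI : Invertible (((a : ↥(SU3 p k F)) : Matrix.SpecialLinearGroup (Fin 3) F) :
        Matrix (Fin 3) (Fin 3) F) := by
      apply Matrix.invertibleOfIsUnitDet
      rw [((a : ↥(SU3 p k F)) : Matrix.SpecialLinearGroup (Fin 3) F).2]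
      exact isUnit_one
    exact Matrix.blockTriangular_inv_of_blockTriangular ha

end Paper

set_option linter.unusedSectionVars false
set_option linter.unusedVariables false
namespace Paper

theorem idem_factor {k : Type*} [Field k] {n : ℕ} (e : Matrix (Fin n) (Fin n) k) (he : e * e = e) :
    ∃ r : ℕ, ∃ b : Matrix (Fin n) (Fin r) k, ∃ b' : Matrix (Fin r) (Fin n) k,
      b * b' = e ∧ b' * b = 1 := by
  classical
  set f := Matrix.toLin' e with hf
  have hff : ∀ v, f (f v) = f v := by
    intro v
    simp [hf, Matrix.toLin'_apply, Matrix.mulVec_mulVec, he]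
  let φ := (Module.finBasis k (LinearMap.range f)).equivFun
  refine ⟨_, LinearMap.toMatrix' ((LinearMap.range f).subtype ∘ₗ φ.symm.toLinearMap),
    LinearMap.toMatrix' (φ.toLinearMap ∘ₗ f.rangeRestrict), ?_, ?_⟩
  · rw [← LinearMap.toMatrix'_comp]
    have : ((LinearMap.range f).subtype ∘ₗ φ.symm.toLinearMap) ∘ₗ
        (φ.toLinearMap ∘ₗ f.rangeRestrict) = f := by
      apply LinearMap.ext
      intro v
      simp
    rw [this, hf, LinearMap.toMatrix'_toLin']
  · rw [← LinearMap.toMatrix'_comp]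
    have : (φ.toLinearMap ∘ₗ f.rangeRestrict) ∘ₗ
        ((LinearMap.range f).subtype ∘ₗ φ.symm.toLinearMap) = LinearMap.id := by
      apply LinearMap.ext
      intro v
      have h1 : f.rangeRestrict ((φ.symm v : LinearMap.range f) : Fin n → k) = φ.symm v := by
        obtain ⟨w, hw⟩ := (φ.symm v).2
        apply Subtype.ext
        simp only [LinearMap.codRestrict_apply, LinearMap.rangeRestrict]
        rw [← hw, hff]
      simp [h1]
    rw [this, LinearMap.toMatrix'_id]

theorem idem_trace {k : Type*} [Field k] {n r : ℕ} {e : Matrix (Fin n) (Fin n) k}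
    {b : Matrix (Fin n) (Fin r) k} {b' : Matrix (Fin r) (Fin n) k}
    (h1 : b * b' = e) (h2 : b' * b = 1) : e.trace = r := by
  rw [← h1, Matrix.trace_mul_comm, h2]; simp

theorem idem_factor_trace {k : Type*} [Field k] [CharZero k] {n m : ℕ}
    (e : Matrix (Fin n) (Fin n) k) (he : e * e = e) (hm : e.trace = m) :
    ∃ b : Matrix (Fin n) (Fin m) k, ∃ b' : Matrix (Fin m) (Fin n) k,
      b * b' = e ∧ b' * b = 1 := by
  obtain ⟨r, b, b', h1, h2⟩ := idem_factor e he
  have := idem_trace h1 h2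
  rw [hm] at this
  have : m = r := by exact_mod_cast this
  subst this
  exact ⟨b, b', h1, h2⟩

theorem idem_trace_nat {k : Type*} [Field k] {n : ℕ}
    (e : Matrix (Fin n) (Fin n) k) (he : e * e = e) : ∃ r : ℕ, e.trace = r := by
  obtain ⟨r, b, b', h1, h2⟩ := idem_factor e he
  exact ⟨r, idem_trace h1 h2⟩

theorem idem_zero {k : Type*} [Field k] [CharZero k] {n : ℕ}
    (e : Matrix (Fin n) (Fin n) k) (he : e * e = e) (h0 : e.trace = 0) : e = 0 := by
  obtain ⟨b, b', h1, h2⟩ := idem_factor_trace (m := 0) e he (by simpa using h0)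
  rw [← h1]
  ext i j
  simp [Matrix.mul_apply]

/-- determinant on the image of an idempotent -/
theorem det_idem {k : Type*} [Field k] {n r : ℕ} {e : Matrix (Fin n) (Fin n) k}
    {b : Matrix (Fin n) (Fin r) k} {b' : Matrix (Fin r) (Fin n) k}
    (h1 : b * b' = e) (h2 : b' * b = 1) (M : Matrix (Fin n) (Fin n) k) :
    (M * e + (1 - e)).det = (b' * M * b).det := by
  have : M * e + (1 - e) = 1 + ((M - 1) * b) * b' := by
    rw [Matrix.mul_assoc, h1]; noncomm_ring
  rw [this, Matrix.det_one_add_mul_comm]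
  congr 1
  rw [← Matrix.mul_assoc, Matrix.mul_sub, Matrix.sub_mul, Matrix.mul_one, h2]
  abel

theorem det_smul_idem {k : Type*} [Field k] {n r : ℕ} [CharZero k] {e : Matrix (Fin n) (Fin n) k}
    (he : e * e = e) (hr : e.trace = r) (c : k) :
    (1 + (c - 1) • e).det = c ^ r := by
  obtain ⟨b, b', h1, h2⟩ := idem_factor_trace e he hr
  have : 1 + (c - 1) • e = (c • 1) * e + (1 - e) := by
    simp [sub_smul]; abel
  rw [this, det_idem h1 h2]
  simp [h2]

theorem det_sum_idem {k : Type*} [Field k] [CharZero k] {n : ℕ} {ι : Type*} [DecidableEq ι]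
    (e : ι → Matrix (Fin n) (Fin n) k) (r : ι → ℕ)
    (he : ∀ s, e s * e s = e s) (ho : ∀ s s', s ≠ s' → e s * e s' = 0)
    (hr : ∀ s, (e s).trace = r s) (c : ι → k) (S : Finset ι) :
    (1 + ∑ s ∈ S, (c s - 1) • e s).det = ∏ s ∈ S, c s ^ r s := by
  induction S using Finset.induction_on with
  | empty => simp
  | insert a S ha ih =>
    rw [Finset.sum_insert ha, Finset.prod_insert ha, ← ih, ← det_smul_idem (he a) (hr a),
      ← Matrix.det_mul]
    congr 1
    have : (e a) * ∑ s ∈ S, (c s - 1) • e s = 0 := by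
      rw [Finset.mul_sum]
      apply Finset.sum_eq_zero
      intro s hs
      rw [Matrix.mul_smul, ho a s (by rintro rfl; exact ha hs), smul_zero]
    rw [Matrix.add_mul, Matrix.mul_add, Matrix.smul_mul, Matrix.mul_add, this]
    simp; abel

section Fam
variable {k : Type*} [Field k] {R : Type*} [CommRing R] [Fintype R] {n : ℕ}

/-- Fourier components of a function on a finite ring. -/
def fam (ψ : AddChar R k) (M : R → Matrix (Fin n) (Fin n) k) (s : R) : Matrix (Fin n) (Fin n) k :=
  (Fintype.card R : k)⁻¹ • ∑ a, ψ (-(s * a)) • M a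

variable {ψ : AddChar R k} {M : R → Matrix (Fin n) (Fin n) k}

theorem M_mul_fam (hM : ∀ a b, M (a + b) = M a * M b) (b s : R) :
    M b * fam ψ M s = ψ (s * b) • fam ψ M s := by
  rw [fam, Matrix.mul_smul, smul_comm (ψ (s * b)), Finset.mul_sum]
  congr 1
  rw [Finset.smul_sum]
  rw [← Equiv.sum_comp (Equiv.addLeft b) (fun a => ψ (s * b) • ψ (-(s * a)) • M a)]
  apply Finset.sum_congr rfl
  intro a _
  simp only [Equiv.coe_addLeft]
  rw [hM, Matrix.mul_smul, smul_smul, ← AddChar.map_add_eq_mul]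
  congr 2
  ring

theorem fam_mul_M (hM : ∀ a b, M (a + b) = M a * M b) (b s : R) :
    fam ψ M s * M b = ψ (s * b) • fam ψ M s := by
  rw [← M_mul_fam hM, fam, Matrix.mul_smul, Matrix.smul_mul, Finset.mul_sum, Finset.sum_mul]
  congr 1
  apply Finset.sum_congr rfl
  intro a _
  rw [Matrix.mul_smul, Matrix.smul_mul, ← hM, ← hM, add_comm]

theorem fam_mul_fam [CharZero k] [DecidableEq R] (hψ : ψ.IsPrimitive)
    (hM : ∀ a b, M (a + b) = M a * M b) (s s' : R) :
    fam ψ M s * fam ψ M s' = if s = s' then fam ψ M s else 0 := by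
  have hc : (Fintype.card R : k) ≠ 0 := by exact_mod_cast Fintype.card_ne_zero
  have : fam ψ M s * fam ψ M s' =
      ((Fintype.card R : k)⁻¹ * ∑ a, ψ (a * (s' - s))) • fam ψ M s' := by
    conv_lhs => rw [fam]
    rw [Matrix.smul_mul, Finset.sum_mul, mul_smul, Finset.sum_smul]
    congr 1
    apply Finset.sum_congr rfl
    intro a _
    rw [Matrix.smul_mul, M_mul_fam hM, smul_smul, ← AddChar.map_add_eq_mul]
    congr 2
    ring
  rw [this, AddChar.sum_mulShift _ hψ]
  by_cases h : s = s'
  · subst h; simp [hc]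
  · have : s' - s ≠ 0 := by rwa [sub_ne_zero, ne_comm]
    simp [h, this]

theorem sum_fam [CharZero k] [DecidableEq R] (hψ : ψ.IsPrimitive) :
    ∑ s, fam ψ M s = M 0 := by
  have hc : (Fintype.card R : k) ≠ 0 := by exact_mod_cast Fintype.card_ne_zero
  simp only [fam]
  rw [← Finset.smul_sum, Finset.sum_comm]
  have : ∀ a, ∑ s, ψ (-(s * a)) • M a = if a = 0 then (Fintype.card R : k) • M 0 else 0 := by
    intro a
    rw [← Finset.sum_smul]
    have h := AddChar.sum_mulShift (-a) hψ
    simp only [mul_neg, neg_eq_zero] at h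
    rw [h]
    split_ifs with h0
    · rw [h0]
    · simp
  simp only [this]
  simp [smul_smul, hc]

theorem M0_mul_fam (hM : ∀ a b, M (a + b) = M a * M b) (s : R) :
    M 0 * fam ψ M s = fam ψ M s := by
  rw [M_mul_fam hM]; simp

theorem fam_mul_M0 (hM : ∀ a b, M (a + b) = M a * M b) (s : R) :
    fam ψ M s * M 0 = fam ψ M s := by
  rw [fam_mul_M hM]; simp

theorem fam_trace (s : R) :
    (fam ψ M s).trace = (Fintype.card R : k)⁻¹ * ∑ a, ψ (-(s * a)) * (M a).trace := by
  rw [fam, Matrix.trace_smul, Matrix.trace_sum]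
  simp

/-- change of ring -/
theorem fam_map {k' : Type*} [Field k'] (f : k →+* k') (s : R)
    (ψ' : AddChar R k') (hψ' : ∀ a, ψ' a = f (ψ a)) :
    (fam ψ M s).map f = fam ψ' (fun a => (M a).map f) s := by
  ext i j
  simp [fam, Matrix.sum_apply, hψ']

/-- Conjugation by an element acting by multiplication by a unit. -/
theorem fam_conj (A B : Matrix (Fin n) (Fin n) k) (c : Rˣ)
    (h : ∀ a, A * M a * B = M (c * a)) (s : R) :
    A * fam ψ M s * B = fam ψ M (s * ↑c⁻¹) := by
  rw [fam, fam, Matrix.mul_smul, Matrix.smul_mul, Finset.mul_sum, Finset.sum_mul]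
  congr 1
  rw [← Equiv.sum_comp (Units.mulLeft c) (fun a => ψ (-(s * ↑c⁻¹ * a)) • M a)]
  apply Finset.sum_congr rfl
  intro a _
  rw [Matrix.mul_smul, Matrix.smul_mul, h]
  simp [mul_assoc]

end Fam

theorem free_det {n l K : ℕ} (hl : Even l) (hl0 : 0 < l) (S e : Matrix (Fin n) (Fin n) ℂ)
    (he : e * e = e) (hc : S * e = e * S) (hS : S ^ l * e = e)
    (ht : ∀ j, 0 < j → j < l → (S ^ j * e).trace = 0) (hK : e.trace = (l * K : ℕ)) :
    (S * e + (1 - e)).det = (-1) ^ K := by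
  have : NeZero l := ⟨hl0.ne'⟩
  let M : ZMod l → Matrix (Fin n) (Fin n) ℂ := fun j => S ^ j.val * e
  have hce : ∀ j, e * S ^ j = S ^ j * e := fun j => (Commute.pow_left (show Commute S e from hc) j).symm
  have hmod : ∀ j, S ^ j * e = S ^ (j % l) * e := by
    intro j
    conv_lhs => rw [← Nat.mod_add_div j l]
    generalize j / l = d
    induction d with
    | zero => simp
    | succ d ih => rw [mul_add, mul_one, ← add_assoc, pow_add, Matrix.mul_assoc, hS, ih]
  have hM : ∀ a b, M (a + b) = M a * M b := by
    intro a b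
    simp only [M]
    rw [ZMod.val_add, ← hmod, pow_add, Matrix.mul_assoc, Matrix.mul_assoc (S ^ a.val),
      ← Matrix.mul_assoc e, hce, Matrix.mul_assoc (S ^ b.val), he]
  have hM0 : M 0 = e := by simp [M]
  have hψ := ZMod.isPrimitive_stdAddChar l
  have htr : ∀ s, (fam (ZMod.stdAddChar (N := l)) M s).trace = K := by
    intro s
    rw [fam_trace, Finset.sum_eq_single 0]
    · rw [hM0, hK]
      have : (l : ℂ) ≠ 0 := by exact_mod_cast hl0.ne'
      simp [ZMod.card, this]
    · intro b _ hb
      rw [ht, mul_zero]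
      · exact Nat.pos_of_ne_zero (by simpa using hb)
      · exact ZMod.val_lt b
    · simp
  have hdet := det_sum_idem (fam (ZMod.stdAddChar (N := l)) M) (fun _ => K)
    (fun s => by rw [fam_mul_fam hψ hM]; simp)
    (fun s s' h => by rw [fam_mul_fam hψ hM]; simp [h]) htr
    (fun s => ZMod.stdAddChar s) Finset.univ
  have hSe : S * e = M 1 := by
    rw [← pow_one S, hmod]; simp only [M]; congr 2
    rw [ZMod.val_one_eq_one_mod]
  have : S * e + (1 - e) = 1 + ∑ s, (ZMod.stdAddChar s - 1) • fam (ZMod.stdAddChar (N := l)) M s := by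
    have h1 : M 1 = M 1 * M 0 := by rw [← hM, add_zero]
    rw [hSe, h1, ← sum_fam (M := M) hψ, Finset.mul_sum]
    simp only [sub_smul, one_smul, Finset.sum_sub_distrib, sum_fam hψ, M_mul_fam hM, mul_one, hM0]
    abel
  rw [this, hdet, Finset.prod_pow]
  congr 1
  obtain ⟨d, hd⟩ := hl
  have h2 : ∏ s : ZMod l, ZMod.stdAddChar s
      = ∏ i ∈ Finset.range l, (ZMod.stdAddChar (1 : ZMod l)) ^ i := by
    refine Finset.prod_bij' (fun s _ => s.val) (fun i _ => (i : ZMod l)) ?_ ?_ ?_ ?_ ?_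
    · intro a _; simpa using ZMod.val_lt a
    · intro a _; simp
    · intro a _; simp
    · intro a ha; exact ZMod.val_cast_of_lt (by simpa using ha)
    · intro a _
      rw [← AddChar.map_nsmul_eq_pow]; simp
  rw [h2, Finset.prod_pow_eq_pow_sum, Finset.sum_range_id]
  have h3 : l * (l - 1) / 2 = d * (2 * d - 1) := by
    rw [hd, show (d + d) * (d + d - 1) = 2 * (d * (2 * d - 1)) by rw [← two_mul]; ring]
    simp
  have h4 : (ZMod.stdAddChar (1 : ZMod l)) ^ d = -1 := by
    have h5 : ((ZMod.stdAddChar (1 : ZMod l)) ^ d) ^ 2 = 1 := by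
      rw [← pow_mul, mul_two, ← hd, ← AddChar.map_nsmul_eq_pow]; simp
    rcases (by simpa using h5 : (ZMod.stdAddChar (1 : ZMod l)) ^ d = 1 ∨ (ZMod.stdAddChar (1 : ZMod l)) ^ d = -1) with h | h
    · exfalso
      rw [← AddChar.map_nsmul_eq_pow, ← (ZMod.stdAddChar (N := l)).map_zero_eq_one] at h
      have h6 := ZMod.injective_stdAddChar h
      simp only [nsmul_eq_mul, mul_one] at h6
      rw [ZMod.natCast_eq_zero_iff] at h6
      have := Nat.le_of_dvd (by omega) h6
      omega
    · exact h
  rw [h3, pow_mul, h4]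
  apply Odd.neg_one_pow
  exact ⟨d - 1, by omega⟩
end Paper

set_option linter.unusedSectionVars false
set_option linter.unusedVariables false
namespace Paper

/-- Field data: `F` has `q²` elements, `q` odd, and `a ↦ a^q` is an involutive automorphism. -/
structure FD (q : ℕ) (F : Type) [Field F] [Fintype F] : Prop where
  odd : Odd q
  three_le : 3 ≤ q
  card : Fintype.card F = q ^ 2
  add : ∀ a b : F, (a + b) ^ q = a ^ q + b ^ q
  inv : ∀ a : F, (a ^ q) ^ q = a
  two : (2 : F) ≠ 0

section FDlem
variable {q : ℕ} {F : Type} [Field F] [Fintype F] (hF : FD q F)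
include hF

theorem FD.neg (a : F) : (-a) ^ q = -(a ^ q) := hF.odd.neg_pow a

theorem FD.sub (a b : F) : (a - b) ^ q = a ^ q - b ^ q := by
  rw [sub_eq_add_neg, hF.add, hF.neg, sub_eq_add_neg]

theorem FD.two_pow : (2 : F) ^ q = 2 := by
  have : (2 : F) = 1 + 1 := by norm_num
  rw [this, hF.add]; simp

theorem FD.card_le [DecidableEq F] (c : F) : (Finset.univ.filter (fun a : F => a ^ q = c * a)).card ≤ q := by
  have h3 := hF.three_le
  let P : Polynomial F := Polynomial.X ^ q - Polynomial.C c * Polynomial.X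
  have hd : P.natDegree = q := by
    apply Polynomial.natDegree_eq_of_degree_eq_some
    simp only [P]
    rw [Polynomial.degree_sub_eq_left_of_degree_lt]
    · simp
    · rw [Polynomial.degree_X_pow]
      refine lt_of_le_of_lt (Polynomial.degree_C_mul_X_le c) ?_
      exact_mod_cast (by omega : 1 < q)
  have h0 : P ≠ 0 := by
    intro h; rw [h] at hd; simp at hd; omega
  have hsub : (Finset.univ.filter (fun a : F => a ^ q = c * a)) ⊆ P.roots.toFinset := by
    intro a ha
    simp only [Finset.mem_filter, Finset.mem_univ, true_and] at ha
    simp [h0, P, ha]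
  calc _ ≤ P.roots.toFinset.card := Finset.card_le_card hsub
    _ ≤ Multiset.card P.roots := Multiset.toFinset_card_le _
    _ ≤ P.natDegree := Polynomial.card_roots' P
    _ = q := hd

theorem FD.cards [DecidableEq F] : (Finset.univ.filter (fun a : F => a ^ q = a)).card = q ∧
    (Finset.univ.filter (fun a : F => a ^ q = -a)).card = q := by
  have h3 := hF.three_le
  have k0 := hF.card_le 1
  have k1 := hF.card_le (-1)
  simp only [one_mul, neg_one_mul] at k0 k1
  set K0 := (Finset.univ.filter (fun a : F => a ^ q = a))
  set K1 := (Finset.univ.filter (fun a : F => a ^ q = -a))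
  have hle : Fintype.card F ≤ K0.card * K1.card := by
    rw [← Finset.card_univ]
    apply Finset.card_le_mul_card_image_of_maps_to (f := fun a => a - a ^ q) (t := K1)
    · intro a _
      simp only [K1, Finset.mem_filter, Finset.mem_univ, true_and]
      rw [hF.sub, hF.inv]; ring
    · intro b _
      by_cases hex : ∃ a0 : F, a0 - a0 ^ q = b
      · obtain ⟨a0, ha0⟩ := hex
        apply Finset.card_le_card_of_injOn (fun a => a - a0)
        · intro a ha
          simp only [Finset.coe_filter, Finset.mem_univ, true_and, Set.mem_ofPred_eq, K0] at ha ⊢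
          rw [hF.sub]; linear_combination ha0 - ha
        · intro a _ b _ h
          simpa using h
      · rw [Finset.card_eq_zero.mpr]
        · omega
        · rw [Finset.filter_eq_empty_iff]
          intro a _ h
          exact hex ⟨a, h⟩
  rw [hF.card] at hle
  constructor <;> nlinarith

theorem FD.gen : ∃ x0 : Fˣ, orderOf x0 = q ^ 2 - 1 ∧ ∀ x, ∃ j : ℕ, x = x0 ^ j := by
  classical
  obtain ⟨x0, h⟩ := IsCyclic.exists_generator (α := Fˣ)
  refine ⟨x0, ?_, ?_⟩
  · rw [orderOf_eq_card_of_forall_mem_zpowers h, Nat.card_eq_fintype_card, Fintype.card_units,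
      hF.card]
  · intro x
    have := h x
    rw [← mem_powers_iff_mem_zpowers] at this
    obtain ⟨j, hj⟩ := this
    exact ⟨j, hj.symm⟩

theorem FD.sq_sub : q ^ 2 - 1 = (q + 1) * (q - 1) := by
  have := hF.three_le
  obtain ⟨r, rfl⟩ : ∃ r, q = r + 1 := ⟨q - 1, by omega⟩
  simp; ring_nf; omega

theorem FD.norm_surj (a : F) (ha : a ≠ 0) (haq : a ^ q = a) : ∃ x : Fˣ, (x : F) ^ (q + 1) = a := by
  obtain ⟨x0, ho, hg⟩ := hF.gen
  have h3 := hF.three_le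
  obtain ⟨j, hj⟩ := hg (Units.mk0 a ha)
  have h1 : x0 ^ (j * (q - 1)) = 1 := by
    rw [pow_mul, ← hj]
    ext
    simp only [Units.val_pow_eq_pow_val, Units.val_mk0, Units.val_one]
    apply mul_right_cancel₀ ha
    rw [← pow_succ, show q - 1 + 1 = q by omega, haq, one_mul]
  have h2 := orderOf_dvd_of_pow_eq_one h1
  rw [ho, hF.sq_sub] at h2
  have h4 : q + 1 ∣ j := Nat.dvd_of_mul_dvd_mul_right (by omega) h2
  obtain ⟨i, rfl⟩ := h4
  refine ⟨x0 ^ i, ?_⟩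
  have := congrArg Units.val hj
  simp only [Units.val_mk0] at this
  rw [this]
  simp [← pow_mul, mul_comm]

theorem FD.normq (x : F) : (x ^ (q + 1)) ^ q = x ^ (q + 1) := by
  rw [pow_succ, mul_pow, hF.inv, mul_comm]

end FDlem

/-- The abstract group data of `SU₃(q)` used below. -/
structure Dat (q : ℕ) (F G : Type) [Field F] [Group G] where
  z : F → G
  u : F → G
  t : Fˣ →* G
  w : G
  z_add : ∀ a b, z (a + b) = z a * z b
  z_one : ∀ a, a ^ q = a → z a = 1
  z_inj : ∀ a, z a = 1 → a ^ q = a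
  u_mul : ∀ a b, u a * u b = z (b * a ^ q / 2) * u (a + b)
  zu : ∀ a b, z a * u b = u b * z a
  tz : ∀ x a, t x * z a = z ((x ^ (q + 1) : Fˣ) * a) * t x
  tu : ∀ x a, t x * u a = u ((x ^ 2 * (x ^ q)⁻¹ : Fˣ) * a) * t x
  ww : w * w = 1
  bruhat : ∀ g, (∃ b a x, g = z b * u a * t x) ∨
    (∃ b a x b' a', g = z b * u a * w * t x * (z b' * u a'))
  big : ∀ a b, (a ≠ 0 ∨ b ^ q ≠ b) → ∃ c d x c' d',
    w * (z b * u a) * w = z c * u d * w * t x * (z c' * u d')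
  kap : ∀ x, ∃ a b c d c' d',
    w * (z b * u a) * w = z c * u d * w * t x * (z c' * u d')
  ti : ∀ a b h, b ^ q ≠ b → h * z b = z a * h → ∃ b' a' x, h = z b' * u a' * t x
  cen : ∀ x : Fˣ, x ^ 2 * (x ^ q)⁻¹ = 1 → ∀ g, t x * g = g * t x

namespace Dat
variable {q : ℕ} {F G : Type} [Field F] [Group G] (D : Dat q F G)

theorem z_zero : D.z 0 = 1 := by
  have := D.z_add 0 0
  simpa using this

theorem u_zero : D.u 0 = 1 := by
  have := D.u_mul 0 0
  simpa [D.z_zero] using this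

variable [Fintype F] {k : Type} [Field k] {n : ℕ}
  (ρ : G →* Matrix (Fin n) (Fin n) k) (ψ : AddChar F k)

/-- components under the centre of the unipotent radical -/
def e (y : F) : Matrix (Fin n) (Fin n) k := fam ψ (fun a => ρ (D.z a)) y

/-- components of the fixed space of the centre -/
def f (s : F) : Matrix (Fin n) (Fin n) k := fam ψ (fun a => ρ (D.u a) * D.e ρ ψ 0) s

theorem hMz (a b : F) : ρ (D.z (a + b)) = ρ (D.z a) * ρ (D.z b) := by
  rw [D.z_add, map_mul]

theorem z_e (a y : F) : ρ (D.z a) * D.e ρ ψ y = ψ (y * a) • D.e ρ ψ y :=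
  M_mul_fam (ψ := ψ) (M := fun a => ρ (D.z a)) (D.hMz ρ) a y

theorem e_z (a y : F) : D.e ρ ψ y * ρ (D.z a) = ψ (y * a) • D.e ρ ψ y :=
  fam_mul_M (ψ := ψ) (M := fun a => ρ (D.z a)) (D.hMz ρ) a y

theorem z_e0 (a : F) : ρ (D.z a) * D.e ρ ψ 0 = D.e ρ ψ 0 := by
  rw [z_e]; simp

theorem e0_z (a : F) : D.e ρ ψ 0 * ρ (D.z a) = D.e ρ ψ 0 := by
  rw [e_z]; simp

theorem u_e (a y : F) : ρ (D.u a) * D.e ρ ψ y = D.e ρ ψ y * ρ (D.u a) := by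
  rw [e, fam, Matrix.mul_smul, Matrix.smul_mul, Finset.mul_sum, Finset.sum_mul]
  congr 1
  apply Finset.sum_congr rfl
  intro b _
  rw [Matrix.mul_smul, Matrix.smul_mul, ← map_mul, ← map_mul, D.zu]

variable [CharZero k] [DecidableEq F]

theorem e_mul_e (hψ : ψ.IsPrimitive) (s s' : F) :
    D.e ρ ψ s * D.e ρ ψ s' = if s = s' then D.e ρ ψ s else 0 :=
  fam_mul_fam (M := fun a => ρ (D.z a)) hψ (D.hMz ρ) s s'

theorem e_idem (hψ : ψ.IsPrimitive) (s : F) :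
    D.e ρ ψ s * D.e ρ ψ s = D.e ρ ψ s := by
  rw [e_mul_e _ _ _ hψ]; simp

theorem e_orth (hψ : ψ.IsPrimitive) {s s' : F} (h : s ≠ s') :
    D.e ρ ψ s * D.e ρ ψ s' = 0 := by
  rw [e_mul_e _ _ _ hψ]; simp [h]

theorem sum_e (hψ : ψ.IsPrimitive) : ∑ s, D.e ρ ψ s = 1 := by
  have : ∑ s, D.e ρ ψ s = ρ (D.z 0) := sum_fam (M := fun a => ρ (D.z a)) hψ
  rw [this, D.z_zero, map_one]

theorem hMu (hψ : ψ.IsPrimitive) (a b : F) :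
    ρ (D.u (a + b)) * D.e ρ ψ 0 = (ρ (D.u a) * D.e ρ ψ 0) * (ρ (D.u b) * D.e ρ ψ 0) := by
  rw [Matrix.mul_assoc, ← Matrix.mul_assoc (D.e ρ ψ 0), ← u_e, Matrix.mul_assoc (ρ (D.u b)),
    e_idem _ _ _ hψ, ← Matrix.mul_assoc, ← map_mul, D.u_mul, D.zu, map_mul, Matrix.mul_assoc,
    z_e0]

theorem f_mul_f (hψ : ψ.IsPrimitive) (s s' : F) :
    D.f ρ ψ s * D.f ρ ψ s' = if s = s' then D.f ρ ψ s else 0 :=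
  fam_mul_fam (M := fun a => ρ (D.u a) * D.e ρ ψ 0) hψ (D.hMu ρ ψ hψ) s s'

theorem f_idem (hψ : ψ.IsPrimitive) (s : F) :
    D.f ρ ψ s * D.f ρ ψ s = D.f ρ ψ s := by
  rw [f_mul_f _ _ _ hψ]; simp

theorem f_orth (hψ : ψ.IsPrimitive) {s s' : F} (h : s ≠ s') :
    D.f ρ ψ s * D.f ρ ψ s' = 0 := by
  rw [f_mul_f _ _ _ hψ]; simp [h]

theorem sum_f (hψ : ψ.IsPrimitive) : ∑ s, D.f ρ ψ s = D.e ρ ψ 0 := by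
  have : ∑ s, D.f ρ ψ s = ρ (D.u 0) * D.e ρ ψ 0 :=
    sum_fam (M := fun a => ρ (D.u a) * D.e ρ ψ 0) hψ
  rw [this, D.u_zero, map_one, Matrix.one_mul]

theorem e0_f (hψ : ψ.IsPrimitive) (s : F) : D.e ρ ψ 0 * D.f ρ ψ s = D.f ρ ψ s := by
  have : ρ (D.u 0) * D.e ρ ψ 0 * D.f ρ ψ s = D.f ρ ψ s :=
    M0_mul_fam (ψ := ψ) (M := fun a => ρ (D.u a) * D.e ρ ψ 0) (D.hMu ρ ψ hψ) s
  rwa [D.u_zero, map_one, Matrix.one_mul] at this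

theorem f_e0 (hψ : ψ.IsPrimitive) (s : F) : D.f ρ ψ s * D.e ρ ψ 0 = D.f ρ ψ s := by
  have : D.f ρ ψ s * (ρ (D.u 0) * D.e ρ ψ 0) = D.f ρ ψ s :=
    fam_mul_M0 (ψ := ψ) (M := fun a => ρ (D.u a) * D.e ρ ψ 0) (D.hMu ρ ψ hψ) s
  rwa [D.u_zero, map_one, Matrix.one_mul] at this

theorem f_u (hψ : ψ.IsPrimitive) (s a : F) :
    D.f ρ ψ s * ρ (D.u a) = ψ (s * a) • D.f ρ ψ s := by
  have : D.f ρ ψ s * (ρ (D.u a) * D.e ρ ψ 0) = ψ (s * a) • D.f ρ ψ s :=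
    fam_mul_M (ψ := ψ) (M := fun a => ρ (D.u a) * D.e ρ ψ 0) (D.hMu ρ ψ hψ) a s
  rw [← this, u_e, ← Matrix.mul_assoc, f_e0 _ _ _ hψ]

theorem u_f (hψ : ψ.IsPrimitive) (s a : F) :
    ρ (D.u a) * D.f ρ ψ s = ψ (s * a) • D.f ρ ψ s := by
  have : ρ (D.u a) * D.e ρ ψ 0 * D.f ρ ψ s = ψ (s * a) • D.f ρ ψ s :=
    M_mul_fam (ψ := ψ) (M := fun a => ρ (D.u a) * D.e ρ ψ 0) (D.hMu ρ ψ hψ) a s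
  rw [← this, Matrix.mul_assoc, e0_f _ _ _ hψ]

theorem f0_zu (hψ : ψ.IsPrimitive) (a b : F) :
    D.f ρ ψ 0 * ρ (D.z b * D.u a) = D.f ρ ψ 0 := by
  rw [map_mul, ← f_e0 _ _ _ hψ, Matrix.mul_assoc, ← Matrix.mul_assoc (D.e ρ ψ 0), e0_z,
    ← Matrix.mul_assoc, f_e0 _ _ _ hψ, f_u _ _ _ hψ]; simp

theorem zu_f0 (hψ : ψ.IsPrimitive) (a b : F) :
    ρ (D.z b * D.u a) * D.f ρ ψ 0 = D.f ρ ψ 0 := by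
  rw [map_mul, Matrix.mul_assoc, u_f _ _ _ hψ, ← e0_f _ _ _ hψ, zero_mul, AddChar.map_zero_eq_one,
    one_smul, ← Matrix.mul_assoc, z_e0]

theorem tt (x : Fˣ) : ρ (D.t x) * ρ (D.t x⁻¹) = 1 := by
  rw [← map_mul, ← map_mul]; simp

theorem tt' (x : Fˣ) : ρ (D.t x⁻¹) * ρ (D.t x) = 1 := by
  rw [← map_mul, ← map_mul]; simp

theorem t_e (x : Fˣ) (y : F) :
    ρ (D.t x) * D.e ρ ψ y * ρ (D.t x⁻¹) = D.e ρ ψ (y * ((x ^ (q + 1))⁻¹ : Fˣ)) := by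
  apply fam_conj
  intro a
  rw [← map_mul, D.tz, map_mul, Matrix.mul_assoc, tt, Matrix.mul_one]

theorem t_e' (x : Fˣ) (y : F) :
    ρ (D.t x) * D.e ρ ψ y = D.e ρ ψ (y * ((x ^ (q + 1))⁻¹ : Fˣ)) * ρ (D.t x) := by
  rw [← t_e, Matrix.mul_assoc _ (ρ (D.t x⁻¹)), tt', Matrix.mul_one]

theorem t_e0 (x : Fˣ) : ρ (D.t x) * D.e ρ ψ 0 = D.e ρ ψ 0 * ρ (D.t x) := by
  rw [t_e']; simp

theorem t_f (x : Fˣ) (s : F) :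
    ρ (D.t x) * D.f ρ ψ s * ρ (D.t x⁻¹) = D.f ρ ψ (s * ((x ^ 2 * (x ^ q)⁻¹)⁻¹ : Fˣ)) := by
  apply fam_conj
  intro a
  rw [← Matrix.mul_assoc, ← map_mul, D.tu, map_mul, Matrix.mul_assoc, Matrix.mul_assoc, ← Matrix.mul_assoc (ρ (D.t x)), t_e0, Matrix.mul_assoc (D.e ρ ψ 0), tt,
    Matrix.mul_one]

theorem t_f' (x : Fˣ) (s : F) :
    ρ (D.t x) * D.f ρ ψ s = D.f ρ ψ (s * ((x ^ 2 * (x ^ q)⁻¹)⁻¹ : Fˣ)) * ρ (D.t x) := by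
  rw [← t_f, Matrix.mul_assoc _ (ρ (D.t x⁻¹)), tt', Matrix.mul_one]

theorem e_eq_zero (hF : FD q F) (hψ : ψ.IsPrimitive) (hfr : ∀ a, ψ (a ^ q) = ψ a) (y : F)
    (hy : y ^ q ≠ -y) : D.e ρ ψ y = 0 := by
  have hne : y + y ^ q ≠ 0 := fun h => hy (by linear_combination h)
  have h1 := hψ hne
  rw [AddChar.ne_one_iff] at h1
  obtain ⟨a, ha⟩ := h1
  rw [AddChar.mulShift_apply] at ha
  have h2 := D.z_e ρ ψ (a + a ^ q) y
  rw [D.z_one _ (by rw [hF.add, hF.inv, add_comm]), map_one, Matrix.one_mul] at h2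
  have h3 : ψ (y * (a + a ^ q)) = ψ ((y + y ^ q) * a) := by
    rw [mul_add, add_mul, AddChar.map_add_eq_mul, AddChar.map_add_eq_mul, ← hfr (y * a ^ q),
      mul_pow, hF.inv]
  rw [h3] at h2
  have h4 : (1 - ψ ((y + y ^ q) * a)) • D.e ρ ψ y = 0 := by
    rw [sub_smul, one_smul, ← h2, sub_self]
  rcases smul_eq_zero.mp h4 with h | h
  · exact absurd (sub_eq_zero.mp h).symm ha
  · exact h

theorem trace_e_conj (hF : FD q F) (y y' : F) (hy : y ≠ 0) (hy' : y' ≠ 0)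
    (h : y ^ q = -y) (h' : y' ^ q = -y') :
    (D.e ρ ψ y).trace = (D.e ρ ψ y').trace := by
  obtain ⟨x, hx⟩ := hF.norm_surj (y / y') (div_ne_zero hy hy') (by
    rw [div_pow, h, h', neg_div_neg_eq])
  have h1 := D.t_e ρ ψ x y
  rw [show y * ((x ^ (q + 1))⁻¹ : Fˣ) = y' by
    simp only [Units.val_inv_eq_inv_val, Units.val_pow_eq_pow_val, hx]; field_simp] at h1
  rw [← h1, Matrix.trace_mul_comm, ← Matrix.mul_assoc, tt', Matrix.one_mul]

theorem trace_u_e (y a : F) (hF : FD q F) (hψ : ψ.IsPrimitive) (hy : y ≠ 0) (ha : a ≠ 0) :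
    (ρ (D.u a) * D.e ρ ψ y).trace = 0 := by
  have h1 := hψ (mul_ne_zero hy ha)
  rw [AddChar.ne_one_iff] at h1
  obtain ⟨b, hb⟩ := h1
  rw [AddChar.mulShift_apply] at hb
  set a' := b ^ q with ha'
  have hc : D.u a' * D.u a = D.z (a * b) * (D.u a * D.u a') := by
    rw [D.u_mul, D.u_mul, ← mul_assoc, ← D.z_add, add_comm a' a]
    have : D.z (a * a' ^ q / 2) = D.z (a * b + a' * a ^ q / 2) := by
      have h2 : a * b + a' * a ^ q / 2 = (a * b + (a * b) ^ q) / 2 + a * a' ^ q / 2 := by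
        rw [ha', hF.inv, mul_pow]
        have := hF.two
        field_simp; ring
      rw [h2, D.z_add, D.z_one ((a * b + (a * b) ^ q) / 2), one_mul]
      rw [div_pow, hF.two_pow, hF.add, hF.inv, add_comm]
    rw [this]
  have h2 : (ρ (D.u a') * (ρ (D.u a) * D.e ρ ψ y) * ρ ((D.u a')⁻¹)).trace
      = (ρ (D.u a) * D.e ρ ψ y).trace := by
    rw [Matrix.trace_mul_comm, ← Matrix.mul_assoc, ← map_mul]; simp
  have h3 : ρ (D.u a') * (ρ (D.u a) * D.e ρ ψ y) * ρ ((D.u a')⁻¹)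
      = ψ (y * a * b) • (ρ (D.u a) * D.e ρ ψ y) := by
    rw [← Matrix.mul_assoc, ← map_mul, hc, map_mul, map_mul, Matrix.mul_assoc (ρ (D.z (a * b))),
      Matrix.mul_assoc (ρ (D.u a)), u_e, Matrix.mul_assoc, Matrix.mul_assoc (ρ (D.u a)),
      Matrix.mul_assoc (D.e ρ ψ y), ← map_mul ρ (D.u a'), mul_inv_cancel, map_one, Matrix.mul_one,
      u_e, ← Matrix.mul_assoc, z_e, Matrix.smul_mul, mul_assoc]
  rw [h3, Matrix.trace_smul, smul_eq_mul] at h2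
  have h4 : (ψ (y * a * b) - 1) * (ρ (D.u a) * D.e ρ ψ y).trace = 0 := by
    rw [sub_mul, h2]; ring
  rcases mul_eq_zero.mp h4 with h | h
  · exact absurd (sub_eq_zero.mp h) hb
  · exact h

theorem trace_e_dvd (y : F) (hF : FD q F) (hψ : ψ.IsPrimitive) (hy : y ≠ 0) :
    ∃ r : ℕ, (D.e ρ ψ y).trace = (q * r : ℕ) := by
  let M : F → Matrix (Fin n) (Fin n) k := fun a => ρ (D.u (a + a ^ q)) * D.e ρ ψ y
  have hM : ∀ a b, M (a + b) = M a * M b := by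
    intro a b
    simp only [M]
    rw [Matrix.mul_assoc, ← Matrix.mul_assoc (D.e ρ ψ y), ← u_e, Matrix.mul_assoc _ _ (D.e ρ ψ y),
      e_idem _ _ _ hψ, ← Matrix.mul_assoc, ← map_mul, D.u_mul, D.z_one, one_mul]
    · congr 3
      rw [hF.add]; ring
    · rw [div_pow, hF.two_pow, mul_pow, hF.add, hF.add, hF.add]
      simp only [hF.inv]
      ring
  have h1 := fam_mul_fam hψ hM 0 0
  simp only [if_true] at h1
  obtain ⟨r, hr⟩ := idem_trace_nat _ h1
  refine ⟨r, ?_⟩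
  have h3 := hF.three_le
  rw [fam_trace] at hr
  have h2 : ∀ a, (M a).trace = if a ^ q = -a then (D.e ρ ψ y).trace else 0 := by
    intro a
    split_ifs with h
    · simp [M, h, D.u_zero]
    · exact D.trace_u_e ρ ψ y _ hF hψ hy (fun h0 => h (by linear_combination h0))
  simp only [zero_mul, neg_zero, AddChar.map_zero_eq_one, one_mul, h2] at hr
  rw [← Finset.sum_filter, Finset.sum_const, hF.cards.2, hF.card] at hr
  have hq : (q : k) ≠ 0 := by exact_mod_cast (by omega : q ≠ 0)
  push_cast at hr ⊢
  rw [← hr, nsmul_eq_mul]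
  field_simp

theorem trace_total (hF : FD q F) (hψ : ψ.IsPrimitive) (hfr : ∀ a, ψ (a ^ q) = ψ a) (y : F)
    (hy0 : y ≠ 0) (hy : y ^ q = -y) :
    (n : k) = (D.e ρ ψ 0).trace + ((q - 1 : ℕ) : k) * (D.e ρ ψ y).trace := by
  have h1 := congrArg Matrix.trace (D.sum_e ρ ψ hψ)
  rw [Matrix.trace_sum, Matrix.trace_one, Fintype.card_fin] at h1
  rw [← h1, ← Finset.add_sum_erase _ _ (Finset.mem_univ (0 : F))]
  congr 1
  have h2 : ∀ s ∈ Finset.univ.erase (0 : F), (D.e ρ ψ s).trace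
      = if s ^ q = -s then (D.e ρ ψ y).trace else 0 := by
    intro s hs
    split_ifs with h
    · exact D.trace_e_conj ρ ψ hF s y (Finset.ne_of_mem_erase hs) hy0 h hy
    · rw [D.e_eq_zero ρ ψ hF hψ hfr s h]; simp
  rw [Finset.sum_congr rfl h2, ← Finset.sum_filter, Finset.sum_const, nsmul_eq_mul]
  congr 2
  rw [Finset.filter_erase, Finset.card_erase_of_mem, hF.cards.2]
  have := hF.three_le
  simp; omega

end Dat
end Paper

set_option linter.unusedSectionVars false
set_option linter.unusedVariables false
set_option linter.unusedSimpArgs false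
set_option linter.unnecessarySeqFocus false
set_option linter.unreachableTactic false
set_option linter.unusedTactic false
namespace Paper

section SUdat
variable {p k q : ℕ} {F : Type} [Field F] [Fintype F] [ExpChar F p]

theorem su_mem (hq : q = p ^ k) (M : Matrix (Fin 3) (Fin 3) F) :
    (Phi p k F M)ᵀ * Om F * M = Om F ↔ ∀ i j, (M 0 i) ^ q * M 2 j + (M 1 i) ^ q * M 1 j +
      (M 2 i) ^ q * M 0 j = Om F i j := by
  rw [← Matrix.ext_iff]
  apply forall_congr'; intro i
  apply forall_congr'; intro j
  have : ((Phi p k F M)ᵀ * Om F * M) i j = (M 0 i) ^ q * M 2 j + (M 1 i) ^ q * M 1 j +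
      (M 2 i) ^ q * M 0 j := by
    simp [Phi, Om, Matrix.mul_apply, Fin.sum_univ_three, iterateFrobenius_def, hq, Matrix.map_apply]
    ring
  rw [this]

/-- elements of `SU₃(q)` from matrices -/
def mkSU (hq : q = p ^ k) (M : Matrix (Fin 3) (Fin 3) F) (hd : M.det = 1)
    (h : ∀ i j, (M 0 i) ^ q * M 2 j + (M 1 i) ^ q * M 1 j +
      (M 2 i) ^ q * M 0 j = Om F i j) : SU3 p k F :=
  ⟨⟨M, hd⟩, (su_mem hq M).mpr h⟩

/-- underlying matrix -/
def mt (g : SU3 p k F) : Matrix (Fin 3) (Fin 3) F := g.1.1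

theorem mt_ext {g h : SU3 p k F} (H : mt g = mt h) : g = h := Subtype.ext (Subtype.ext H)

theorem mt_mk (hq : q = p ^ k) (M : Matrix (Fin 3) (Fin 3) F) (hd h) :
    mt (mkSU (p := p) (k := k) hq M hd h) = M := rfl

theorem mt_mul (g h : SU3 p k F) : mt (g * h) = mt g * mt h := rfl

theorem mt_one : mt (1 : SU3 p k F) = 1 := rfl

theorem mt_mem (hq : q = p ^ k) (g : SU3 p k F) (i j) : (mt g 0 i) ^ q * mt g 2 j + (mt g 1 i) ^ q * mt g 1 j +
      (mt g 2 i) ^ q * mt g 0 j = Om F i j := (su_mem hq (mt g)).mp g.2 i j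

theorem mt_det (g : SU3 p k F) : (mt g).det = 1 := g.1.2

theorem Om00 : Om F 0 0 = 0 := by simp [Om]
theorem Om01 : Om F 0 1 = 0 := by simp [Om]
theorem Om02 : Om F 0 2 = 1 := by simp [Om]
theorem Om12 : Om F 1 2 = 0 := by simp [Om]
theorem Om22 : Om F 2 2 = 0 := by simp [Om]

variable (hq : q = p ^ k) (hF : FD q F)
include hF

/-- unipotent elements -/
def Uel (a b : F) (h : b + b ^ q + a * a ^ q = 0) : SU3 p k F :=
  mkSU hq !![1, a, b; 0, 1, -a ^ q; 0, 0, 1] (by simp [Matrix.det_fin_three]) (by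
    have hq0 : q ≠ 0 := by have := hF.three_le; omega
    have h1 : (-a ^ q) ^ q = - a := by rw [hF.neg, hF.inv]
    intro i j
    fin_cases i <;> fin_cases j <;> simp [Om, hq0, h1] <;> linear_combination h)

theorem zeq (c : F) : (c - c ^ q) + (c - c ^ q) ^ q + 0 * 0 ^ q = 0 := by
  rw [hF.sub, hF.inv]; ring

theorem half (a : F) : (a / 2) ^ q = a ^ q / 2 := by
  classical
  rw [div_pow, hF.two_pow]

theorem ueq (a : F) : (-(a * a ^ q / 2)) + (-(a * a ^ q / 2)) ^ q + a * a ^ q = 0 := by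
  have := hF.two
  rw [hF.neg, half hF, mul_pow, hF.inv]; field_simp; ring

/-- diagonal elements -/
def Tel (x : Fˣ) : SU3 p k F :=
  mkSU hq !![(x : F), 0, 0; 0, (x : F) ^ q / x, 0; 0, 0, 1 / (x : F) ^ q]
    (by simp [Matrix.det_fin_three]; field_simp) (by
    have hq0 : q ≠ 0 := by have := hF.three_le; omega
    have hx := x.ne_zero
    intro i j
    fin_cases i <;> fin_cases j <;> simp [Om, hq0, hF.inv, div_pow] )

/-- Weyl element -/
def Wel : SU3 p k F :=
  mkSU hq !![0, 0, 1; 0, -1, 0; 1, 0, 0] (by simp [Matrix.det_fin_three]) (by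
    have hq0 : q ≠ 0 := by have := hF.three_le; omega
    have hx := hF.neg 1
    intro i j
    fin_cases i <;> fin_cases j <;> simp_all [Om] )

theorem Uel_mul (a b a' b' : F) (h) (h') : Uel hq hF a b h * Uel hq hF a' b' h' =
    Uel hq hF (a + a') (b + b' - a * a' ^ q) (by
      rw [hF.sub, hF.add, hF.add, mul_pow, hF.inv]; linear_combination h + h') := by
  apply mt_ext
  simp only [Uel, mt_mul, mt_mk]
  ext i j
  fin_cases i <;> fin_cases j <;> simp [Matrix.mul_apply, Fin.sum_univ_three, hF.add] <;> ring

theorem Uel_congr {a b a' b' : F} (h) (h') (h1 : a = a') (h2 : b = b') :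
    Uel hq hF a b h = Uel hq hF a' b' h' := by
  subst h1; subst h2; rfl

theorem Uel_one (h) : Uel hq hF 0 0 h = 1 := by
  have hq0 : q ≠ 0 := by have := hF.three_le; omega
  apply mt_ext
  simp only [Uel, mt_mk, mt_one]
  ext i j
  fin_cases i <;> fin_cases j <;> simp [hq0]

/-- `z` -/
def zS (c : F) : SU3 p k F := Uel hq hF 0 (c - c ^ q) (zeq hF c)
/-- `u` -/
def uS (a : F) : SU3 p k F := Uel hq hF a (-(a * a ^ q / 2)) (ueq hF a)
/-- `t` -/
def tS : Fˣ →* SU3 p k F where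
  toFun := Tel hq hF
  map_one' := by
    apply mt_ext
    simp only [Tel, mt_mk, mt_one]
    ext i j
    fin_cases i <;> fin_cases j <;> simp
  map_mul' x y := by
    apply mt_ext
    simp only [Tel, mt_mk, mt_mul]
    ext i j
    fin_cases i <;> fin_cases j <;> simp [Matrix.mul_apply, Fin.sum_univ_three] <;> ring

theorem zu_eq (a b : F) (h) : ∃ c, zS hq hF c * uS hq hF a = Uel hq hF a b h := by
  have := hF.two
  have hq0 : q ≠ 0 := by have := hF.three_le; omega
  refine ⟨(b + a * a ^ q / 2) / 2, ?_⟩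
  rw [zS, uS, Uel_mul]
  apply Uel_congr
  · ring
  · rw [half hF, hF.add, half hF, mul_pow, hF.inv]
    field_simp
    linear_combination -2 * h

theorem uz_comm (a b : F) : zS hq hF a * uS hq hF b = uS hq hF b * zS hq hF a := by
  have hq0 : q ≠ 0 := by have := hF.three_le; omega
  rw [zS, uS, Uel_mul, Uel_mul]
  apply Uel_congr
  · ring
  · simp [hq0]; ring

theorem tz_S (x : Fˣ) (a : F) :
    tS hq hF x * zS hq hF a = zS hq hF ((x ^ (q + 1) : Fˣ) * a) * tS hq hF x := by
  have hq0 : q ≠ 0 := by have := hF.three_le; omega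
  have hx := x.ne_zero
  apply mt_ext
  simp only [tS, zS, Tel, Uel, MonoidHom.coe_mk, OneHom.coe_mk, mt_mk, mt_mul]
  ext i j
  fin_cases i <;> fin_cases j <;>
    simp [Matrix.mul_apply, Fin.sum_univ_three, hq0, mul_pow]
  rw [pow_succ, mul_pow, hF.inv]; field_simp

theorem tu_S (x : Fˣ) (a : F) :
    tS hq hF x * uS hq hF a = uS hq hF ((x ^ 2 * (x ^ q)⁻¹ : Fˣ) * a) * tS hq hF x := by
  have hq0 : q ≠ 0 := by have := hF.three_le; omega
  have hx := x.ne_zero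
  apply mt_ext
  simp only [tS, uS, Tel, Uel, MonoidHom.coe_mk, OneHom.coe_mk, mt_mk, mt_mul]
  have h2 : ((x : F) ^ 2) ^ q = ((x : F) ^ q) ^ 2 := by rw [← pow_mul, ← pow_mul, mul_comm]
  ext i j
  fin_cases i <;> fin_cases j <;>
    simp [Matrix.mul_apply, Fin.sum_univ_three, mul_pow, h2, hF.inv] <;> field_simp

theorem borel_S (g : SU3 p k F) (h : mt g 2 0 = 0) :
    ∃ b a x, g = zS hq hF b * uS hq hF a * tS hq hF x ∧ (x : F) = mt g 0 0 := by
  have hq0 : q ≠ 0 := by have := hF.three_le; omega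
  have m := mt_mem hq g
  have d := mt_det g
  have e00 := m 0 0
  have e01 := m 0 1
  have e02 := m 0 2
  have e12 := m 1 2
  have e22 := m 2 2
  rw [Matrix.det_fin_three] at d
  rw [Om00] at e00
  rw [Om01] at e01
  rw [Om02] at e02
  rw [Om12] at e12
  rw [Om22] at e22
  generalize hM : mt g = M at *
  simp only [h, zero_pow hq0, mul_zero, zero_mul, add_zero, zero_add, sub_zero] at e00 e01 e02 d
  have h10 : M 1 0 = 0 := by
    rcases mul_eq_zero.mp e00 with h | h
    · exact pow_eq_zero_iff hq0 |>.mp h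
    · exact h
  simp only [h10, zero_pow hq0, mul_zero, zero_mul, add_zero, zero_add, sub_zero] at e01 e02 d
  have hx : M 0 0 ≠ 0 := by
    intro h0; simp [h0, hq0] at e02
  have h21 : M 2 1 = 0 := by
    rcases mul_eq_zero.mp e01 with h | h
    · exact absurd (pow_eq_zero_iff hq0 |>.mp h) hx
    · exact h
  simp only [h21, zero_pow hq0, mul_zero, zero_mul, add_zero, zero_add, sub_zero] at e12 d
  have h22 : M 2 2 = 1 / M 0 0 ^ q := by
    field_simp; linear_combination e02
  have h11 : M 1 1 = M 0 0 ^ q / M 0 0 := by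
    rw [h22] at d
    field_simp at d ⊢
    linear_combination d
  have h11' : M 1 1 ^ q = M 0 0 / M 0 0 ^ q := by
    rw [h11, div_pow, hF.inv]
  have h22' : M 2 2 ^ q = 1 / M 0 0 := by
    rw [h22, div_pow, hF.inv, one_pow]
  rw [h11', h22] at e12
  have h12 : M 1 2 = - (M 0 1) ^ q / M 0 0 := by
    field_simp at e12 ⊢
    linear_combination e12
  have h12' : M 1 2 ^ q = - M 0 1 / M 0 0 ^ q := by
    rw [h12, div_pow, hF.neg, hF.inv]
  rw [h22', h12', h12, h22] at e22
  have hh : M 0 2 * M 0 0 ^ q + (M 0 2 * M 0 0 ^ q) ^ q +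
    (M 0 1 * M 0 0 / M 0 0 ^ q) * (M 0 1 * M 0 0 / M 0 0 ^ q) ^ q = 0 := by
    rw [div_pow, mul_pow, mul_pow, hF.inv]
    field_simp at e22 ⊢
    linear_combination e22
  obtain ⟨c, hc⟩ := zu_eq hq hF _ _ hh
  refine ⟨c, M 0 1 * M 0 0 / M 0 0 ^ q, Units.mk0 _ hx, ?_, rfl⟩
  rw [hc]
  apply mt_ext
  simp only [tS, Tel, Uel, MonoidHom.coe_mk, OneHom.coe_mk, mt_mk, mt_mul, Units.val_mk0]
  rw [hM]
  ext i j
  fin_cases i <;> fin_cases j <;>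
    simp [Matrix.mul_apply, Fin.sum_univ_three, div_pow, mul_pow, hF.inv, h, h10, h21, h22, h11,
      h12] <;> field_simp

theorem ww_S : Wel hq hF * Wel hq hF = 1 := by
  apply mt_ext
  simp only [Wel, mt_mk, mt_mul, mt_one]
  ext i j
  fin_cases i <;> fin_cases j <;> simp [Matrix.mul_apply, Fin.sum_univ_three]

theorem big_S (g : SU3 p k F) (h : mt g 2 0 ≠ 0) :
    ∃ c d x c' d', g = zS hq hF c * uS hq hF d * Wel hq hF * tS hq hF x *
      (zS hq hF c' * uS hq hF d') ∧ (x : F) = mt g 2 0 := by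
  have hq0 : q ≠ 0 := by have := hF.three_le; omega
  have e00 := mt_mem hq g 0 0
  rw [Om00] at e00
  set A := mt g 0 0 with hA
  set B := mt g 1 0 with hB
  set C := mt g 2 0 with hC
  have hh : A / C + (A / C) ^ q + (-(B / C) ^ q) * (-(B / C) ^ q) ^ q = 0 := by
    rw [hF.neg, hF.inv, div_pow, div_pow]
    have : C ^ q ≠ 0 := pow_ne_zero _ h
    field_simp
    linear_combination e00
  have hh' : (A / C) ^ q + ((A / C) ^ q) ^ q + ((B / C) ^ q) * ((B / C) ^ q) ^ q = 0 := by
    rw [hF.neg] at hh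
    rw [hF.inv]; linear_combination hh
  obtain ⟨c, hc⟩ := zu_eq hq hF _ _ hh
  have hi : Uel hq hF _ _ hh * Uel hq hF _ _ hh' = 1 := by
    rw [Uel_mul, ← Uel_one hq hF (by simp [hq0])]
    apply Uel_congr
    · ring
    · rw [hF.inv]
      rw [hF.neg, hF.inv] at hh
      linear_combination hh
  set V := Uel hq hF _ _ hh'
  have key : mt (Wel hq hF * (V * g)) = !![0, 0, 1; 0, -1, 0; 1, 0, 0] *
      (!![1, (B / C) ^ q, (A / C) ^ q; 0, 1, -((B / C) ^ q) ^ q; 0, 0, 1] * mt g) := rfl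
  obtain ⟨b, a, x, hb, hx⟩ := borel_S hq hF (Wel hq hF * (V * g)) (by
    rw [key]
    simp only [Matrix.mul_apply, Fin.sum_univ_three]
    simp [← hA, ← hB, ← hC]
    rw [div_pow, div_pow]
    have : C ^ q ≠ 0 := pow_ne_zero _ h
    field_simp
    linear_combination e00)
  have hx' : (x : F) = C := by
    rw [hx, key]
    simp only [Matrix.mul_apply, Fin.sum_univ_three]
    simp [← hC]
  have hg : g = zS hq hF c * uS hq hF (-(B / C) ^ q) * Wel hq hF *
      (zS hq hF b * uS hq hF a * tS hq hF x) := by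
    rw [← hb, hc, mul_assoc, ← mul_assoc (Wel hq hF), ww_S, one_mul, ← mul_assoc, hi, one_mul]
  refine ⟨c, -(B / C) ^ q, x, ((x ^ (q + 1) : Fˣ) : F)⁻¹ * b, ((x ^ 2 * (x ^ q)⁻¹ : Fˣ) : F)⁻¹ * a, ?_, hx'⟩
  rw [mul_assoc _ (tS hq hF x), ← mul_assoc (tS hq hF x), tz_S, mul_assoc _ (tS hq hF x), tu_S,
    mul_inv_cancel_left₀ (Units.ne_zero _), mul_inv_cancel_left₀ (Units.ne_zero _),
    ← mul_assoc (zS hq hF b)]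
  exact hg

theorem wzuw (a b : F) : mt (Wel hq hF * (zS hq hF b * uS hq hF a) * Wel hq hF) 2 0
    = b - b ^ q - a * a ^ q / 2 := by
  have hq0 : q ≠ 0 := by have := hF.three_le; omega
  rw [zS, uS, Uel_mul]
  simp only [Wel, Uel, mt_mk, mt_mul]
  simp [Matrix.mul_apply, Fin.sum_univ_three, hq0]
  ring

/-- the data for `SU₃(q)` -/
def suDat : Dat q F (SU3 p k F) where
  z := zS hq hF
  u := uS hq hF
  t := tS hq hF
  w := Wel hq hF
  z_add a b := by
    have hq0 : q ≠ 0 := by have := hF.three_le; omega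
    rw [zS, zS, zS, Uel_mul]
    apply Uel_congr
    · simp
    · rw [hF.add]; simp [hq0]; ring
  z_one a h := by
    have hq0 : q ≠ 0 := by have := hF.three_le; omega
    rw [zS, ← Uel_one hq hF (by simp [hq0])]
    apply Uel_congr
    · rfl
    · rw [h, sub_self]
  z_inj a h := by
    have h1 := congrFun (congrFun (congrArg mt h) 0) 2
    simp only [zS, Uel, mt_mk, mt_one] at h1
    simp at h1
    exact (sub_eq_zero.mp h1).symm
  u_mul a b := by
    have hq0 : q ≠ 0 := by have := hF.three_le; omega
    have := hF.two
    rw [uS, uS, uS, zS, Uel_mul, Uel_mul]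
    apply Uel_congr
    · simp
    · rw [half hF, mul_pow, hF.inv, hF.add]; field_simp; ring
  zu := uz_comm hq hF
  tz := tz_S hq hF
  tu := tu_S hq hF
  ww := ww_S hq hF
  bruhat g := by
    by_cases h : mt g 2 0 = 0
    · obtain ⟨b, a, x, h, _⟩ := borel_S hq hF g h
      exact Or.inl ⟨b, a, x, h⟩
    · obtain ⟨b, a, x, b', a', h, _⟩ := big_S hq hF g h
      exact Or.inr ⟨b, a, x, b', a', h⟩
  big a b h := by
    obtain ⟨b, a, x, b', a', h, _⟩ := big_S hq hF
      (Wel hq hF * (zS hq hF b * uS hq hF a) * Wel hq hF) (by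
      have hq0 : q ≠ 0 := by have := hF.three_le; omega
      rw [wzuw]
      intro h0
      have h1 : (b - b ^ q) ^ q = (a * a ^ q / 2) ^ q := by
        rw [sub_eq_zero.mp h0]
      rw [hF.sub, hF.inv, half hF, mul_pow, hF.inv] at h1
      have h2 : a * a ^ q = 0 := by
        have := hF.two
        field_simp at h0 h1
        have h3 : 2 * (a * a ^ q) = 0 := by linear_combination -h1 - h0
        rcases mul_eq_zero.mp h3 with h | h
        · exact absurd h this
        · exact h
      rcases h with h | h
      · rcases mul_eq_zero.mp h2 with h' | h'
        · exact h h'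
        · exact h (pow_eq_zero_iff hq0 |>.mp h')
      · rw [h2] at h0
        apply h; simp at h0; exact (sub_eq_zero.mp h0).symm)
    exact ⟨b, a, x, b', a', h⟩
  kap x := by
    classical
    have h2 := hF.two
    have hq0 : q ≠ 0 := by have := hF.three_le; omega
    obtain ⟨a, ha⟩ : ∃ a : F, a * a ^ q = -((x : F) + (x : F) ^ q) := by
      by_cases h : (x : F) + (x : F) ^ q = 0
      · exact ⟨0, by simp [h]⟩
      · obtain ⟨y, hy⟩ := hF.norm_surj (-((x : F) + (x : F) ^ q)) (neg_ne_zero.mpr h) (by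
          rw [hF.neg, hF.add, hF.inv]; ring)
        exact ⟨y, by rw [← hy, pow_succ, mul_comm]⟩
    have h31 : mt (Wel hq hF * (zS hq hF ((x : F) / 2) * uS hq hF a) * Wel hq hF) 2 0 = x := by
      rw [wzuw, half hF, ha]; field_simp; ring
    obtain ⟨b, a', y, b', a'', h, hy⟩ := big_S hq hF
      (Wel hq hF * (zS hq hF ((x : F) / 2) * uS hq hF a) * Wel hq hF) (by
        rw [h31]; exact x.ne_zero)
    rw [h31] at hy
    have : y = x := Units.ext hy
    subst this
    exact ⟨_, _, _, _, _, _, h⟩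
  ti a b h hb hh := by
    have h1 := congrArg mt hh
    rw [mt_mul, mt_mul] at h1
    have hq0 : q ≠ 0 := by have := hF.three_le; omega
    have h2 := congrFun (congrFun h1 2) 2
    simp only [zS, Uel, mt_mk] at h2
    simp [Matrix.mul_apply, Fin.sum_univ_three, hq0] at h2
    obtain ⟨b', a', x, h, _⟩ := borel_S hq hF h (by
      rcases h2 with h | h
      · exact h
      · exact absurd (sub_eq_zero.mp h).symm hb)
    exact ⟨b', a', x, h⟩
  cen x hx g := by
    have hx0 := x.ne_zero
    have h1 : x ^ q = x ^ 2 := by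
      rw [mul_inv_eq_one] at hx; exact hx.symm
    have h2 : (x : F) ^ q = (x : F) ^ 2 := by
      have := congrArg Units.val h1
      simpa using this
    have h3 : (x : F) ^ 3 = 1 := by
      have h4 := hF.inv (x : F)
      rw [h2, ← pow_mul, mul_comm 2 q, pow_mul, h2] at h4
      apply mul_left_cancel₀ hx0
      linear_combination h4
    have h5 : mt (tS hq hF x) = (x : F) • (1 : Matrix (Fin 3) (Fin 3) F) := by
      simp only [tS, Tel, MonoidHom.coe_mk, OneHom.coe_mk, mt_mk]
      ext i j
      fin_cases i <;> fin_cases j <;> simp [h2]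
      · field_simp
      · field_simp; linear_combination -h3
    apply mt_ext
    rw [mt_mul, mt_mul, h5]
    simp

end SUdat
end Paper

set_option linter.unusedSectionVars false
set_option linter.unusedVariables false
namespace Paper

theorem even_hom_one {F : Type} [Field F] (h2 : (2 : F) ≠ 0) {k : Type} [Field k] (h : F → k)
    (h0 : h 0 = 1) (ha : ∀ a b, h (a + b) = h a * h b) (hn : ∀ a, h (-a) = h a) (a : F) : h a = 1 := by
  have h1 : h (a / 2) * h (a / 2) = 1 := by
    have := ha (a / 2) (-(a / 2))
    rw [hn, add_neg_cancel, h0] at this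
    exact this.symm
  have : NeZero (2 : F) := ⟨h2⟩
  rw [← ha, add_halves] at h1
  exact h1

namespace Dat
section
variable {q : ℕ} {F G : Type} [Field F] [Group G] (D : Dat q F G) [Fintype F] (hF : FD q F)
  {k : Type} [Field k] {n : ℕ} (ρ : G →* Matrix (Fin n) (Fin n) k)
include hF

theorem det_t (x : Fˣ) : (ρ (D.t x)).det = 1 := by
  let κ : G →* k := (Matrix.detMonoidHom).comp ρ
  have hκ : ∀ g, κ g ≠ 0 := by
    intro g h
    have : κ (g * g⁻¹) = 1 := by simp
    rw [map_mul, h, zero_mul] at this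
    exact zero_ne_one this
  have h2 := hF.two
  have hz : ∀ a, κ (D.z a) = 1 := by
    apply even_hom_one h2
    · rw [D.z_zero, map_one]
    · intro a b; rw [D.z_add, map_mul]
    · intro a
      obtain ⟨x, hx⟩ := hF.norm_surj (-1) (by norm_num) (by rw [hF.neg, one_pow])
      have := congrArg κ (D.tz x a)
      rw [map_mul, map_mul, Units.val_pow_eq_pow_val, hx, neg_one_mul, mul_comm] at this
      exact (mul_right_cancel₀ (hκ _) this).symm
  have hu : ∀ a, κ (D.u a) = 1 := by
    apply even_hom_one h2
    · rw [D.u_zero, map_one]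
    · intro a b
      have := congrArg κ (D.u_mul a b)
      rw [map_mul, map_mul, hz, one_mul] at this
      exact this.symm
    · intro a
      have := congrArg κ (D.tu (-1) a)
      have h3 : (((-1) ^ 2 * ((-1) ^ q)⁻¹ : Fˣ) : F) = -1 := by
        rw [hF.odd.neg_one_pow]; simp
      rw [map_mul, map_mul, h3, neg_one_mul, mul_comm] at this
      exact (mul_right_cancel₀ (hκ _) this).symm
  have ht : ∀ x, κ (D.t x) = κ D.w := by
    intro x
    obtain ⟨a, b, c, d, c', d', h⟩ := D.kap x
    have := congrArg κ h
    simp only [map_mul, hz, hu, mul_one, one_mul] at this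
    exact (mul_left_cancel₀ (hκ _) this).symm
  have : κ (D.t x) = 1 := by
    rw [ht, ← ht 1, map_one, map_one]
  exact this

theorem z_half (a : F) : D.z a = D.z ((a - a ^ q) / 2) := by
  have h2 := hF.two
  have : a = (a + a ^ q) / 2 + (a - a ^ q) / 2 := by field_simp; ring
  conv_lhs => rw [this]
  rw [D.z_add, D.z_one ((a + a ^ q) / 2), one_mul]
  rw [div_pow, hF.two_pow, hF.add, hF.inv, add_comm]

theorem z_conj (a b : F) (ha : a ^ q ≠ a) (hb : b ^ q ≠ b) :
    ∃ x, D.t x * D.z a * D.t x⁻¹ = D.z b := by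
  have h2 := hF.two
  have ha' : a - a ^ q ≠ 0 := fun h => ha (sub_eq_zero.mp h).symm
  have hb' : b - b ^ q ≠ 0 := fun h => hb (sub_eq_zero.mp h).symm
  obtain ⟨x, hx⟩ := hF.norm_surj ((b - b ^ q) / (a - a ^ q)) (div_ne_zero hb' ha') (by
    rw [div_pow, hF.sub, hF.sub, hF.inv, hF.inv, ← neg_sub, ← neg_sub a, neg_div_neg_eq])
  refine ⟨x, ?_⟩
  rw [D.z_half hF a, D.tz, Units.val_pow_eq_pow_val, hx, mul_assoc, ← map_mul, mul_inv_cancel, map_one, mul_one,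
    D.z_half hF b]
  congr 1
  field_simp

theorem cent_card [DecidableEq F] [DecidableEq G] [Fintype G] (b : F) (hb0 : b ≠ 0) (hb : b ^ q = -b) :
    (Finset.univ.filter (fun h : G => h * D.z b = D.z b * h)).card ≤ q ^ 3 * (q + 1) := by
  have h2 := hF.two
  have hbb : b ^ q ≠ b := by
    rw [hb]; intro h
    have : 2 * b = 0 := by linear_combination -h
    rcases mul_eq_zero.mp this with h | h
    · exact h2 h
    · exact hb0 h
  let S1 := Finset.univ.filter (fun a : F => a ^ q = -a)
  let S2 := Finset.univ.filter (fun x : Fˣ => x ^ (q + 1) = 1)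
  have hS2 : S2.card ≤ q + 1 := by
    have := IsCyclic.card_pow_eq_one_le (α := Fˣ) (n := q + 1) (by omega)
    exact this
  have hsub : (Finset.univ.filter (fun h : G => h * D.z b = D.z b * h)) ⊆
      (S1 ×ˢ ((Finset.univ : Finset F) ×ˢ S2)).image
        (fun r => D.z r.1 * D.u r.2.1 * D.t r.2.2) := by
    intro h hh
    simp only [Finset.mem_filter, Finset.mem_univ, true_and] at hh
    obtain ⟨b', a', x, rfl⟩ := D.ti b b h hbb hh
    rw [Finset.mem_image]
    refine ⟨((b' - b' ^ q) / 2, a', x), ?_, ?_⟩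
    · simp only [Finset.mem_product, Finset.mem_filter, Finset.mem_univ, true_and, S1, S2]
      constructor
      · rw [div_pow, hF.two_pow, hF.sub, hF.inv]; ring
      · rw [mul_assoc, D.tz] at hh
        have h3 : D.z b' * D.u a' * (D.z ((x ^ (q + 1) : Fˣ) * b) * D.t x)
          = D.z ((x ^ (q + 1) : Fˣ) * b) * (D.z b' * D.u a' * D.t x) := by
          rw [← mul_assoc, mul_assoc _ (D.u a'), ← D.zu, ← mul_assoc, ← D.z_add, add_comm, D.z_add]
          simp only [mul_assoc]
        rw [h3] at hh
        have h4 := mul_right_cancel hh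
        have h5 : D.z ((x ^ (q + 1) : Fˣ) * b - b) = 1 := by
          have := D.z_add ((x ^ (q + 1) : Fˣ) * b - b) b
          rw [sub_add_cancel, h4] at this
          exact (right_eq_mul.mp this)
        have h6 := D.z_inj _ h5
        rw [hF.sub, mul_pow, Units.val_pow_eq_pow_val, hF.normq, hb] at h6
        ext
        rw [Units.val_pow_eq_pow_val, Units.val_one]
        have h7 : 2 * b * ((x : F) ^ (q + 1) - 1) = 0 := by linear_combination -h6
        rcases mul_eq_zero.mp h7 with h | h
        · exact absurd h (mul_ne_zero h2 hb0)
        · exact sub_eq_zero.mp h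
    · simp only
      rw [← D.z_half hF]
  calc _ ≤ _ := Finset.card_le_card hsub
    _ ≤ _ := Finset.card_image_le
    _ = q * (q ^ 2 * S2.card) := by
      rw [Finset.card_product, Finset.card_product, hF.cards.2, Finset.card_univ, hF.card]
    _ ≤ q * (q ^ 2 * (q + 1)) := by gcongr
    _ = _ := by ring

theorem cent_bound [DecidableEq F] [DecidableEq G] [Fintype G] (χ : G → ℝ)
    (hc : ∀ g h, χ (g * h * g⁻¹) = χ h)
    (h0 : ∀ g, 0 ≤ χ g)
    (hs : ∑ g, χ g = Fintype.card G)
    (b : F) (hb0 : b ≠ 0) (hb : b ^ q = -b) :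
    χ (D.z b) ≤ (q ^ 3 * (q + 1) : ℕ) := by
  have h1 : ∑ h : G, χ (h * D.z b * h⁻¹) = Fintype.card G * χ (D.z b) := by
    simp [hc]
  have h2 : ∑ h : G, χ (h * D.z b * h⁻¹) ≤ ∑ g : G, (q ^ 3 * (q + 1) : ℕ) * χ g := by
    rw [← Finset.sum_fiberwise (s := Finset.univ) (g := fun h : G => h * D.z b * h⁻¹)]
    apply Finset.sum_le_sum
    intro g _
    rw [Finset.sum_congr rfl (g := fun _ => χ g)]
    · rw [Finset.sum_const, nsmul_eq_mul]
      apply mul_le_mul_of_nonneg_right _ (h0 g)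
      norm_cast
      by_cases hne : ∃ h0 : G, h0 * D.z b * h0⁻¹ = g
      · obtain ⟨h0, hh0⟩ := hne
        refine le_trans ?_ (D.cent_card hF b hb0 hb)
        apply Finset.card_le_card_of_injOn (fun h => h0⁻¹ * h)
        · intro h hh
          simp only [Finset.coe_filter, Finset.mem_univ, true_and, Set.mem_ofPred_eq] at hh ⊢
          rw [← hh0] at hh
          have := congrArg (fun g => h0⁻¹ * g * h) hh
          simpa [mul_assoc] using this
        · intro x _ y _ h
          simpa using h
      · rw [Finset.card_eq_zero.mpr]
        · omega
        · rw [Finset.filter_eq_empty_iff]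
          intro a _ h
          exact hne ⟨a, h⟩
    · intro h hh
      rw [(Finset.mem_filter.mp hh).2]
  rw [h1, ← Finset.mul_sum, hs, mul_comm] at h2
  have hG : (0 : ℝ) < Fintype.card G := by exact_mod_cast Fintype.card_pos
  exact le_of_mul_le_mul_right h2 hG
end
end Dat
end Paper

set_option linter.unusedSectionVars false
set_option linter.unusedVariables false
namespace Paper
theorem trace_conj {G : Type} [Group G] {k : Type} [Field k] {n : ℕ} (ρ : G →* Matrix (Fin n) (Fin n) k) (g h : G) :
    (ρ (g * h * g⁻¹)).trace = (ρ h).trace := by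
  rw [map_mul, Matrix.trace_mul_comm, ← map_mul]; congr 2; group

namespace Dat
section
variable {q : ℕ} {F G : Type} [Field F] [Group G] (D : Dat q F G) [Fintype F] [DecidableEq F] (hF : FD q F)
include hF

theorem exists_anti : ∃ b : F, b ≠ 0 ∧ b ^ q = -b := by
  have h := hF.cards.2
  have h3 := hF.three_le
  have : ((Finset.univ.filter (fun a : F => a ^ q = -a)).erase 0).Nonempty := by
    rw [← Finset.card_pos, Finset.card_erase_eq_ite]
    split_ifs <;> omega
  obtain ⟨b, hb⟩ := this
  simp only [Finset.mem_erase, Finset.mem_filter, Finset.mem_univ, true_and] at hb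
  exact ⟨b, hb⟩

theorem anti_ne {b : F} (hb0 : b ≠ 0) (hb : b ^ q = -b) : b ^ q ≠ b := by
  rw [hb]; intro h
  have : 2 * b = 0 := by linear_combination -h
  rcases mul_eq_zero.mp this with h | h
  · exact hF.two h
  · exact hb0 h

theorem trace_e0_z {k : Type} [Field k] [CharZero k] {n : ℕ} (ρ : G →* Matrix (Fin n) (Fin n) k)
    (ψ : AddChar F k) (b : F) (hb : b ^ q ≠ b) :
    (q : k) * (D.e ρ ψ 0).trace = n + ((q : k) - 1) * (ρ (D.z b)).trace := by
  have h3 := hF.three_le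
  rw [e, fam_trace]
  simp only [zero_mul, neg_zero, AddChar.map_zero_eq_one, one_mul]
  have h1 : ∀ a, (ρ (D.z a)).trace = if a ^ q = a then (n : k) else (ρ (D.z b)).trace := by
    intro a
    split_ifs with h
    · rw [D.z_one a h]; simp
    · obtain ⟨x, hx⟩ := D.z_conj hF a b h hb
      rw [← hx, map_inv, trace_conj]
  rw [Finset.sum_congr rfl (fun a _ => h1 a)]
  rw [Finset.sum_ite, Finset.sum_const, Finset.sum_const, hF.cards.1]
  have h2 : (Finset.univ.filter (fun a : F => ¬ a ^ q = a)).card = q ^ 2 - q := by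
    rw [Finset.filter_not, Finset.card_sdiff_of_subset (Finset.filter_subset _ _), hF.cards.1, Finset.card_univ,
      hF.card]
  rw [h2, hF.card, nsmul_eq_mul, nsmul_eq_mul]
  have h4 : q ≤ q ^ 2 := by nlinarith
  have hq : (q : k) ≠ 0 := by exact_mod_cast (by omega : q ≠ 0)
  push_cast [h4]
  field_simp

variable [Fintype G] [DecidableEq G] {n : ℕ} (ρ : G →* Matrix (Fin n) (Fin n) ℂ) (ψ : AddChar F ℂ)

theorem A_cases (hψ : ψ.IsPrimitive) (hfr : ∀ a, ψ (a ^ q) = ψ a)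
    (hn : n = (q - 1) * (q ^ 2 - q + 1)) (hs : ∑ g, ‖(ρ g).trace‖ ^ 2 = (Fintype.card G : ℝ)) :
    (D.e ρ ψ 0).trace = (q - 1 : ℕ) ∨ (D.e ρ ψ 0).trace = (q ^ 2 - 1 : ℕ) := by
  have h3 := hF.three_le
  obtain ⟨b, hb0, hb⟩ := exists_anti hF
  have hbb := anti_ne hF hb0 hb
  have hv := D.trace_e0_z hF ρ ψ b hbb
  obtain ⟨A, hA⟩ := idem_trace_nat _ (D.e_idem ρ ψ hψ 0)
  obtain ⟨m, hm⟩ := D.trace_e_dvd ρ ψ b hF hψ hb0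
  have htot := D.trace_total ρ ψ hF hψ hfr b hb0 hb
  have hbd := D.cent_bound hF (fun g => ‖(ρ g).trace‖ ^ 2)
    (fun g h => by simp only [trace_conj]) (fun g => by positivity) hs b hb0 hb
  rw [hA] at hv htot ⊢
  rw [hm] at htot
  have htot' : n = A + (q - 1) * (q * m) := by exact_mod_cast htot
  obtain ⟨r, rfl⟩ : ∃ r, q = r + 1 := ⟨q - 1, by omega⟩
  have e1 : (r + 1) ^ 2 - (r + 1) + 1 = r * (r + 1) + 1 := by
    have : (r + 1) ^ 2 = r * (r + 1) + (r + 1) := by ring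
    omega
  have e2 : (r + 1) ^ 2 - 1 = r * (r + 2) := by
    have : (r + 1) ^ 2 = r * (r + 2) + 1 := by ring
    omega
  rw [e1] at hn
  rw [e2]
  simp only [Nat.add_sub_cancel] at *
  have hmr : m ≤ r := by
    by_contra hlt
    have h5 : r + 1 ≤ m := by omega
    have h6 : r * (r * (r + 1) + 1) = A + r * ((r + 1) * m) := by rw [← hn, htot']
    nlinarith [Nat.mul_le_mul_left (r * (r + 1)) h5, Nat.zero_le A]
  obtain ⟨i, rfl⟩ := Nat.exists_eq_add_of_le hmr
  have hA' : A = (m + i) * (1 + (m + i + 1) * i) := by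
    have h6 : (m + i) * ((m + i) * (m + i + 1) + 1) = A + (m + i) * ((m + i + 1) * m) := by rw [← hn, htot']
    nlinarith
  have hvv : (ρ (D.z b)).trace = (((m + i + 1 : ℝ) ^ 2 * (i - 1) + 2 * (m + i + 1) - 1 : ℝ) : ℂ) := by
    have hr0 : ((m : ℂ) + i) ≠ 0 := by exact_mod_cast (by omega : m + i ≠ 0)
    apply mul_left_cancel₀ hr0
    push_cast [hA', hn] at hv ⊢
    linear_combination -hv
  have hi : i = 0 ∨ i = 1 := by
    by_contra hcon
    have hi2 : 2 ≤ i := by omega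
    simp only [hvv, Complex.norm_real, Real.norm_eq_abs, sq_abs] at hbd
    push_cast at hbd
    have hi2' : (2 : ℝ) ≤ i := by exact_mod_cast hi2
    have hm' : (0 : ℝ) ≤ m := by positivity
    set Q : ℝ := m + i + 1 with hQ
    have hQ3 : 3 ≤ Q := by linarith
    have h7 : Q ^ 2 + 2 * Q - 1 ≤ Q ^ 2 * (i - 1) + 2 * Q - 1 := by
      nlinarith [sq_nonneg Q]
    have h8 : (Q ^ 2 + 2 * Q - 1) ^ 2 ≤ (Q ^ 2 * (i - 1) + 2 * Q - 1) ^ 2 :=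
      pow_le_pow_left₀ (by nlinarith) h7 2
    have h9 : (Q ^ 2 + 2 * Q - 1) ^ 2 = Q ^ 3 * (Q + 1) + 3 * Q ^ 3 + 2 * Q ^ 2 - 4 * Q + 1 := by ring
    have h10 : 0 < 3 * Q ^ 3 + 2 * Q ^ 2 - 4 * Q + 1 := by
      have : Q ^ 2 ≥ 3 * Q := by nlinarith
      have : Q ^ 3 > 0 := by positivity
      nlinarith
    nlinarith
  rcases hi with rfl | rfl
  · left; rw [hA']; push_cast; ring
  · right; rw [hA']; push_cast; ring

end
end Dat
end Paper

set_option linter.unusedSectionVars false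
set_option linter.unusedVariables false
namespace Paper

theorem FD.ell {q : ℕ} {F : Type} [Field F] [Fintype F] (hF : FD q F) (x0 : Fˣ)
    (ho : orderOf x0 = q ^ 2 - 1) : ∃ K, q ^ 2 - 1 = orderOf (x0 ^ 2 * (x0 ^ q)⁻¹) * K ∧
      (K = 1 ∨ K = 3) ∧ Even (orderOf (x0 ^ 2 * (x0 ^ q)⁻¹)) := by
  have h3 := hF.three_le
  set c := x0 ^ 2 * (x0 ^ q)⁻¹ with hc
  have hpos : 0 < orderOf c := orderOf_pos c
  have h1 : orderOf c ∣ q ^ 2 - 1 := by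
    apply orderOf_dvd_of_pow_eq_one
    rw [hc, mul_pow, inv_pow, ← pow_mul, ← pow_mul, mul_comm 2, mul_comm q, pow_mul, pow_mul, ← ho,
      pow_orderOf_eq_one]
    simp
  obtain ⟨K, hK⟩ := h1
  have h2 : q ^ 2 - 1 ∣ (q - 2) * orderOf c := by
    rw [← ho]
    apply orderOf_dvd_of_pow_eq_one
    have h4 : x0 ^ q = x0 ^ (q - 2) * x0 ^ 2 := by rw [← pow_add]; congr 1; omega
    have h5 : c = (x0 ^ (q - 2))⁻¹ := by rw [hc, h4]; group
    have h6 := pow_orderOf_eq_one c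
    nth_rw 1 [h5] at h6
    rw [inv_pow, ← pow_mul] at h6
    exact inv_eq_one.mp h6
  have h4 : q ^ 2 - 1 ∣ 3 * orderOf c := by
    have h5 : q ^ 2 - 1 ∣ (q ^ 2 - 1) * orderOf c := Dvd.intro _ rfl
    have h6 : (q ^ 2 - 1) * orderOf c = (q + 2) * ((q - 2) * orderOf c) + 3 * orderOf c := by
      have : q ^ 2 - 1 = (q + 2) * (q - 2) + 3 := by
        obtain ⟨r, rfl⟩ : ∃ r, q = r + 2 := ⟨q - 2, by omega⟩
        simp; ring_nf
      rw [this]; ring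
    rw [h6] at h5
    exact (Nat.dvd_add_right (Dvd.dvd.mul_left h2 _)).mp h5
  have h7 : K ∣ 3 := by
    rw [hK, mul_comm] at h4
    exact Nat.dvd_of_mul_dvd_mul_right hpos h4
  have h8 : K = 1 ∨ K = 3 := (Nat.dvd_prime Nat.prime_three).mp h7
  refine ⟨K, hK, h8, ?_⟩
  have h9 : Even (q ^ 2 - 1) := by
    obtain ⟨r, hr⟩ := hF.odd
    subst hr
    refine ⟨2 * r ^ 2 + 2 * r, ?_⟩
    ring_nf; omega
  rw [hK, Nat.even_mul] at h9
  rcases h9 with h | h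
  · exact h
  · rcases h8 with rfl | rfl <;> exact absurd h (by decide)

theorem orbit_dvd {Γ : Type} [Group Γ] [Fintype Γ] (c : Γ) (h : Γ → ℕ) (hc : ∀ x, h (x * c) = h x) :
    orderOf c ∣ ∑ x, h x := by
  classical
  let H := Subgroup.zpowers c
  have hH : ∀ (y : H) (x : Γ), h (x * y) = h x := by
    rintro ⟨y, hy⟩ x
    have : y ∈ Submonoid.powers c := (mem_powers_iff_mem_zpowers).mpr hy
    obtain ⟨j, hj⟩ := this
    simp only at hj ⊢
    rw [← hj]
    clear hy hj
    induction j generalizing x with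
    | zero => simp
    | succ j ih => rw [pow_succ, ← mul_assoc, hc, ih]
  rw [← Finset.sum_fiberwise (s := Finset.univ) (g := fun x : Γ => (x : Γ ⧸ H))]
  apply Finset.dvd_sum
  intro Q _
  have h1 : (Finset.univ.filter (fun x : Γ => (x : Γ ⧸ H) = Q))
      = (Finset.univ : Finset H).image (fun y : H => Q.out * (y : Γ)) := by
    ext x
    simp only [Finset.mem_filter, Finset.mem_univ, true_and, Finset.mem_image]
    constructor
    · intro hx
      have h2 : ((Q.out : Γ) : Γ ⧸ H) = (x : Γ ⧸ H) := by rw [hx]; exact QuotientGroup.out_eq' Q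
      exact ⟨⟨_, QuotientGroup.eq.mp h2⟩, by simp⟩
    · rintro ⟨y, rfl⟩
      rw [← QuotientGroup.out_eq' Q, QuotientGroup.eq]
      simp
  rw [h1, Finset.sum_image (by intro a _ b _ h; simpa using h)]
  rw [Finset.sum_congr rfl (fun y _ => hH y _), Finset.sum_const, Finset.card_univ, smul_eq_mul,
    ← Nat.card_eq_fintype_card, Nat.card_zpowers]
  exact Dvd.intro _ rfl

theorem rank_bound {n : ℕ} (e : Matrix (Fin n) (Fin n) ℂ) (he : e * e = e) (r : ℕ)
    (hr : e.trace = r) (S : Submodule ℂ (Fin n → ℂ)) (hS : ∀ y, e *ᵥ y ∈ S) :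
    r ≤ Module.finrank ℂ S := by
  obtain ⟨b, b', h1, h2⟩ := idem_factor_trace e he hr
  let L : (Fin r → ℂ) →ₗ[ℂ] S := LinearMap.codRestrict S (Matrix.toLin' b) (by
    intro y
    have : b *ᵥ y = e *ᵥ (b *ᵥ y) := by
      rw [← h1, Matrix.mulVec_mulVec, Matrix.mul_assoc, h2, Matrix.mul_one]
    rw [Matrix.toLin'_apply, this]
    exact hS _)
  have hL : Function.Injective L := by
    intro y y' h
    have h3 : b *ᵥ y = b *ᵥ y' := congrArg Subtype.val h
    have := congrArg (fun z => b' *ᵥ z) h3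
    simpa [Matrix.mulVec_mulVec, h2] using this
  have := LinearMap.finrank_le_finrank_of_injective hL
  simpa using this

theorem eig_range {n : ℕ} (e T : Matrix (Fin n) (Fin n) ℂ) (he : e * e = e) (h0 : e ≠ 0)
    (hc : T * e = e * T) : ∃ v, v ≠ 0 ∧ e *ᵥ v = v ∧ ∃ l : ℂ, T *ᵥ v = l • v := by
  obtain ⟨r, b, b', h1, h2⟩ := idem_factor e he
  have hr : r ≠ 0 := by
    rintro rfl
    apply h0
    rw [← h1]; ext i j; simp [Matrix.mul_apply]
  have : Nonempty (Fin r) := ⟨⟨0, by omega⟩⟩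
  obtain ⟨l, hl⟩ := Module.End.exists_eigenvalue (K := ℂ) (Matrix.toLin' (b' * T * b))
  obtain ⟨y, hy⟩ := hl.exists_hasEigenvector
  have hy1 := hy.apply_eq_smul
  have heb : e * b = b := by rw [← h1, Matrix.mul_assoc, h2, Matrix.mul_one]
  refine ⟨b *ᵥ y, ?_, ?_, l, ?_⟩
  · intro h
    apply hy.2
    have := congrArg (fun z => b' *ᵥ z) h
    simpa [Matrix.mulVec_mulVec, h2] using this
  · rw [Matrix.mulVec_mulVec, heb]
  · have h3 : T * b = b * (b' * T * b) := by
      rw [← Matrix.mul_assoc, ← Matrix.mul_assoc, h1, ← hc, Matrix.mul_assoc, heb]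
    rw [Matrix.mulVec_mulVec, h3, ← Matrix.mulVec_mulVec]
    rw [Matrix.toLin'_apply] at hy1
    rw [hy1, Matrix.mulVec_smul]

end Paper

set_option linter.unusedSectionVars false
set_option linter.unusedVariables false
namespace Paper
namespace Dat
section
variable {q : ℕ} {F G : Type} [Field F] [Group G] (D : Dat q F G) [Fintype F] [DecidableEq F] (hF : FD q F)
  [Fintype G] [DecidableEq G] {n : ℕ} (ρ : G →* Matrix (Fin n) (Fin n) ℂ) (ψ : AddChar F ℂ)
  (hψ : ψ.IsPrimitive) 
include hF

theorem e0_sum : (q ^ 2 : ℂ) • D.e ρ ψ 0 = ∑ a, ρ (D.z a) := by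
  have h3 := hF.three_le
  have hq : (q : ℂ) ≠ 0 := by exact_mod_cast (by omega : q ≠ 0)
  rw [e, fam, hF.card, smul_smul]
  simp [hq]

theorem f0_sum : (q ^ 2 : ℂ) • D.f ρ ψ 0 = ∑ a, ρ (D.u a) * D.e ρ ψ 0 := by
  have h3 := hF.three_le
  have hq : (q : ℂ) ≠ 0 := by exact_mod_cast (by omega : q ≠ 0)
  rw [f, fam, hF.card, smul_smul]
  simp [hq]

theorem f0_sum2 : (q ^ 4 : ℂ) • D.f ρ ψ 0 = ∑ a, ∑ b, ρ (D.z b * D.u a) := by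
  have : (q ^ 4 : ℂ) = q ^ 2 * q ^ 2 := by ring
  rw [this, ← smul_smul, f0_sum D hF, Finset.smul_sum]
  apply Finset.sum_congr rfl
  intro a _
  rw [← Matrix.mul_smul, e0_sum D hF, Finset.mul_sum]
  apply Finset.sum_congr rfl
  intro b _
  rw [← map_mul, D.zu]

include hψ

theorem f0_cell (v : Fin n → ℂ) (hv : D.f ρ ψ 0 *ᵥ v = v)
    (ht : ∀ x, ∃ l : ℂ, ρ (D.t x) *ᵥ v = l • v) (b a x b' a') :
    ∃ l : ℂ, D.f ρ ψ 0 *ᵥ (ρ (D.z b * D.u a * D.w * D.t x * (D.z b' * D.u a')) *ᵥ v)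
      = l • (D.f ρ ψ 0 *ᵥ (ρ D.w *ᵥ v)) := by
  obtain ⟨l, hl⟩ := ht x
  refine ⟨l, ?_⟩
  have h1 : ρ (D.z b' * D.u a') *ᵥ v = v := by
    conv_lhs => rw [← hv]
    rw [Matrix.mulVec_mulVec, D.zu_f0 _ _ hψ, hv]
  rw [map_mul, ← Matrix.mulVec_mulVec, h1, map_mul, ← Matrix.mulVec_mulVec, hl, Matrix.mulVec_smul,
    Matrix.mulVec_smul, map_mul, ← Matrix.mulVec_mulVec, Matrix.mulVec_mulVec, D.f0_zu _ _ hψ]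

theorem f0_bor (v : Fin n → ℂ) (hv : D.f ρ ψ 0 *ᵥ v = v)
    (ht : ∀ x, ∃ l : ℂ, ρ (D.t x) *ᵥ v = l • v) (b a x) :
    ∃ l : ℂ, D.f ρ ψ 0 *ᵥ (ρ (D.z b * D.u a * D.t x) *ᵥ v) = l • v := by
  obtain ⟨l, hl⟩ := ht x
  refine ⟨l, ?_⟩
  rw [map_mul, ← Matrix.mulVec_mulVec, hl, Matrix.mulVec_smul, Matrix.mulVec_smul,
    Matrix.mulVec_mulVec, D.f0_zu _ _ hψ, hv]

theorem f0_vec (h0 : D.f ρ ψ 0 ≠ 0) : ∃ v : Fin n → ℂ, v ≠ 0 ∧ D.f ρ ψ 0 *ᵥ v = v ∧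
    ∀ x, ∃ l : ℂ, ρ (D.t x) *ᵥ v = l • v := by
  obtain ⟨x0, ho, hg⟩ := hF.gen
  obtain ⟨v, hv0, hv, l, hl⟩ := eig_range (D.f ρ ψ 0) (ρ (D.t x0)) (D.f_idem _ _ hψ 0) h0 (by
    have := D.t_f' ρ ψ x0 0
    rwa [zero_mul] at this)
  refine ⟨v, hv0, hv, ?_⟩
  intro x
  obtain ⟨j, rfl⟩ := hg x
  refine ⟨l ^ j, ?_⟩
  rw [map_pow, map_pow]
  induction j with
  | zero => simp
  | succ j ih => rw [pow_succ, ← Matrix.mulVec_mulVec, hl, Matrix.mulVec_smul, ih, smul_smul, pow_succ, mul_comm]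

variable (hirr : ∀ W : Submodule ℂ (Fin n → ℂ), (∀ g, ∀ v ∈ W, ρ g *ᵥ v ∈ W) → W = ⊥ ∨ W = ⊤)
include hirr

theorem f0_range (v : Fin n → ℂ) (hv0 : v ≠ 0) (hv : D.f ρ ψ 0 *ᵥ v = v)
    (ht : ∀ x, ∃ l : ℂ, ρ (D.t x) *ᵥ v = l • v) (y : Fin n → ℂ) :
    D.f ρ ψ 0 *ᵥ y ∈ Submodule.span ℂ {v, D.f ρ ψ 0 *ᵥ (ρ D.w *ᵥ v)} := by
  let V := Submodule.span ℂ (Set.range (fun g => ρ g *ᵥ v))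
  have hV : V = ⊤ := by
    have hinv : ∀ g, ∀ y ∈ V, ρ g *ᵥ y ∈ V := by
      intro g y hy
      have h1 : V ≤ V.comap (Matrix.toLin' (ρ g)) := by
        apply Submodule.span_le.mpr
        rintro _ ⟨h, rfl⟩
        simp only [SetLike.mem_coe, Submodule.mem_comap, Matrix.toLin'_apply]
        apply Submodule.subset_span
        exact ⟨g * h, by simp [Matrix.mulVec_mulVec]⟩
      exact h1 hy
    rcases hirr V hinv with h | h
    · exfalso
      have : v ∈ V := Submodule.subset_span ⟨1, by simp⟩
      rw [h] at this
      exact hv0 ((Submodule.mem_bot ℂ).mp this)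
    · exact h
  have h2 : V ≤ (Submodule.span ℂ {v, D.f ρ ψ 0 *ᵥ (ρ D.w *ᵥ v)}).comap
      (Matrix.toLin' (D.f ρ ψ 0)) := by
    apply Submodule.span_le.mpr
    rintro _ ⟨g, rfl⟩
    simp only [SetLike.mem_coe, Submodule.mem_comap, Matrix.toLin'_apply]
    rcases D.bruhat g with ⟨b, a, x, rfl⟩ | ⟨b, a, x, b', a', rfl⟩
    · obtain ⟨l, hl⟩ := D.f0_bor hF ρ ψ hψ v hv ht b a x
      rw [hl]
      exact Submodule.smul_mem _ _ (Submodule.subset_span (by simp))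
    · obtain ⟨l, hl⟩ := D.f0_cell hF ρ ψ hψ v hv ht b a x b' a'
      rw [hl]
      exact Submodule.smul_mem _ _ (Submodule.subset_span (by simp))
  rw [hV] at h2
  exact h2 (Submodule.mem_top : y ∈ ⊤)

omit hirr in
theorem f0_dep (v : Fin n → ℂ) (hv : D.f ρ ψ 0 *ᵥ v = v)
    (ht : ∀ x, ∃ l : ℂ, ρ (D.t x) *ᵥ v = l • v) (hef : D.e ρ ψ 0 = D.f ρ ψ 0) :
    v ∈ Submodule.span ℂ {D.f ρ ψ 0 *ᵥ (ρ D.w *ᵥ v)} := by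
  set S := Submodule.span ℂ {D.f ρ ψ 0 *ᵥ (ρ D.w *ᵥ v)}
  have h3 := hF.three_le
  let T : F → F → (Fin n → ℂ) := fun a b => D.f ρ ψ 0 *ᵥ (ρ (D.w * (D.z b * D.u a) * D.w) *ᵥ v)
  have hT : ∀ a b, T a b - (if a = 0 ∧ b ^ q = b then v else 0) ∈ S := by
    intro a b
    split_ifs with h
    · have : T a b = v := by
        simp only [T]
        rw [h.1, D.u_zero, D.z_one b h.2]
        simp [D.ww, hv]
      rw [this, sub_self]; exact S.zero_mem
    · obtain ⟨c, d, x, c', d', hg⟩ := D.big a b (by tauto)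
      obtain ⟨l, hl⟩ := D.f0_cell hF ρ ψ hψ v hv ht c d x c' d'
      simp only [T]
      rw [hg, hl, sub_zero]
      exact S.smul_mem _ (Submodule.mem_span_singleton_self _)
  let P : Matrix (Fin n) (Fin n) ℂ →ₗ[ℂ] (Fin n → ℂ) :=
    { toFun := fun M => (D.f ρ ψ 0 * (ρ D.w * M * ρ D.w)) *ᵥ v
      map_add' := by intro M N; simp [Matrix.mul_add, Matrix.add_mul, Matrix.add_mulVec]
      map_smul' := by intro c M; simp [Matrix.smul_mulVec] }
  have hP : ∀ a b, P (ρ (D.z b * D.u a)) = T a b := by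
    intro a b
    simp only [P, T, LinearMap.coe_mk, AddHom.coe_mk]
    rw [Matrix.mulVec_mulVec, map_mul _ _ D.w, map_mul ρ D.w]
  have e1 : (q ^ 2 : ℂ) • P (D.f ρ ψ 0) = ∑ b, T 0 b := by
    rw [← map_smul, ← hef, e0_sum D hF, map_sum]
    apply Finset.sum_congr rfl
    intro b _
    rw [← hP, D.u_zero, mul_one]
  have e2 : (q ^ 4 : ℂ) • P (D.f ρ ψ 0) = ∑ a, ∑ b, T a b := by
    rw [← map_smul, f0_sum2 D hF, map_sum]
    apply Finset.sum_congr rfl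
    intro a _
    rw [map_sum]
    apply Finset.sum_congr rfl
    intro b _
    rw [hP]
  have hq1 : ∑ b : F, (if (0 : F) = 0 ∧ b ^ q = b then v else 0) = (q : ℂ) • v := by
    simp only [true_and]
    rw [← Finset.sum_filter, Finset.sum_const, hF.cards.1]
    exact (Nat.cast_smul_eq_nsmul ℂ q v).symm
  have hq2 : ∑ a : F, ∑ b : F, (if a = 0 ∧ b ^ q = b then v else 0) = (q : ℂ) • v := by
    rw [Finset.sum_eq_single 0]
    · exact hq1
    · intro a _ ha
      simp [ha]
    · simp
  have m1 : (q ^ 2 : ℂ) • P (D.f ρ ψ 0) - (q : ℂ) • v ∈ S := by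
    rw [e1, ← hq1, ← Finset.sum_sub_distrib]
    exact S.sum_mem (fun b _ => hT 0 b)
  have m2 : (q ^ 4 : ℂ) • P (D.f ρ ψ 0) - (q : ℂ) • v ∈ S := by
    rw [e2, ← hq2, ← Finset.sum_sub_distrib]
    refine S.sum_mem (fun a _ => ?_)
    rw [← Finset.sum_sub_distrib]
    exact S.sum_mem (fun b _ => hT a b)
  have m3 := S.sub_mem m2 (S.smul_mem (q ^ 2 : ℂ) m1)
  have m4 : (q ^ 4 : ℂ) • P (D.f ρ ψ 0) - (q : ℂ) • v -
    (q ^ 2 : ℂ) • ((q ^ 2 : ℂ) • P (D.f ρ ψ 0) - (q : ℂ) • v) = ((q : ℂ) ^ 3 - q) • v := by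
    module
  rw [m4] at m3
  have hne : ((q : ℂ) ^ 3 - q) ≠ 0 := by
    intro h
    have h5 : (q : ℂ) ^ 3 = q := sub_eq_zero.mp h
    have h6 : q ^ 3 = q := by exact_mod_cast h5
    nlinarith [sq_nonneg q, pow_pos (by omega : 0 < q) 2]
  exact (S.smul_mem_iff hne).mp m3

theorem f0_zero (hA : (D.e ρ ψ 0).trace = (q - 1 : ℕ) ∨ (D.e ρ ψ 0).trace = (q ^ 2 - 1 : ℕ)) :
    D.f ρ ψ 0 = 0 ∧ (D.e ρ ψ 0).trace = (q ^ 2 - 1 : ℕ) := by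
  have h3 := hF.three_le
  obtain ⟨x0, ho, hg⟩ := hF.gen
  obtain ⟨K, hK, hK', hev⟩ := hF.ell x0 ho
  set c := x0 ^ 2 * (x0 ^ q)⁻¹ with hc
  have hτ : ∀ s, ∃ r : ℕ, (D.f ρ ψ s).trace = r := fun s => idem_trace_nat _ (D.f_idem ρ ψ hψ s)
  choose τ hτ using hτ
  have hinv : ∀ x : Fˣ, τ (x * c : Fˣ) = τ (x : F) := by
    intro x
    have h1 := D.t_f ρ ψ x0 (x * c : Fˣ)
    rw [← hc, ← Units.val_mul, mul_inv_cancel_right] at h1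
    have h2 : (D.f ρ ψ (x * c : Fˣ)).trace = (D.f ρ ψ (x : F)).trace := by
      rw [← h1, Matrix.trace_mul_comm, ← Matrix.mul_assoc, D.tt', Matrix.one_mul]
    rw [hτ, hτ] at h2
    exact_mod_cast h2
  have hdvd := orbit_dvd c (fun x : Fˣ => τ x) hinv
  obtain ⟨j, hj⟩ := hdvd
  have hsum : (D.e ρ ψ 0).trace = ((τ 0 + orderOf c * j : ℕ) : ℂ) := by
    rw [← D.sum_f ρ ψ hψ, Matrix.trace_sum, ← hj, ← Finset.add_sum_erase _ _ (Finset.mem_univ (0 : F)),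
      hτ]
    push_cast
    congr 1
    rw [← Finset.sum_subtype (Finset.univ.erase (0 : F)) (p := fun x => x ≠ 0) (by simp)
      (fun x => ((τ x : ℕ) : ℂ)) |>.trans (Fintype.sum_equiv unitsEquivNeZero.symm _ _ (by intro x; rfl))]
    exact Finset.sum_congr rfl (fun s _ => hτ s)
  have h8 : 8 ≤ q ^ 2 - 1 := by
    have : 9 ≤ q ^ 2 := by nlinarith
    omega
  have h3l : q ^ 2 - 1 ≤ 3 * orderOf c := by
    rw [hK, mul_comm]
    apply Nat.mul_le_mul_right
    omega
  have hqq : (q ^ 2 - 1) = (q + 1) * (q - 1) := hF.sq_sub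
  have hbad : 0 < j → τ 0 + orderOf c * j ≠ q - 1 := by
    intro hj0 h
    have h5 : orderOf c ≤ q - 1 := by nlinarith
    have : 4 * (q - 1) ≤ (q + 1) * (q - 1) := Nat.mul_le_mul_right _ (by omega)
    omega
  rw [hsum] at hA ⊢
  have hA' : τ 0 + orderOf c * j = q - 1 ∨ τ 0 + orderOf c * j = q ^ 2 - 1 := by
    exact_mod_cast hA
  by_cases h0 : D.f ρ ψ 0 = 0
  · refine ⟨h0, ?_⟩
    rcases hA' with h | h
    · have ht0 : τ 0 = 0 := by
        have := hτ 0
        rw [h0, Matrix.trace_zero] at this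
        exact_mod_cast this.symm
      exfalso
      apply hbad _ h
      rcases Nat.eq_zero_or_pos j with hj0 | hj0
      · rw [hj0, ht0] at h; omega
      · exact hj0
    · rw [h]
  · exfalso
    obtain ⟨v, hv0, hv, ht⟩ := D.f0_vec hF ρ ψ hψ h0
    have hr := D.f0_range hF ρ ψ hψ hirr v hv0 hv ht
    have hpos : τ 0 ≠ 0 := by
      intro h
      apply h0
      apply idem_zero _ (D.f_idem ρ ψ hψ 0)
      rw [hτ, h]; simp
    rcases Nat.eq_zero_or_pos j with hj0 | hj0
    · have hz : ∀ x : Fˣ, τ x = 0 := by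
        rw [hj0, mul_zero] at hj
        intro x
        exact (Finset.sum_eq_zero_iff.mp hj) x (Finset.mem_univ _)
      have hef : D.e ρ ψ 0 = D.f ρ ψ 0 := by
        rw [← D.sum_f ρ ψ hψ]
        apply Finset.sum_eq_single
        · intro s _ hs
          apply idem_zero _ (D.f_idem ρ ψ hψ s)
          have := hz (Units.mk0 s hs)
          rw [Units.val_mk0] at this
          rw [hτ, this]; simp
        · simp
      have hd := D.f0_dep hF ρ ψ hψ v hv ht hef
      have hb := rank_bound _ (D.f_idem ρ ψ hψ 0) (τ 0) (hτ 0)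
        (Submodule.span ℂ {D.f ρ ψ 0 *ᵥ (ρ D.w *ᵥ v)}) (by
          intro y
          have h1 : Submodule.span ℂ {v, D.f ρ ψ 0 *ᵥ (ρ D.w *ᵥ v)} ≤
              Submodule.span ℂ {D.f ρ ψ 0 *ᵥ (ρ D.w *ᵥ v)} := by
            apply Submodule.span_le.mpr
            intro z hz
            rcases hz with h | h
            · rw [h]; exact hd
            · exact Submodule.subset_span h
          exact h1 (hr y))
      have hb2 := finrank_span_le_card (R := ℂ) ({D.f ρ ψ 0 *ᵥ (ρ D.w *ᵥ v)} : Set (Fin n → ℂ))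
      simp at hb2
      have h4 : q - 1 ≤ q ^ 2 - 1 := by
        have : q ≤ q ^ 2 := by nlinarith
        omega
      rw [hj0] at hA'
      omega
    · have hb := rank_bound _ (D.f_idem ρ ψ hψ 0) (τ 0) (hτ 0) _ hr
      classical
      have hb2 := finrank_span_le_card (R := ℂ) ({v, D.f ρ ψ 0 *ᵥ (ρ D.w *ᵥ v)} : Set (Fin n → ℂ))
      have hb3 : ({v, D.f ρ ψ 0 *ᵥ (ρ D.w *ᵥ v)} : Set (Fin n → ℂ)).toFinset.card ≤ 2 := by
        simp only [Set.toFinset_insert, Set.toFinset_singleton]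
        exact Finset.card_le_two
      rcases hA' with h | h
      · exact hbad hj0 h
      · have h6 : orderOf c ∣ τ 0 := by
          have : orderOf c ∣ τ 0 + orderOf c * j := by rw [h, hK]; exact Dvd.intro _ rfl
          exact (Nat.dvd_add_left (Dvd.intro _ rfl)).mp this
        have := Nat.le_of_dvd (by omega) h6
        omega

end
end Dat
end Paper

set_option linter.unusedSectionVars false
set_option linter.unusedVariables false
namespace Paper

theorem schur_scalar {n : ℕ} {G : Type} [Group G] (hn : 0 < n) (ρ : G →* Matrix (Fin n) (Fin n) ℂ)
    (hirr : ∀ W : Submodule ℂ (Fin n → ℂ), (∀ g, ∀ v ∈ W, ρ g *ᵥ v ∈ W) → W = ⊥ ∨ W = ⊤)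
    (T : Matrix (Fin n) (Fin n) ℂ) (hT : ∀ g, T * ρ g = ρ g * T) : ∃ l : ℂ, T = l • 1 := by
  have : Nonempty (Fin n) := ⟨⟨0, hn⟩⟩
  obtain ⟨v, hv0, -, l, hl⟩ := eig_range (1 : Matrix (Fin n) (Fin n) ℂ) T (by simp) one_ne_zero (by simp)
  refine ⟨l, ?_⟩
  let W : Submodule ℂ (Fin n → ℂ) := LinearMap.ker (Matrix.toLin' (T - l • 1))
  have hm : ∀ v, v ∈ W ↔ T *ᵥ v = l • v := by
    intro v
    simp only [W, LinearMap.mem_ker, Matrix.toLin'_apply, Matrix.sub_mulVec, sub_eq_zero,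
      Matrix.smul_mulVec, Matrix.one_mulVec]
  have hW : W = ⊤ := by
    rcases hirr W (by
      intro g v hv
      rw [hm] at hv ⊢
      rw [Matrix.mulVec_mulVec, hT, ← Matrix.mulVec_mulVec, hv, Matrix.mulVec_smul]) with h | h
    · exfalso
      have : v ∈ W := (hm v).mpr hl
      rw [h] at this
      exact hv0 ((Submodule.mem_bot ℂ).mp this)
    · exact h
  apply Matrix.toLin'.injective
  ext1 i
  ext1
  have := (hm (Pi.single i 1)).mp (by rw [hW]; trivial)
  simp only [LinearMap.comp_apply, Matrix.toLin'_apply, LinearMap.single_apply, this, Matrix.smul_mulVec, Matrix.one_mulVec]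

namespace Dat
variable {q : ℕ} {F G : Type} [Field F] [Group G] (D : Dat q F G) [Fintype F] [DecidableEq F]
  [Fintype G] [DecidableEq G] {n : ℕ} (ρ : G →* Matrix (Fin n) (Fin n) ℂ) (ψ : AddChar F ℂ)

theorem det_e0 (hF : FD q F) (hψ : ψ.IsPrimitive) (hn : 0 < n)
    (hirr : ∀ W : Submodule ℂ (Fin n → ℂ), (∀ g, ∀ v ∈ W, ρ g *ᵥ v ∈ W) → W = ⊥ ∨ W = ⊤)
    (hf0 : D.f ρ ψ 0 = 0) (hA : (D.e ρ ψ 0).trace = (q ^ 2 - 1 : ℕ)) (x0 : Fˣ)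
    (ho : orderOf x0 = q ^ 2 - 1) :
    (ρ (D.t x0) * D.e ρ ψ 0 + (1 - D.e ρ ψ 0)).det = -1 := by
  obtain ⟨K, hK, hK', hev⟩ := hF.ell x0 ho
  set c := x0 ^ 2 * (x0 ^ q)⁻¹ with hc
  set l := orderOf c with hl
  have hl0 : 0 < l := orderOf_pos c
  set T := ρ (D.t x0) with hT
  have hTj : ∀ j : ℕ, T ^ j = ρ (D.t (x0 ^ j)) := by intro j; rw [hT, map_pow, map_pow]
  have hcj : ∀ j : ℕ, (x0 ^ j) ^ 2 * ((x0 ^ j) ^ q)⁻¹ = c ^ j := by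
    intro j; rw [hc, mul_pow, inv_pow, ← pow_mul, ← pow_mul, ← pow_mul, ← pow_mul, mul_comm j 2, mul_comm j q]
  obtain ⟨ω, hω⟩ : ∃ ω : ℂ, T ^ l = ω • 1 := by
    apply schur_scalar hn ρ hirr
    intro g
    rw [hTj, ← map_mul, ← map_mul, D.cen]
    rw [hcj, hl, pow_orderOf_eq_one]
  have hωK : ω ^ K = 1 := by
    have h1 : T ^ (l * K) = 1 := by rw [hTj, ← hK, ← ho, pow_orderOf_eq_one, map_one, map_one]
    rw [pow_mul, hω, smul_pow, one_pow] at h1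
    have := congrFun (congrFun h1 ⟨0, hn⟩) ⟨0, hn⟩
    simpa using this
  have hω0 : ω ≠ 0 := by
    rintro rfl
    rw [zero_pow (by rcases hK' with h | h <;> omega)] at hωK
    exact zero_ne_one hωK
  obtain ⟨η, hη⟩ := IsAlgClosed.exists_pow_nat_eq ω hl0
  have hη0 : η ≠ 0 := by rintro rfl; rw [zero_pow hl0.ne'] at hη; exact hω0 hη.symm
  have he := D.e_idem ρ ψ hψ 0
  have hce : T * D.e ρ ψ 0 = D.e ρ ψ 0 * T := D.t_e0 ρ ψ x0
  have main := free_det (K := K) hev hl0 (η⁻¹ • T) (D.e ρ ψ 0) he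
    (by rw [Matrix.smul_mul, hce, Matrix.mul_smul])
    (by rw [smul_pow, hω, inv_pow, hη, smul_smul, inv_mul_cancel₀ hω0, one_smul, Matrix.one_mul])
    (by
      intro j hj0 hjl
      rw [smul_pow, Matrix.smul_mul, Matrix.trace_smul, ← D.sum_f ρ ψ hψ, Finset.mul_sum, Matrix.trace_sum,
        Finset.sum_eq_zero, smul_zero]
      intro s _
      by_cases hs : s = 0
      · rw [hs, hf0, Matrix.mul_zero, Matrix.trace_zero]
      · rw [hTj, ← D.f_idem ρ ψ hψ s, ← Matrix.mul_assoc, Matrix.trace_mul_comm, D.t_f', ← Matrix.mul_assoc,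
          D.f_orth ρ ψ hψ, Matrix.zero_mul, Matrix.trace_zero]
        intro h
        rw [hcj] at h
        have h2 : ((c ^ j)⁻¹ : Fˣ) = 1 := by
          ext
          exact (mul_left_cancel₀ hs (by rw [← h, Units.val_one, mul_one])).symm
        exact pow_ne_one_of_lt_orderOf hj0.ne' hjl (inv_eq_one.mp h2))
    (by rw [hA, hK])
  have h1 : (η⁻¹ • T) * D.e ρ ψ 0 + (1 - D.e ρ ψ 0) = (T * D.e ρ ψ 0 + (1 - D.e ρ ψ 0)) *
      (1 + (η⁻¹ - 1) • D.e ρ ψ 0) := by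
    simp only [Matrix.add_mul, Matrix.mul_add, Matrix.mul_one, Matrix.mul_smul, Matrix.mul_assoc, he,
      Matrix.sub_mul, Matrix.one_mul, sub_self, smul_zero, add_zero, Matrix.smul_mul]
    module
  have hKo : (-1 : ℂ) ^ K = -1 := by rcases hK' with h | h <;> rw [h] <;> norm_num
  rw [h1, Matrix.det_mul, det_smul_idem he hA, hK, pow_mul, inv_pow, hη, inv_pow, hωK, inv_one, mul_one, hKo] at main
  exact main

/-- all facts over ℂ -/
theorem partI (hn : n = (q - 1) * (q ^ 2 - q + 1))
    (hψ : ψ.IsPrimitive) (hF : FD q F) (hfr : ∀ a, ψ (a ^ q) = ψ a)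
    (hs : ∑ g, ‖(ρ g).trace‖ ^ 2 = (Fintype.card G : ℝ))
    (hirr : ∀ W : Submodule ℂ (Fin n → ℂ), (∀ g, ∀ v ∈ W, ρ g *ᵥ v ∈ W) → W = ⊥ ∨ W = ⊤) :
    D.f ρ ψ 0 = 0 ∧ (D.e ρ ψ 0).trace = (q ^ 2 - 1 : ℕ) ∧
    (∀ y, y ≠ 0 → y ^ q = -y → (D.e ρ ψ y).trace = (q * (q - 2) : ℕ)) ∧
    ∀ x0 : Fˣ, orderOf x0 = q ^ 2 - 1 → (ρ (D.t x0) * (1 - D.e ρ ψ 0) + D.e ρ ψ 0).det = -1 := by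
  have h3 := hF.three_le
  obtain ⟨h1, h2⟩ := D.f0_zero hF ρ ψ hψ hirr (D.A_cases hF ρ ψ hψ hfr hn hs)
  have hn0 : 0 < n := by rw [hn]; apply Nat.mul_pos <;> omega
  refine ⟨h1, h2, ?_, ?_⟩
  · intro y hy0 hy
    have := D.trace_total ρ ψ hF hψ hfr y hy0 hy
    rw [h2] at this
    generalize (D.e ρ ψ y).trace = tr at *
    rw [hn] at this
    obtain ⟨r, hr3⟩ : ∃ r, q = r + 3 := ⟨q - 3, by omega⟩
    have e1 : r + 3 - 1 = r + 2 := by omega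
    have e2 : (r + 3) ^ 2 - (r + 3) + 1 = (r + 3) * (r + 2) + 1 := by
      congr 1
      apply Nat.sub_eq_of_eq_add; ring
    have e3 : (r + 3) ^ 2 - 1 = (r + 4) * (r + 2) := by
      apply Nat.sub_eq_of_eq_add; ring
    have e4 : r + 3 - 2 = r + 1 := by omega
    rw [hr3, e1, e2, e3] at this
    rw [hr3, e4]
    have hr : ((r : ℂ) + 2) ≠ 0 := by exact_mod_cast (by omega : r + 2 ≠ 0)
    push_cast at this ⊢
    apply mul_left_cancel₀ hr
    linear_combination -this
  · intro x0 ho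
    have d1 := D.det_e0 ρ ψ hF hψ hn0 hirr h1 h2 x0 ho
    have he := D.e_idem ρ ψ hψ 0
    have hce : ρ (D.t x0) * D.e ρ ψ 0 = D.e ρ ψ 0 * ρ (D.t x0) := D.t_e0 ρ ψ x0
    have : (ρ (D.t x0) * (1 - D.e ρ ψ 0) + D.e ρ ψ 0) * (ρ (D.t x0) * D.e ρ ψ 0 + (1 - D.e ρ ψ 0))
        = ρ (D.t x0) := by
      generalize D.e ρ ψ 0 = e at *
      generalize ρ (D.t x0) = T at *
      have k1 : (T * (1 - e) + e) * (T * e + (1 - e)) = T * (T * e) - T * e * (T * e) + T * (1 - e - e + e * e)  + e * (T * e) + e - e * e := by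
        noncomm_ring
      have k3 : e * (T * e) = T * e := by rw [hce, ← Matrix.mul_assoc, he]
      have k2 : T * e * (T * e) = T * (T * e) := by rw [Matrix.mul_assoc, k3]
      rw [k1, k2, k3, he]
      noncomm_ring
    have := congrArg Matrix.det this
    rw [Matrix.det_mul, d1, D.det_t hF] at this
    linear_combination -this
end Dat
end Paper

set_option linter.unusedSectionVars false
set_option linter.unusedVariables false
namespace Paper

section cols
variable {E : Type} [Field E] {n s t r : ℕ} {ι : Type} [Fintype ι] [DecidableEq ι]

def cols (B : ι → Matrix (Fin n) (Fin s) E) : Matrix (Fin n) (Fin s × ι) E :=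
  Matrix.of fun i j => B j.2 i j.1

theorem mul_cols {l : ℕ} (M : Matrix (Fin l) (Fin n) E) (B : ι → Matrix (Fin n) (Fin s) E) :
    M * cols B = cols (fun i => M * B i) := by
  ext i j; simp [cols, Matrix.mul_apply]

theorem cols_mul (B : ι → Matrix (Fin n) (Fin s) E) (C : ι → Matrix (Fin s) (Fin s) E) :
    cols B * Matrix.blockDiagonal C = cols (fun i => B i * C i) := by
  ext i ⟨j, j'⟩
  simp only [cols, Matrix.mul_apply, Matrix.of_apply, Fintype.sum_prod_type, Matrix.blockDiagonal_apply]
  simp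

/-- adjoint with respect to an involution -/
def adj {α β : Type} (σ : E →+* E) (M : Matrix α β E) : Matrix β α E := (M.map σ)ᵀ

theorem adj_mul {α β δ : Type} [Fintype β] (σ : E →+* E) (M : Matrix α β E) (N : Matrix β δ E) :
    adj σ (M * N) = adj σ N * adj σ M := by
  rw [adj, adj, adj, Matrix.map_mul, Matrix.transpose_mul]

abbrev IX (s t r : ℕ) := (Fin s × Fin 2) ⊕ (Fin t × Fin (r + 1))

variable (ε : Fin n ≃ IX s t r)

def pm (A : Fin 2 → Matrix (Fin n) (Fin s) E) (B : Fin (r + 1) → Matrix (Fin n) (Fin t) E) :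
    Matrix (Fin n) (IX s t r) E := Matrix.fromCols (cols A) (cols B)

def dd (A : Fin 2 → Matrix (Fin n) (Fin s) E) (B : Fin (r + 1) → Matrix (Fin n) (Fin t) E) : E :=
  ((pm A B).submatrix id ε).det

variable (A : Fin 2 → Matrix (Fin n) (Fin s) E) (B : Fin (r + 1) → Matrix (Fin n) (Fin t) E)

theorem dd_mul (M : Matrix (Fin n) (Fin n) E) :
    dd ε (fun i => M * A i) (fun i => M * B i) = M.det * dd ε A B := by
  rw [dd, dd, ← Matrix.det_mul]
  congr 1
  have : pm (fun i => M * A i) (fun i => M * B i) = M * pm A B := by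
    rw [pm, pm, Matrix.mul_fromCols, mul_cols, mul_cols]
  rw [this]
  ext i j; simp [Matrix.mul_apply]

theorem dd_mul_right (C : Fin (r + 1) → Matrix (Fin t) (Fin t) E) :
    dd ε A (fun i => B i * C i) = dd ε A B * ∏ i, (C i).det := by
  have h : pm A (fun i => B i * C i) = pm A B * (Matrix.fromBlocks 1 0 0 (Matrix.blockDiagonal C) : Matrix (IX s t r) (IX s t r) E) := by
    rw [pm, pm, Matrix.fromCols_mul_fromBlocks]
    simp [cols_mul]
  have h2 : (pm A (fun i => B i * C i)).submatrix id ε = (pm A B).submatrix id ε *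
      (Matrix.fromBlocks 1 0 0 (Matrix.blockDiagonal C) : Matrix (IX s t r) (IX s t r) E).submatrix ε ε := by
    rw [h, Matrix.submatrix_mul_equiv]
  rw [dd, h2, Matrix.det_mul, Matrix.det_submatrix_equiv_self, Matrix.det_fromBlocks_zero₂₁, Matrix.det_one,
    one_mul, Matrix.det_blockDiagonal]
  rfl

theorem dd_rot : dd ε A (fun i => B (finRotate (r + 1) i)) = ((-1) ^ r) ^ t * dd ε A B := by
  let π : Equiv.Perm (IX s t r) := Equiv.Perm.sumCongr 1 (Equiv.prodCongrRight (fun _ => finRotate (r + 1)))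
  let π' : Equiv.Perm (Fin n) := (ε.trans π).trans ε.symm
  have h : (pm A (fun i => B (finRotate (r + 1) i))).submatrix id ε = ((pm A B).submatrix id ε).submatrix id π' := by
    ext i j
    simp only [Matrix.submatrix_apply, id, π', Equiv.trans_apply, Equiv.apply_symm_apply]
    generalize ε j = y
    rcases y with ⟨a, b⟩ | ⟨a, b⟩ <;> simp [π, pm, cols]
  have hs : Equiv.Perm.sign π' = ((-1) ^ r) ^ t := by
    have : π' = ε.symm.permCongr π := by ext; simp [π']
    rw [this, Equiv.Perm.sign_permCongr, Equiv.Perm.sign_sumCongr, Equiv.Perm.sign_prodCongrRight]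
    simp [sign_finRotate]
  rw [dd, h, Matrix.det_permute', hs, dd]
  push_cast; rfl

theorem dd_map (τ : E →+* E) : τ (dd ε A B) = dd ε (fun i => (A i).map τ) (fun i => (B i).map τ) := by
  rw [dd, dd, RingHom.map_det]
  congr 1
  ext i j
  simp only [RingHom.mapMatrix_apply, Matrix.map_apply, Matrix.submatrix_apply]
  generalize ε j = y
  rcases y with ⟨a, b⟩ | ⟨a, b⟩ <;> simp [pm, cols]

theorem dd_ne_zero (A' : Fin 2 → Matrix (Fin s) (Fin n) E) (B' : Fin (r + 1) → Matrix (Fin t) (Fin n) E)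
    (h : ∑ i, A i * A' i + ∑ i, B i * B' i = 1) : dd ε A B ≠ 0 := by
  let Q : Matrix (IX s t r) (Fin n) E := Matrix.of (fun y j => Sum.elim (fun a : Fin s × Fin 2 => A' a.2 a.1 j)
    (fun a : Fin t × Fin (r + 1) => B' a.2 a.1 j) y)
  have h1 : pm A B * Q = 1 := by
    rw [← h]
    ext i j
    simp only [Matrix.mul_apply, Fintype.sum_sum_type, Fintype.sum_prod_type, pm, cols, Q, Matrix.add_apply,
      Matrix.sum_apply, Matrix.of_apply, Matrix.fromCols_apply_inl, Matrix.fromCols_apply_inr, Sum.elim_inl,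
      Sum.elim_inr]
    rw [Finset.sum_comm, Finset.sum_comm (s := (Finset.univ : Finset (Fin t)))]
  have h2 : (pm A B).submatrix id ε * Q.submatrix ε id = 1 := by
    rw [Matrix.submatrix_mul_equiv, h1]; simp
  intro h3
  have := congrArg Matrix.det h2
  rw [Matrix.det_mul, Matrix.det_one] at this
  rw [dd] at h3
  rw [h3, zero_mul] at this
  exact zero_ne_one this

theorem dd_herm (σ : E →+* E) (H : Matrix (Fin n) (Fin n) E) (h : Matrix (Fin s) (Fin s) E)
    (k : Matrix (Fin t) (Fin t) E)
    (hA : ∀ i j, adj σ (A i) * H * A j = if i = j then h else 0)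
    (hB : ∀ i j, adj σ (B i) * H * B j = if i = j then k else 0)
    (hAB : ∀ i j, adj σ (A i) * H * B j = 0) (hBA : ∀ i j, adj σ (B i) * H * A j = 0) :
    H.det * (dd ε A B * σ (dd ε A B)) = h.det ^ 2 * k.det ^ (r + 1) := by
  have h1 : adj σ (pm A B) * H * pm A B = Matrix.fromBlocks (Matrix.blockDiagonal fun _ => h) 0 0
      (Matrix.blockDiagonal fun _ => k) := by
    have e1 : ∀ {l l' : ℕ} (U : Matrix (Fin n) (Fin l) E) (V : Matrix (Fin n) (Fin l') E) a b,
      (adj σ U * H * V) a b = ∑ y, (∑ x, σ (U x a) * H x y) * V y b := by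
      intro l l' U V a b; simp [adj, Matrix.mul_apply]
    ext u v
    rcases u with ⟨a, b⟩ | ⟨a, b⟩ <;> rcases v with ⟨c, d⟩ | ⟨c, d⟩
    · have := congrFun (congrFun (hA b d) a) c
      rw [e1] at this
      simp only [adj, Matrix.mul_apply, Matrix.transpose_apply, Matrix.map_apply, pm, cols,
        Matrix.fromCols_apply_inl, Matrix.fromCols_apply_inr, Matrix.of_apply, Matrix.fromBlocks_apply₁₁, Matrix.blockDiagonal_apply]
      rw [this]; split_ifs <;> rfl
    · have := congrFun (congrFun (hAB b d) a) c
      rw [e1] at this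
      simp only [adj, Matrix.mul_apply, Matrix.transpose_apply, Matrix.map_apply, pm, cols,
        Matrix.fromCols_apply_inl, Matrix.fromCols_apply_inr, Matrix.of_apply, Matrix.fromBlocks_apply₁₂]
      rw [this]; rfl
    · have := congrFun (congrFun (hBA b d) a) c
      rw [e1] at this
      simp only [adj, Matrix.mul_apply, Matrix.transpose_apply, Matrix.map_apply, pm, cols,
        Matrix.fromCols_apply_inl, Matrix.fromCols_apply_inr, Matrix.of_apply, Matrix.fromBlocks_apply₂₁]
      rw [this]; rfl
    · have := congrFun (congrFun (hB b d) a) c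
      rw [e1] at this
      simp only [adj, Matrix.mul_apply, Matrix.transpose_apply, Matrix.map_apply, pm, cols,
        Matrix.fromCols_apply_inl, Matrix.fromCols_apply_inr, Matrix.of_apply, Matrix.fromBlocks_apply₂₂, Matrix.blockDiagonal_apply]
      rw [this]; split_ifs <;> rfl
  have h2 : adj σ ((pm A B).submatrix id ε) * H * (pm A B).submatrix id ε =
      (adj σ (pm A B) * H * pm A B).submatrix ε ε := by
    ext i j; simp [adj, Matrix.mul_apply]
  have h3 := congrArg Matrix.det h2
  rw [h1, Matrix.det_submatrix_equiv_self, Matrix.det_fromBlocks_zero₂₁, Matrix.det_blockDiagonal,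
    Matrix.det_blockDiagonal, Matrix.det_mul, Matrix.det_mul] at h3
  have h4 : (adj σ ((pm A B).submatrix id ε)).det = σ (dd ε A B) := by
    rw [adj, Matrix.det_transpose, dd, RingHom.map_det]; rfl
  rw [h4] at h3
  simp only [Finset.prod_const, Finset.card_univ, Fintype.card_fin] at h3
  rw [← h3, dd]; ring
end cols
end Paper

set_option linter.unusedSectionVars false
set_option linter.unusedVariables false
namespace Paper

theorem adj_sum {E : Type} [Field E] {α β ι : Type} (σ : E →+* E) (S : Finset ι) (M : ι → Matrix α β E) :
    adj σ (∑ i ∈ S, M i) = ∑ i ∈ S, adj σ (M i) := by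
  ext i j; simp [adj, Matrix.sum_apply]

theorem adj_smul {E : Type} [Field E] {α β : Type} (σ : E →+* E) (c : E) (M : Matrix α β E) :
    adj σ (c • M) = σ c • adj σ M := by
  ext i j; simp [adj]

theorem fam_adj {E : Type} [Field E] {R : Type} [CommRing R] [Fintype R] {n : ℕ} (ψ : AddChar R E)
    (M : R → Matrix (Fin n) (Fin n) E) (σ : E →+* E) (hσ : ∀ a, σ (ψ a) = ψ (-a))
    (H : Matrix (Fin n) (Fin n) E) (hM : ∀ a, adj σ (M a) * H = H * M (-a)) (s : R) :
    adj σ (fam ψ M s) * H = H * fam ψ M s := by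
  rw [fam, adj_smul, adj_sum, Matrix.smul_mul, Finset.sum_mul, Matrix.mul_smul, Finset.mul_sum]
  congr 1
  · simp
  · rw [← Equiv.sum_comp (Equiv.neg R)]
    apply Finset.sum_congr rfl
    intro a _
    rw [adj_smul, hσ, Matrix.smul_mul, hM]
    simp [Matrix.mul_smul]

theorem fam_gal {E : Type} [Field E] {R : Type} [CommRing R] [Fintype R] {n : ℕ} (ψ : AddChar R E)
    (M : R → Matrix (Fin n) (Fin n) E) (τ : E →+* E) (g : R) (hτ : ∀ a, τ (ψ a) = ψ (g * a))
    (s : R) : (fam ψ M s).map τ = fam ψ (fun a => (M a).map τ) (g * s) := by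
  ext i j
  simp [fam, Matrix.sum_apply, hτ, mul_assoc]

theorem qc_gen {F : Type} [Field F] [Fintype F] [DecidableEq F] (h2 : (2 : F) ≠ 0) (x0 : Fˣ)
    (hg : ∀ x, ∃ j : ℕ, x = x0 ^ j) : quadraticChar F x0 = -1 := by
  have hc : ringChar F ≠ 2 := by
    intro h
    apply h2
    have := ringChar.Nat.cast_ringChar (R := F)
    rw [h] at this
    exact_mod_cast this
  rcases quadraticChar_dichotomy (F := F) (x0.ne_zero) with h | h
  · exfalso
    apply quadraticChar_ne_one hc
    apply MulChar.ext
    intro a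
    obtain ⟨j, rfl⟩ := hg a
    rw [Units.val_pow_eq_pow_val, map_pow, h, one_pow, MulChar.one_apply]
    simp
  · exact h

namespace Dat
variable {q : ℕ} {F G : Type} [Field F] [Group G] (D : Dat q F G) [Fintype F] [DecidableEq F]
  {E : Type} [Field E] [CharZero E] {n : ℕ} (ρ : G →* Matrix (Fin n) (Fin n) E) (ψ : AddChar F E)

theorem adj_rho (σ : E →+* E) (H : Matrix (Fin n) (Fin n) E)
    (hH : ∀ g, adj σ (ρ g) * H * ρ g = H) (g : G) : adj σ (ρ g) * H = H * ρ g⁻¹ := by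
  conv_rhs => rw [← hH g]
  rw [Matrix.mul_assoc (adj σ (ρ g) * H), ← map_mul]; simp

theorem z_inv (a : F) : (D.z a)⁻¹ = D.z (-a) := by
  rw [inv_eq_iff_mul_eq_one, ← D.z_add, add_neg_cancel, D.z_zero]

theorem e_adj (σ : E →+* E) (hσ : ∀ a, σ (ψ a) = ψ (-a)) (H : Matrix (Fin n) (Fin n) E)
    (hH : ∀ g, adj σ (ρ g) * H * ρ g = H) (y : F) : adj σ (D.e ρ ψ y) * H = H * D.e ρ ψ y := by
  apply fam_adj _ _ _ hσ
  intro a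
  rw [adj_rho ρ σ H hH, z_inv]

theorem f_adj (σ : E →+* E) (hσ : ∀ a, σ (ψ a) = ψ (-a)) (H : Matrix (Fin n) (Fin n) E)
    (hH : ∀ g, adj σ (ρ g) * H * ρ g = H) (y : F) : adj σ (D.f ρ ψ y) * H = H * D.f ρ ψ y := by
  apply fam_adj _ _ _ hσ
  intro a
  rw [adj_mul, Matrix.mul_assoc, adj_rho ρ σ H hH, ← Matrix.mul_assoc, e_adj D ρ ψ σ hσ H hH, Matrix.mul_assoc]
  congr 1
  have h1 : (D.u a)⁻¹ = D.u (-a) * D.z (-((-a) * a ^ q / 2)) := by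
    rw [inv_eq_iff_mul_eq_one, ← mul_assoc, D.u_mul, add_neg_cancel, D.u_zero, mul_one, ← D.z_add, add_neg_cancel, D.z_zero]
  rw [h1, map_mul, ← Matrix.mul_assoc, ← u_e, Matrix.mul_assoc, e0_z]

theorem e_gal (τ : E →+* E) (g : F) (hτ : ∀ a, τ (ψ a) = ψ (g * a)) (hρ : ∀ g, (ρ g).map τ = ρ g) (y : F) :
    (D.e ρ ψ y).map τ = D.e ρ ψ (g * y) := by
  rw [e, fam_gal _ _ τ g hτ]
  simp only [hρ]; rfl

theorem f_gal (τ : E →+* E) (g : F) (hτ : ∀ a, τ (ψ a) = ψ (g * a)) (hρ : ∀ g, (ρ g).map τ = ρ g) (s : F) :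
    (D.f ρ ψ s).map τ = D.f ρ ψ (g * s) := by
  rw [f, fam_gal _ _ τ g hτ]
  simp only [Matrix.map_mul, hρ, D.e_gal ρ ψ τ g hτ hρ, mul_zero]; rfl

/-- the part of `e 0` on squares (`ε = 1`) or nonsquares (`ε = -1`). -/
def es (ε : ℤ) : Matrix (Fin n) (Fin n) E :=
  ∑ s ∈ Finset.univ.filter (fun s : F => quadraticChar F s = ε), D.f ρ ψ s

theorem es_sum (hψ : ψ.IsPrimitive) (hf0 : D.f ρ ψ 0 = 0) : D.es ρ ψ 1 + D.es ρ ψ (-1) = D.e ρ ψ 0 := by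
  rw [es, es, ← D.sum_f ρ ψ hψ, ← Finset.sum_union]
  · apply Finset.sum_subset (Finset.subset_univ _)
    intro s _ hs
    by_cases h : s = 0
    · rw [h, hf0]
    · exfalso; apply hs
      simp only [Finset.mem_union, Finset.mem_filter, Finset.mem_univ, true_and]
      exact quadraticChar_dichotomy h
  · rw [Finset.disjoint_filter]
    intro s _ h1 h2
    rw [h1] at h2; norm_num at h2

theorem es_mul (hψ : ψ.IsPrimitive) (ε : ℤ) (s : F) :
    D.es ρ ψ ε * D.f ρ ψ s = if quadraticChar F s = ε then D.f ρ ψ s else 0 := by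
  rw [es, Finset.sum_mul]
  simp only [D.f_mul_f ρ ψ hψ]
  rw [Finset.sum_ite_eq']
  simp

theorem es_idem (hψ : ψ.IsPrimitive) (ε : ℤ) : D.es ρ ψ ε * D.es ρ ψ ε = D.es ρ ψ ε := by
  conv_lhs => rw [es]
  rw [← es, es, Finset.mul_sum]
  apply Finset.sum_congr rfl
  intro s hs
  rw [← es, D.es_mul ρ ψ hψ, if_pos (Finset.mem_filter.mp hs).2]

theorem es_orth (hψ : ψ.IsPrimitive) (ε ε' : ℤ) (h : ε ≠ ε') : D.es ρ ψ ε * D.es ρ ψ ε' = 0 := by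
  have : D.es ρ ψ ε' = ∑ s ∈ Finset.univ.filter (fun s : F => quadraticChar F s = ε'), D.f ρ ψ s := rfl
  rw [this, Finset.mul_sum]
  apply Finset.sum_eq_zero
  intro s hs
  rw [D.es_mul ρ ψ hψ, (Finset.mem_filter.mp hs).2, if_neg (Ne.symm h)]

theorem e0_es (hψ : ψ.IsPrimitive) (ε : ℤ) : D.e ρ ψ 0 * D.es ρ ψ ε = D.es ρ ψ ε := by
  rw [es, Finset.mul_sum]
  simp only [D.e0_f ρ ψ hψ]

theorem es_reindex (M : F → Matrix (Fin n) (Fin n) E) (c : Fˣ) (ε : ℤ) :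
    ∑ s ∈ Finset.univ.filter (fun s : F => quadraticChar F s = ε), M (s * c) =
    ∑ s ∈ Finset.univ.filter (fun s : F => quadraticChar F s = quadraticChar F c * ε), M s := by
  apply Finset.sum_bij (fun s _ => s * (c : F))
  · intro s hs
    simp only [Finset.mem_filter, Finset.mem_univ, true_and, map_mul] at hs ⊢
    rw [hs, mul_comm]
  · intro a _ b _ h
    exact mul_right_cancel₀ c.ne_zero h
  · intro b hb
    refine ⟨b * (c⁻¹ : Fˣ), ?_, by simp⟩
    simp only [Finset.mem_filter, Finset.mem_univ, true_and] at hb ⊢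
    rw [map_mul, hb, mul_right_comm, ← map_mul]; simp
  · intro _ _; rfl

theorem es_gal (τ : E →+* E) (g : Fˣ) (hg : quadraticChar F g = 1) (hτ : ∀ a, τ (ψ a) = ψ (g * a))
    (hρ : ∀ g, (ρ g).map τ = ρ g) (ε : ℤ) : (D.es ρ ψ ε).map τ = D.es ρ ψ ε := by
  have : (D.es ρ ψ ε).map τ = ∑ s ∈ Finset.univ.filter (fun s : F => quadraticChar F s = ε), D.f ρ ψ (s * g) := by
    have h1 : (D.es ρ ψ ε).map τ = τ.mapMatrix (D.es ρ ψ ε) := rfl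
    rw [h1, es, map_sum]
    apply Finset.sum_congr rfl
    intro s _
    rw [RingHom.mapMatrix_apply, D.f_gal ρ ψ τ g hτ hρ, mul_comm]
  rw [this, es_reindex, hg, one_mul, es]

theorem t_es (x : Fˣ) (hq : Odd q) (hx : quadraticChar F x = -1) (ε : ℤ) :
    ρ (D.t x) * D.es ρ ψ ε * ρ (D.t x⁻¹) = D.es ρ ψ (-ε) := by
  conv_lhs => rw [es]
  rw [Finset.mul_sum, Finset.sum_mul]
  simp only [D.t_f]
  rw [es_reindex (D.f ρ ψ)]
  have : quadraticChar F (((x ^ 2 * (x ^ q)⁻¹)⁻¹ : Fˣ) : F) = -1 := by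
    have h1 : quadraticChar F (((x ^ 2 * (x ^ q)⁻¹)⁻¹ : Fˣ) : F) * quadraticChar F ((x ^ 2 * (x ^ q)⁻¹ : Fˣ) : F) = 1 := by
      rw [← map_mul, ← Units.val_mul, inv_mul_cancel]; simp
    have h2 : quadraticChar F ((x ^ 2 * (x ^ q)⁻¹ : Fˣ) : F) * quadraticChar F ((x ^ q : Fˣ) : F) = 1 := by
      rw [← map_mul, ← Units.val_mul, inv_mul_cancel_right, Units.val_pow_eq_pow_val, map_pow, hx]; norm_num
    rw [Units.val_pow_eq_pow_val, map_pow, hx, hq.neg_one_pow] at h2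
    have h3 : quadraticChar F ((x ^ 2 * (x ^ q)⁻¹ : Fˣ) : F) = -1 := by linarith
    rw [h3] at h1; linarith
  rw [this, neg_one_mul]; rfl

theorem es_trace (hF : FD q F) (hψ : ψ.IsPrimitive) (hf0 : D.f ρ ψ 0 = 0) (x : Fˣ) (hx : quadraticChar F x = -1)
    (hA : (D.e ρ ψ 0).trace = (q ^ 2 - 1 : ℕ)) : (D.es ρ ψ 1).trace = ((q ^ 2 - 1) / 2 : ℕ) := by
  have h1 := congrArg Matrix.trace (D.es_sum ρ ψ hψ hf0)
  rw [Matrix.trace_add, hA, ← D.t_es ρ ψ x hF.odd hx 1, Matrix.trace_mul_comm, ← Matrix.mul_assoc, D.tt', Matrix.one_mul] at h1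
  have h3 := hF.three_le
  obtain ⟨d, hd⟩ := hF.odd
  have : q ^ 2 - 1 = 2 * ((q ^ 2 - 1) / 2) := by
    rw [Nat.mul_div_cancel']
    rw [hF.sq_sub]
    exact Dvd.dvd.mul_left ⟨d, by omega⟩ _
  rw [this] at h1
  push_cast at h1
  have h2 : (2 : E) ≠ 0 := two_ne_zero
  apply mul_left_cancel₀ h2
  linear_combination h1

theorem sum_e_orbit (hF : FD q F) (hψ : ψ.IsPrimitive) (hfr : ∀ a, ψ (a ^ q) = ψ a) (x0 : Fˣ)
    (ho : orderOf x0 = q ^ 2 - 1) (y0 : F) (hy0 : y0 ≠ 0) (hy : y0 ^ q = -y0) (r : ℕ) (hr : q = r + 2) :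
    D.e ρ ψ 0 + ∑ i : Fin (r + 1), D.e ρ ψ (y0 * (((x0 ^ (i : ℕ)) ^ (q + 1))⁻¹ : Fˣ)) = 1 := by
  let φ : Fin (r + 1) → F := fun i => y0 * (((x0 ^ (i : ℕ)) ^ (q + 1))⁻¹ : Fˣ)
  have hinj : Function.Injective φ := by
    intro i j h
    have h1 := Units.ext (mul_left_cancel₀ hy0 h)
    rw [_root_.inv_inj, ← pow_mul, ← pow_mul, pow_inj_mod, ho, Nat.mod_eq_of_lt, Nat.mod_eq_of_lt] at h1
    · exact Fin.ext (Nat.eq_of_mul_eq_mul_right (Nat.succ_pos q) h1)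
    · rw [hF.sq_sub, mul_comm]; apply Nat.mul_lt_mul_of_pos_left _ (Nat.succ_pos q); have := j.2; omega
    · rw [hF.sq_sub, mul_comm]; apply Nat.mul_lt_mul_of_pos_left _ (Nat.succ_pos q); have := i.2; omega
  have himg : Finset.univ.image φ = (Finset.univ.filter (fun a : F => a ^ q = -a)).erase 0 := by
    apply Finset.eq_of_subset_of_card_le
    · intro a ha
      obtain ⟨i, -, rfl⟩ := Finset.mem_image.mp ha
      have hu : (((x0 ^ (i : ℕ)) ^ (q + 1))⁻¹ : Fˣ) ^ q = ((x0 ^ (i : ℕ)) ^ (q + 1))⁻¹ := by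
        ext
        rw [inv_pow, Units.val_inv_eq_inv_val, Units.val_inv_eq_inv_val, Units.val_pow_eq_pow_val, Units.val_pow_eq_pow_val, hF.normq]
      simp only [Finset.mem_erase, Finset.mem_filter, Finset.mem_univ, true_and, φ]
      refine ⟨mul_ne_zero hy0 (Units.ne_zero _), ?_⟩
      rw [mul_pow, hy, ← Units.val_pow_eq_pow_val, hu, neg_mul]
    · rw [Finset.card_image_of_injective _ hinj, Finset.card_erase_of_mem, hF.cards.2]
      · simp; omega
      · simp [zero_pow (by have := hF.three_le; omega : q ≠ 0)]
  have : ∑ i : Fin (r + 1), D.e ρ ψ (φ i) = ∑ y ∈ (Finset.univ.filter (fun a : F => a ^ q = -a)).erase 0, D.e ρ ψ y := by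
    rw [← himg, Finset.sum_image (fun a _ b _ h => hinj h)]
  rw [this, Finset.add_sum_erase _ _ (by simp [zero_pow (by have := hF.three_le; omega : q ≠ 0)]), ← D.sum_e ρ ψ hψ]
  apply Finset.sum_subset (Finset.subset_univ _)
  intro y _ hy
  exact D.e_eq_zero ρ ψ hF hψ hfr y (by simpa using hy)
end Dat
end Paper

set_option linter.unusedSectionVars false
set_option linter.unusedVariables false
namespace Paper

/-- the fixed field of `a ↦ a^q` -/
def FD.fix {q : ℕ} {F : Type} [Field F] [Fintype F] (hF : FD q F) : Subfield F where
  carrier := {a | a ^ q = a}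
  mul_mem' := by intro a b ha hb; simp only [Set.mem_ofPred_eq] at *; rw [mul_pow, ha, hb]
  one_mem' := by simp
  add_mem' := by intro a b ha hb; simp only [Set.mem_ofPred_eq] at *; rw [hF.add, ha, hb]
  zero_mem' := by simp only [Set.mem_ofPred_eq]; exact zero_pow (by have := hF.three_le; omega)
  neg_mem' := by intro a ha; simp only [Set.mem_ofPred_eq] at *; rw [hF.neg, ha]
  inv_mem' := by intro a ha; simp only [Set.mem_ofPred_eq] at *; rw [inv_pow, ha]

theorem FD.gauss {q : ℕ} {F : Type} [Field F] [Fintype F] [DecidableEq F] (hF : FD q F) {E : Type} [Field E] [CharZero E]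
    (ψ : AddChar F E) (hψ : ψ.IsPrimitive) (hfr : ∀ a, ψ (a ^ q) = ψ a) (σ : E →+* E)
    (hσ : ∀ a, σ (ψ a) = ψ (-a)) (x0 : Fˣ) (ho : orderOf x0 = q ^ 2 - 1) :
    ∃ gs : E, gs * σ gs = q ∧ ∀ (τ : E →+* E) (j : ℕ),
      (∀ a, τ (ψ a) = ψ ((x0 ^ j : Fˣ) ^ (q + 1) * a)) → τ gs = (-1) ^ j * gs := by
  classical
  have h3 := hF.three_le
  let k := hF.fix
  have hmem : ∀ a : F, a ∈ k ↔ a ^ q = a := fun a => Iff.rfl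
  have hcard : Fintype.card k = q := by
    rw [← hF.cards.1, ← Fintype.card_subtype]
    exact Fintype.card_congr (Equiv.refl _)
  let φ : AddChar k E := ψ.compAddMonoidHom (k.subtype : k →+ F)
  have hφ : ∀ a : k, φ a = ψ a := fun a => rfl
  have hφ1 : φ ≠ 1 := by
    intro h
    have h1 : ∀ a, ψ a = 1 := by
      intro a
      have hm : a / 2 + (a / 2) ^ q ∈ k := by
        rw [hmem, hF.add, hF.inv, add_comm]
      have h4 : ψ (a / 2 + (a / 2) ^ q) = 1 := by
        have := DFunLike.congr_fun h ⟨_, hm⟩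
        simpa [hφ] using this
      rw [AddChar.map_add_eq_mul, hfr, ← AddChar.map_add_eq_mul] at h4
      have : NeZero (2 : F) := ⟨hF.two⟩
      rwa [add_halves] at h4
    have h5 := hψ (one_ne_zero)
    apply h5
    ext a
    simp [h1]
  have hφp : φ.IsPrimitive := AddChar.IsPrimitive.of_ne_one hφ1
  have hcast : ∀ n : ℤ, ∀ τ : E →+* E, τ (n : E) = n := fun n τ => map_intCast τ n
  let η : MulChar k E := (quadraticChar k).ringHomComp (Int.castRingHom E)
  have h2k : ringChar k ≠ 2 := by
    intro h
    apply hF.two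
    have := ringChar.Nat.cast_ringChar (R := k)
    rw [h] at this
    have := congrArg (k.subtype) this
    rwa [map_natCast, map_zero, Nat.cast_ofNat] at this
  have hη1 : η ≠ 1 := by
    intro h
    apply quadraticChar_ne_one h2k
    exact MulChar.injective_ringHomComp (RingHom.injective_int (Int.castRingHom E)) (h.trans (by
      ext a; simp))
  have hηinv : η⁻¹ = η := by
    apply MulChar.IsQuadratic.inv
    exact (quadraticChar_isQuadratic k).comp _
  refine ⟨gaussSum η φ, ?_, ?_⟩
  · have h1 : σ (gaussSum η φ) = gaussSum η⁻¹ φ⁻¹ := by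
      rw [hηinv, gaussSum, gaussSum, map_sum]
      apply Finset.sum_congr rfl
      intro a _
      rw [map_mul, hφ, hσ, AddChar.inv_apply, hφ]
      congr 1
      simp [η]
    rw [h1, gaussSum_mul_gaussSum_eq_card hη1 hφp, hcard]
  · intro τ j hτ
    have hg : ∀ j : ℕ, ((x0 ^ j : Fˣ) : F) ^ (q + 1) ∈ k := by
      intro j
      rw [hmem, hF.normq]
    have hq0 : quadraticChar k ⟨_, hg 1⟩ = -1 := by
      have hne : (⟨_, hg 1⟩ : k) ≠ 0 := by
        intro h
        have := congrArg (k.subtype) h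
        simp at this
      rw [quadraticChar_neg_one_iff_not_isSquare]
      rintro ⟨b, hb⟩
      have hb' : ((x0 ^ 1 : Fˣ) : F) ^ (q + 1) = (b : F) * b := congrArg (k.subtype) hb
      have hbq : (b : F) ^ q = b := b.2
      have hb0 : (b : F) ≠ 0 := by
        intro h
        rw [h, mul_zero] at hb'
        simp at hb'
      have hb1 : (b : F) ^ (q - 1) = 1 := by
        apply mul_right_cancel₀ hb0
        rw [← pow_succ, Nat.sub_add_cancel (by omega), hbq, one_mul]
      obtain ⟨d, hd⟩ := hF.odd
      have hx : x0 ^ ((q + 1) * d) = 1 := by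
        ext
        rw [pow_mul, Units.val_pow_eq_pow_val, Units.val_pow_eq_pow_val]
        rw [pow_one] at hb'
        rw [hb', ← pow_two, ← pow_mul, (by omega : 2 * d = q - 1), hb1]; simp
      have hdv := orderOf_dvd_of_pow_eq_one hx
      have hlt := Nat.le_of_dvd (by apply Nat.mul_pos <;> omega) hdv
      rw [ho, hF.sq_sub] at hlt
      have := Nat.le_of_mul_le_mul_left hlt (by omega)
      omega
    have hqj : ∀ j, quadraticChar k ⟨_, hg j⟩ = (-1) ^ j := by
      intro j
      rw [← hq0, ← map_pow]
      congr 1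
      ext
      simp only [SubmonoidClass.mk_pow]
      rw [Units.val_pow_eq_pow_val, Units.val_pow_eq_pow_val, ← pow_mul, ← pow_mul, ← pow_mul]
      ring_nf
    let gu : kˣ := Units.mk0 ⟨_, hg j⟩ (by
        intro h
        have := congrArg (k.subtype) h
        simp at this)
    have h1 : τ (gaussSum η φ) = gaussSum η (φ.mulShift gu) := by
      rw [gaussSum, gaussSum, map_sum]
      apply Finset.sum_congr rfl
      intro a _
      rw [map_mul, hφ, hτ, AddChar.mulShift_apply, hφ]
      congr 1
      simp [η]
    have h2 := gaussSum_mulShift η φ gu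
    have h4 : η gu = (-1) ^ j := by
      have : η gu = ((quadraticChar k ⟨_, hg j⟩ : ℤ) : E) := rfl
      rw [this, hqj]; push_cast; rfl
    rw [h4] at h2
    rw [h1, ← h2, ← mul_assoc, ← mul_pow]
    simp
end Paper

set_option linter.unusedSectionVars false
set_option linter.unusedVariables false
namespace Paper

theorem core_alg {L E : Type} [Field L] [Field E] [CharZero E] [Algebra L E] [FiniteDimensional L E] [IsGalois L E]
    (σ : E →+* E) (hσσ : ∀ x, σ (σ x) = x) (hσγ : ∀ (γ : E ≃ₐ[L] E) x, γ (σ x) = σ (γ x))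
    (dH D d1 δ β gs : E) (q h : ℕ) (c : (E ≃ₐ[L] E) → E) (j : (E ≃ₐ[L] E) → ℕ) (hq : q ≠ 0)
    (hH : dH * (D * σ D) = d1 ^ 2 * δ ^ (2 * h)) (h1 : σ d1 = d1) (h2 : σ δ = δ)
    (h3 : ∀ γ : E ≃ₐ[L] E, γ d1 = d1) (h4 : ∀ γ : E ≃ₐ[L] E, γ δ = σ (c γ) * δ * c γ) (h5 : ∀ γ : E ≃ₐ[L] E, γ D = (-1) ^ j γ * D * c γ ^ (2 * h))
    (h6 : ∀ γ : E ≃ₐ[L] E, c γ * β = γ β) (hβ : β ≠ 0) (h7 : gs * σ gs = q) (h8 : ∀ γ : E ≃ₐ[L] E, γ gs = (-1) ^ j γ * gs)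
    (hD : D ≠ 0) (hd : dH ≠ 0) :
    ∃ z : L, z ≠ 0 ∧ dH = q * (algebraMap L E z * σ (algebraMap L E z)) := by
  have hq' : (q : E) ≠ 0 := by exact_mod_cast hq
  have hgs : gs ≠ 0 := by rintro rfl; rw [zero_mul] at h7; exact hq' h7.symm
  have hσ0 : ∀ x, x ≠ 0 → σ x ≠ 0 := fun x hx => (map_ne_zero σ).mpr hx
  have hγ0 : ∀ (γ : E ≃ₐ[L] E) x, x ≠ 0 → γ x ≠ 0 := fun γ x hx => (map_ne_zero γ).mpr hx
  have hc0 : ∀ γ, c γ ≠ 0 := by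
    intro γ h
    have := h6 γ
    rw [h, zero_mul] at this
    exact hγ0 γ β hβ this.symm
  have hs : ∀ i : ℕ, ((-1 : E)) ^ i ≠ 0 := fun i => pow_ne_zero _ (by norm_num)
  let δ' := δ / (β * σ β)
  let D' := D / (β ^ (2 * h) * gs)
  have hδ' : ∀ γ : E ≃ₐ[L] E, γ δ' = δ' := by
    intro γ
    simp only [δ']
    rw [map_div₀, map_mul, hσγ, ← h6, h4, map_mul]
    have := hc0 γ; have := hσ0 _ (hc0 γ); have := hσ0 _ hβ
    field_simp
  have hD' : ∀ γ : E ≃ₐ[L] E, γ D' = D' := by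
    intro γ
    simp only [D']
    rw [map_div₀, map_mul, map_pow, ← h6, h5, h8, mul_pow]
    have := pow_ne_zero (2 * h) (hc0 γ); have := hs (j γ); have := pow_ne_zero (2 * h) hβ
    field_simp
  let z := d1 * δ' ^ h / (D' * q)
  have hz : ∀ γ : E ≃ₐ[L] E, γ z = z := by
    intro γ
    simp only [z]
    rw [map_div₀, map_mul, map_mul, map_pow, hδ', hD', h3, map_natCast]
  obtain ⟨zL, hzL⟩ := (IsGalois.mem_range_algebraMap_iff_fixed (F := L) z).mpr hz
  have key : dH = q * (z * σ z) := by
    have hσδ : σ δ' = δ' := by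
      simp only [δ']; rw [map_div₀, map_mul, hσσ, h2, mul_comm β]
    have e1 : z * σ z = d1 ^ 2 * δ' ^ (2 * h) / (D' * σ D' * q ^ 2) := by
      simp only [z]
      rw [map_div₀, map_mul, map_mul, map_pow, hσδ, h1, map_natCast, pow_mul', sq, sq, sq]
      rw [div_mul_div_comm]; congr 1 <;> ring
    have e2 : D' * σ D' = D * σ D / ((β * σ β) ^ (2 * h) * q) := by
      simp only [D']
      rw [map_div₀, map_mul, map_pow, ← h7, mul_pow, div_mul_div_comm]; congr 1; ring
    rw [e1, e2]
    simp only [δ']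
    rw [div_pow]
    have a1 := hσ0 _ hD
    have a2 : (β * σ β) ^ (2 * h) ≠ 0 := pow_ne_zero _ (mul_ne_zero hβ (hσ0 _ hβ))
    generalize (β * σ β) ^ (2 * h) = B at *
    rw [← eq_div_iff (mul_ne_zero hD a1)] at hH
    rw [hH]
    field_simp
  refine ⟨zL, ?_, by rw [hzL]; exact key⟩
  rintro rfl
  rw [map_zero] at hzL
  rw [← hzL, zero_mul, mul_zero] at key
  exact hd key

theorem cyc {E : Type} [Field E] {n s t r : ℕ} (ε : Fin n ≃ IX s t r) (A : Fin 2 → Matrix (Fin n) (Fin s) E)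
    (b : Matrix (Fin n) (Fin t) E) (T N : Matrix (Fin n) (Fin n) E) (C : Matrix (Fin t) (Fin t) E)
    (hA : ∀ i, N * A i = A i) (hB : ∀ i : ℕ, N * (T ^ i * b) = T ^ (i + 1) * b)
    (hC : T ^ (r + 1) * b = b * C) (hr : Odd r) (ht : Odd t) (hN : N.det = -1)
    (h0 : dd ε A (fun i => T ^ (i : ℕ) * b) ≠ 0) : C.det = 1 := by
  have h1 := dd_mul ε A (fun i => T ^ (i : ℕ) * b) N
  have h2 : dd ε (fun i => N * A i) (fun i : Fin (r + 1) => N * (T ^ (i : ℕ) * b)) =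
     dd ε A (fun i : Fin (r + 1) => (T ^ ((finRotate (r + 1) i : Fin (r + 1)) : ℕ) * b) * (if i = Fin.last r then C else 1)) := by
    congr 1
    · funext i; exact hA i
    · funext i
      rw [hB]
      split_ifs with h
      · rw [h, finRotate_last]
        simp [hC]
      · rw [coe_finRotate_of_ne_last h, Matrix.mul_one]
  rw [h2, dd_mul_right, dd_rot ε A (fun i => T ^ (i : ℕ) * b), hN] at h1
  have h3 : ∏ i : Fin (r + 1), (if i = Fin.last r then C else 1 : Matrix (Fin t) (Fin t) E).det = C.det := by
    rw [Finset.prod_eq_single (Fin.last r)]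
    · simp
    · intro i _ hi; simp [hi]
    · simp
  rw [h3, hr.neg_one_pow, ht.neg_one_pow] at h1
  have : dd ε A (fun i => T ^ (i : ℕ) * b) * (C.det - 1) = 0 := by linear_combination -h1
  rcases mul_eq_zero.mp this with h | h
  · exact absurd h h0
  · linear_combination h

end Paper

set_option linter.unusedSectionVars false
set_option linter.unusedVariables false
namespace Paper

theorem herm_zero {E : Type} [Field E] {n s t : ℕ} (σ : E →+* E) (H e e' : Matrix (Fin n) (Fin n) E)
    (U : Matrix (Fin n) (Fin s) E) (V : Matrix (Fin n) (Fin t) E)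
    (h1 : adj σ e * H = H * e) (h2 : e * U = U) (h3 : e' * V = V) (h4 : e * e' = 0) :
    adj σ U * H * V = 0 := by
  rw [← h2, ← h3, adj_mul, Matrix.mul_assoc (adj σ U), h1, Matrix.mul_assoc, Matrix.mul_assoc H, ← Matrix.mul_assoc e,
    h4]
  simp

theorem herm_same {E : Type} [Field E] {n s t : ℕ} (σ : E →+* E) (H g : Matrix (Fin n) (Fin n) E)
    (U : Matrix (Fin n) (Fin s) E) (V : Matrix (Fin n) (Fin t) E)
    (h1 : adj σ g * H * g = H) : adj σ (g * U) * H * (g * V) = adj σ U * H * V := by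
  conv_rhs => rw [← h1]
  rw [adj_mul]; simp only [Matrix.mul_assoc]

theorem adj_adj {E : Type} [Field E] {α β : Type} (σ : E →+* E) (hσ : ∀ x, σ (σ x) = x) (M : Matrix α β E) :
    adj σ (adj σ M) = M := by
  ext i j; simp [adj, hσ]

theorem det_adj {E : Type} [Field E] {s : ℕ} (σ : E →+* E) (M : Matrix (Fin s) (Fin s) E) :
    (adj σ M).det = σ M.det := by
  rw [adj, Matrix.det_transpose, RingHom.map_det]; rfl

theorem adj_map {E : Type} [Field E] {α β : Type} (σ τ : E →+* E) (h : ∀ x, τ (σ x) = σ (τ x)) (M : Matrix α β E) :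
    (adj σ M).map τ = adj σ (M.map τ) := by
  ext i j; simp [adj, h]

theorem prim_inj {F E : Type} [Field F] [Field E] (ψ : AddChar F E) (hψ : ψ.IsPrimitive) (u v : F)
    (h : ∀ a, ψ (u * a) = ψ (v * a)) : u = v := by
  by_contra hne
  apply hψ (sub_ne_zero.mpr hne)
  ext a
  rw [AddChar.mulShift_apply, sub_mul, sub_eq_add_neg, AddChar.map_add_eq_mul, h, ← AddChar.map_add_eq_mul, add_neg_cancel]
  simp

namespace Dat
variable {q : ℕ} {F G : Type} [Field F] [Group G] (D : Dat q F G) [Fintype F] [DecidableEq F]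
  {E : Type} [Field E] [CharZero E] {n : ℕ} (ρ : G →* Matrix (Fin n) (Fin n) E) (ψ : AddChar F E)

theorem orbit_inj (hF : FD q F) (x0 : Fˣ)
    (ho : orderOf x0 = q ^ 2 - 1) (y0 : F) (hy0 : y0 ≠ 0) (r : ℕ) (hr : q = r + 2) (i j : Fin (r + 1))
    (h : y0 * (((x0 ^ (i : ℕ)) ^ (q + 1))⁻¹ : Fˣ) = y0 * (((x0 ^ (j : ℕ)) ^ (q + 1))⁻¹ : Fˣ)) : i = j := by
  have h1 := Units.ext (mul_left_cancel₀ hy0 h)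
  rw [_root_.inv_inj, ← pow_mul, ← pow_mul, pow_inj_mod, ho, Nat.mod_eq_of_lt, Nat.mod_eq_of_lt] at h1
  · exact Fin.ext (Nat.eq_of_mul_eq_mul_right (Nat.succ_pos q) h1)
  · rw [hF.sq_sub, mul_comm]; apply Nat.mul_lt_mul_of_pos_left _ (Nat.succ_pos q); have := j.2; omega
  · rw [hF.sq_sub, mul_comm]; apply Nat.mul_lt_mul_of_pos_left _ (Nat.succ_pos q); have := i.2; omega

theorem es_e0 (hψ : ψ.IsPrimitive) (ε : ℤ) : D.es ρ ψ ε * D.e ρ ψ 0 = D.es ρ ψ ε := by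
  rw [es, Finset.sum_mul]
  simp only [D.f_e0 ρ ψ hψ]

theorem es_adj (σ : E →+* E) (hσ : ∀ a, σ (ψ a) = ψ (-a)) (H : Matrix (Fin n) (Fin n) E)
    (hH : ∀ g, adj σ (ρ g) * H * ρ g = H) (ε : ℤ) : adj σ (D.es ρ ψ ε) * H = H * D.es ρ ψ ε := by
  rw [es, adj_sum, Finset.sum_mul, Finset.mul_sum]
  apply Finset.sum_congr rfl
  intro s _
  exact D.f_adj ρ ψ σ hσ H hH s

/-- torus acting outside `e 0` -/
def N (x : Fˣ) : Matrix (Fin n) (Fin n) E := ρ (D.t x) * (1 - D.e ρ ψ 0) + D.e ρ ψ 0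

theorem N_mul (hψ : ψ.IsPrimitive) (x y : Fˣ) : D.N ρ ψ (x * y) = D.N ρ ψ x * D.N ρ ψ y := by
  have he := D.e_idem ρ ψ hψ 0
  have h1 := D.t_e0 ρ ψ y
  rw [N, N, N, map_mul, map_mul]
  generalize D.e ρ ψ 0 = e at *
  generalize ρ (D.t x) = X at *
  generalize ρ (D.t y) = Y at *
  have k3 : e * (Y * e) = Y * e := by rw [h1, ← Matrix.mul_assoc, he]
  have : (X * (1 - e) + e) * (Y * (1 - e) + e) = X * Y * (1 - e) + e + X * (e * (Y * e)) - X * (e * Y) + X * e - X * (e * e)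
      + e * Y - e * (Y * e) + (e * e - e) := by noncomm_ring
  rw [this, k3, he, ← h1]
  noncomm_ring

theorem N_one : D.N ρ ψ 1 = 1 := by
  rw [N, map_one, map_one]; simp

theorem det_N (hψ : ψ.IsPrimitive) (x0 : Fˣ) (h : (D.N ρ ψ x0).det = -1) (j : ℕ) :
    (D.N ρ ψ (x0 ^ j)⁻¹).det = (-1) ^ j := by
  have h1 : (D.N ρ ψ (x0 ^ j)).det = (-1) ^ j := by
    induction j with
    | zero => simp [N_one]
    | succ j ih => rw [pow_succ, N_mul _ _ _ hψ, Matrix.det_mul, ih, h, pow_succ]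
  have h2 : (D.N ρ ψ (x0 ^ j)⁻¹).det * (D.N ρ ψ (x0 ^ j)).det = 1 := by
    rw [← Matrix.det_mul, ← N_mul _ _ _ hψ, inv_mul_cancel, N_one, Matrix.det_one]
  rw [h1] at h2
  have h3 : ((-1 : E) ^ j) * (-1) ^ j = 1 := by rw [← mul_pow]; simp
  have : ((-1 : E) ^ j) ≠ 0 := pow_ne_zero _ (by norm_num)
  exact mul_right_cancel₀ this (h2.trans h3.symm)

/-- elements of the torus commuting with `e y0` -/
theorem t_b {m : ℕ} (b : Matrix (Fin n) (Fin m) E) (b' : Matrix (Fin m) (Fin n) E) (y0 : F)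
    (hb : b * b' = D.e ρ ψ y0) (hb' : b' * b = 1) (x : Fˣ) (hx : x ^ (q + 1) = 1) :
    ρ (D.t x) * b = b * (b' * ρ (D.t x) * b) := by
  have h := D.t_e' ρ ψ x y0
  rw [hx] at h
  simp only [inv_one, Units.val_one, mul_one] at h
  rw [← Matrix.mul_assoc, ← Matrix.mul_assoc, hb, ← h, ← hb, Matrix.mul_assoc, Matrix.mul_assoc b, hb', Matrix.mul_one]

theorem kappa {m : ℕ} (hF : FD q F) (b : Matrix (Fin n) (Fin m) E) (b' : Matrix (Fin m) (Fin n) E) (y0 : F)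
    (hb : b * b' = D.e ρ ψ y0) (hb' : b' * b = 1) (x0 : Fˣ) (ho : orderOf x0 = q ^ 2 - 1)
    (hg : ∀ x, ∃ j : ℕ, x = x0 ^ j) (h : (b' * ρ (D.t (x0 ^ (q - 1))) * b).det = 1)
    (x : Fˣ) (hx : x ^ (q + 1) = 1) : (b' * ρ (D.t x) * b).det = 1 := by
  obtain ⟨j, rfl⟩ := hg x
  have hd : q - 1 ∣ j := by
    rw [← pow_mul] at hx
    have := orderOf_dvd_of_pow_eq_one hx
    rw [ho, hF.sq_sub, mul_comm] at this
    exact Nat.dvd_of_mul_dvd_mul_right (Nat.succ_pos q) this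
  obtain ⟨l, rfl⟩ := hd
  have hc := D.t_b ρ ψ b b' y0 hb hb' (x0 ^ (q - 1)) (by
    rw [← pow_mul, mul_comm, ← hF.sq_sub, ← ho, pow_orderOf_eq_one])
  set C := b' * ρ (D.t (x0 ^ (q - 1))) * b
  have h2 : ∀ l : ℕ, ρ (D.t (x0 ^ ((q - 1) * l))) * b = b * C ^ l := by
    intro l
    induction l with
    | zero => simp
    | succ l ih => rw [mul_add, mul_one, pow_add, map_mul, map_mul, Matrix.mul_assoc, hc, ← Matrix.mul_assoc, ih, Matrix.mul_assoc, ← pow_succ]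
  rw [Matrix.mul_assoc, h2, ← Matrix.mul_assoc, hb', Matrix.one_mul, Matrix.det_pow, h, one_pow]
end Dat
end Paper

set_option linter.unusedSectionVars false
set_option linter.unusedVariables false
namespace Paper
namespace Dat
variable {q : ℕ} {F G : Type} [Field F] [Group G] (D : Dat q F G) [Fintype F] [DecidableEq F]
  {E : Type} [Field E] [CharZero E] {n : ℕ} (ρ : G →* Matrix (Fin n) (Fin n) E) (ψ : AddChar F E)

theorem N_act0 {m : ℕ} (x : Fˣ) (V : Matrix (Fin n) (Fin m) E) (h : D.e ρ ψ 0 * V = 0) :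
    D.N ρ ψ x * V = ρ (D.t x) * V := by
  rw [N, Matrix.add_mul, h, Matrix.mul_assoc, Matrix.sub_mul, h]; simp

theorem N_act1 {m : ℕ} (x : Fˣ) (V : Matrix (Fin n) (Fin m) E) (h : D.e ρ ψ 0 * V = V) :
    D.N ρ ψ x * V = V := by
  rw [N, Matrix.add_mul, h, Matrix.mul_assoc, Matrix.sub_mul, h]; simp

theorem map_rho (τ : E →+* E) (hρ : ∀ g, (ρ g).map τ = ρ g) {m : ℕ} (g : G) (V : Matrix (Fin n) (Fin m) E) :
    (ρ g * V).map τ = ρ g * V.map τ := by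
  rw [Matrix.map_mul, hρ]

theorem tinv {m : ℕ} (x : Fˣ) (V : Matrix (Fin n) (Fin m) E) : ρ (D.t x⁻¹) * (ρ (D.t x) * V) = V := by
  rw [← Matrix.mul_assoc, ← map_mul, ← map_mul, inv_mul_cancel, map_one, map_one, Matrix.one_mul]

/-- comparison matrix -/
def Cm {m : ℕ} (b : Matrix (Fin n) (Fin m) E) (b' : Matrix (Fin m) (Fin n) E) (τ : E →+* E) (x : Fˣ) :
    Matrix (Fin m) (Fin m) E := b' * ρ (D.t x) * b.map τ

section
variable {m : ℕ} (b : Matrix (Fin n) (Fin m) E) (b' : Matrix (Fin m) (Fin n) E) (y0 : F)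
    (hb : b * b' = D.e ρ ψ y0) (hb' : b' * b = 1)
include hb hb'

theorem Cm_b (τ : E →+* E) (hρ : ∀ g, (ρ g).map τ = ρ g) (x : Fˣ) (hτ : ∀ a, τ (ψ a) = ψ ((x : F) ^ (q + 1) * a)) :
    b * D.Cm ρ b b' τ x = ρ (D.t x) * b.map τ := by
  have h1 : D.e ρ ψ ((x : F) ^ (q + 1) * y0) * b.map τ = b.map τ := by
    rw [← D.e_gal ρ ψ τ _ hτ hρ, ← Matrix.map_mul, ← hb, Matrix.mul_assoc, hb', Matrix.mul_one]
  have h2 := D.t_e' ρ ψ x ((x : F) ^ (q + 1) * y0)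
  have h3 : (x : F) ^ (q + 1) * y0 * (((x ^ (q + 1))⁻¹ : Fˣ) : F) = y0 := by
    rw [mul_comm, ← mul_assoc, ← Units.val_pow_eq_pow_val, Units.inv_mul, one_mul]
  rw [h3] at h2
  rw [Cm, ← Matrix.mul_assoc, ← Matrix.mul_assoc, hb, ← h2, Matrix.mul_assoc, h1]

theorem b_map (τ : E →+* E) (hρ : ∀ g, (ρ g).map τ = ρ g) (x : Fˣ) (hτ : ∀ a, τ (ψ a) = ψ ((x : F) ^ (q + 1) * a)) :
    b.map τ = ρ (D.t x⁻¹) * (b * D.Cm ρ b b' τ x) := by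
  rw [D.Cm_b ρ ψ b b' y0 hb hb' τ hρ x hτ, tinv]

theorem Cm_ne (τ : E →+* E) (hρ : ∀ g, (ρ g).map τ = ρ g) (x : Fˣ) (hτ : ∀ a, τ (ψ a) = ψ ((x : F) ^ (q + 1) * a)) :
    (D.Cm ρ b b' τ x).det ≠ 0 := by
  have h : (b'.map τ * ρ (D.t x⁻¹) * b) * D.Cm ρ b b' τ x = 1 := by
    rw [Matrix.mul_assoc, Matrix.mul_assoc, ← D.b_map ρ ψ b b' y0 hb hb' τ hρ x hτ, ← Matrix.map_mul, hb']
    simp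
  have := congrArg Matrix.det h
  rw [Matrix.det_mul, Matrix.det_one] at this
  exact right_ne_zero_of_mul_eq_one this

theorem Cm_cocycle (hψ : ψ.IsPrimitive) (hk : ∀ x : Fˣ, x ^ (q + 1) = 1 → (b' * ρ (D.t x) * b).det = 1)
    (τ υ : E →+* E) (hρ : ∀ g, (ρ g).map τ = ρ g) (hρ' : ∀ g, (ρ g).map υ = ρ g) (x y w : Fˣ)
    (hτ : ∀ a, τ (ψ a) = ψ ((x : F) ^ (q + 1) * a))
    (hυ : ∀ a, υ (ψ a) = ψ ((y : F) ^ (q + 1) * a))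
    (hw : ∀ a, τ (υ (ψ a)) = ψ ((w : F) ^ (q + 1) * a)) :
    (D.Cm ρ b b' (τ.comp υ) w).det = τ (D.Cm ρ b b' υ y).det * (D.Cm ρ b b' τ x).det := by
  have h1 : (w * y⁻¹ * x⁻¹) ^ (q + 1) = 1 := by
    have : (w : F) ^ (q + 1) = (x : F) ^ (q + 1) * (y : F) ^ (q + 1) := by
      apply prim_inj ψ hψ
      intro a
      rw [← hw, hυ, hτ, mul_assoc]
    have h2 : w ^ (q + 1) = x ^ (q + 1) * y ^ (q + 1) := by
      ext; push_cast; exact this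
    rw [mul_pow, mul_pow, h2, inv_pow, inv_pow]
    simp
  have h3 : D.Cm ρ b b' (τ.comp υ) w = (b' * ρ (D.t (w * y⁻¹ * x⁻¹)) * b) * D.Cm ρ b b' τ x * (D.Cm ρ b b' υ y).map τ := by
    have e1 : b.map (τ.comp υ) = (b.map υ).map τ := by ext; simp
    rw [Cm, e1, D.b_map ρ ψ b b' y0 hb hb' υ hρ' y hυ, map_rho ρ τ hρ, Matrix.map_mul, D.b_map ρ ψ b b' y0 hb hb' τ hρ x hτ]
    simp only [map_mul, Matrix.mul_assoc]
  rw [h3, Matrix.det_mul, Matrix.det_mul, hk _ h1, one_mul, mul_comm, RingHom.map_det]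
  rfl
end
end Dat
end Paper

set_option linter.unusedSectionVars false
set_option linter.unusedVariables false
namespace Paper
namespace Dat
variable {q : ℕ} {F G : Type} [Field F] [Group G] (D : Dat q F G) [Fintype F] [DecidableEq F]
  {E : Type} [Field E] [CharZero E] {n : ℕ} (ρ : G →* Matrix (Fin n) (Fin n) E) (ψ : AddChar F E)

/-- the frame on `e 0` -/
def AA {s : ℕ} (X : Matrix (Fin n) (Fin s) E) (x0 : Fˣ) : Fin 2 → Matrix (Fin n) (Fin s) E :=
  ![X, ρ (D.t x0) * X]

/-- the frame on the complement -/
def BB {m : ℕ} (b : Matrix (Fin n) (Fin m) E) (x0 : Fˣ) (r : ℕ) : Fin (r + 1) → Matrix (Fin n) (Fin m) E :=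
  fun i => ρ (D.t x0) ^ (i : ℕ) * b

variable {s m r : ℕ} (X : Matrix (Fin n) (Fin s) E) (X' : Matrix (Fin s) (Fin n) E)
  (b : Matrix (Fin n) (Fin m) E) (b' : Matrix (Fin m) (Fin n) E) (y0 : F) (x0 : Fˣ)

theorem fe (e : Matrix (Fin n) (Fin n) E) (hb : b * b' = e) (hb' : b' * b = 1) : e * b = b := by
  rw [← hb, Matrix.mul_assoc, hb', Matrix.mul_one]

theorem e_BB (hb : b * b' = D.e ρ ψ y0) (hb' : b' * b = 1) (i : ℕ) :
    D.e ρ ψ (y0 * (((x0 ^ i) ^ (q + 1))⁻¹ : Fˣ)) * (ρ (D.t x0) ^ i * b) = ρ (D.t x0) ^ i * b := by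
  rw [← map_pow, ← map_pow, ← Matrix.mul_assoc, ← D.t_e', Matrix.mul_assoc, fe b b' _ hb hb']

theorem es_AA0 (hX : X * X' = D.es ρ ψ 1) (hX' : X' * X = 1) : D.es ρ ψ 1 * D.AA ρ X x0 0 = D.AA ρ X x0 0 :=
  fe X X' _ hX hX'

theorem es_AA1 (hodd : Odd q) (hx : quadraticChar F x0 = -1) (hX : X * X' = D.es ρ ψ 1) (hX' : X' * X = 1) :
    D.es ρ ψ (-1) * D.AA ρ X x0 1 = D.AA ρ X x0 1 := by
  have h := D.t_es ρ ψ x0 hodd hx 1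
  change _ * (ρ (D.t x0) * X) = ρ (D.t x0) * X
  rw [← h, Matrix.mul_assoc, tinv, Matrix.mul_assoc, fe X X' _ hX hX']

theorem e0_AA (hψ : ψ.IsPrimitive) (hodd : Odd q) (hx : quadraticChar F x0 = -1) (hX : X * X' = D.es ρ ψ 1)
    (hX' : X' * X = 1) (i : Fin 2) : D.e ρ ψ 0 * D.AA ρ X x0 i = D.AA ρ X x0 i := by
  have h0 := D.es_AA0 ρ ψ X X' x0 hX hX'
  have h1 := D.es_AA1 ρ ψ X X' x0 hodd hx hX hX'
  fin_cases i
  · change D.e ρ ψ 0 * D.AA ρ X x0 0 = D.AA ρ X x0 0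
    rw [← h0, ← Matrix.mul_assoc, D.e0_es ρ ψ hψ]
  · change D.e ρ ψ 0 * D.AA ρ X x0 1 = D.AA ρ X x0 1
    rw [← h1, ← Matrix.mul_assoc, D.e0_es ρ ψ hψ]

theorem e0_BB (hψ : ψ.IsPrimitive) (hy0 : y0 ≠ 0) (hb : b * b' = D.e ρ ψ y0) (hb' : b' * b = 1) (i : ℕ) :
    D.e ρ ψ 0 * (ρ (D.t x0) ^ i * b) = 0 := by
  rw [← D.e_BB ρ ψ b b' y0 x0 hb hb', ← Matrix.mul_assoc, D.e_orth ρ ψ hψ, Matrix.zero_mul]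
  exact (mul_ne_zero hy0 (Units.ne_zero _)).symm

section
variable (hF : FD q F) (hψ : ψ.IsPrimitive) (hx : quadraticChar F x0 = -1)
  (ho : orderOf x0 = q ^ 2 - 1) (hy0 : y0 ≠ 0)
  (hX : X * X' = D.es ρ ψ 1) (hX' : X' * X = 1) (hb : b * b' = D.e ρ ψ y0) (hb' : b' * b = 1)
  (hr : q = r + 2) (ε : Fin n ≃ IX s m r)
include hF hψ hx ho hy0 hX hX' hb hb' hr

theorem ddne (hf0 : D.f ρ ψ 0 = 0) (hfr : ∀ a, ψ (a ^ q) = ψ a) (hy : y0 ^ q = -y0) :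
    dd ε (D.AA ρ X x0) (D.BB ρ b x0 r) ≠ 0 := by
  apply dd_ne_zero ε _ _ ![X', X' * ρ (D.t x0⁻¹)] (fun i => b' * ρ (D.t (x0 ^ (i : ℕ))⁻¹))
  rw [← D.sum_e_orbit ρ ψ hF hψ hfr x0 ho y0 hy0 hy r hr, ← D.es_sum ρ ψ hψ hf0]
  congr 1
  · rw [Fin.sum_univ_two, ← D.t_es ρ ψ x0 hF.odd hx 1, ← hX]
    simp [AA, Matrix.mul_assoc]
  · apply Finset.sum_congr rfl
    intro i _
    rw [← D.t_e, ← hb, BB]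
    simp only [Matrix.mul_assoc, map_pow]

theorem ddherm (σ : E →+* E) (hσ : ∀ a, σ (ψ a) = ψ (-a)) (H : Matrix (Fin n) (Fin n) E)
    (hH : ∀ g, adj σ (ρ g) * H * ρ g = H) :
    H.det * (dd ε (D.AA ρ X x0) (D.BB ρ b x0 r) * σ (dd ε (D.AA ρ X x0) (D.BB ρ b x0 r)))
      = (adj σ X * H * X).det ^ 2 * (adj σ b * H * b).det ^ (r + 1) := by
  have hA0 := D.es_AA0 ρ ψ X X' x0 hX hX'
  have hA1 := D.es_AA1 ρ ψ X X' x0 hF.odd hx hX hX'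
  have hA := D.e0_AA ρ ψ X X' x0 hψ hF.odd hx hX hX'
  have hB := D.e_BB ρ ψ b b' y0 x0 hb hb'
  have ha := D.e_adj ρ ψ σ hσ H hH
  have has := D.es_adj ρ ψ σ hσ H hH
  apply dd_herm
  · intro i j
    fin_cases i <;> fin_cases j
    · simp [AA]
    · exact herm_zero σ H _ _ _ _ (has 1) hA0 hA1 (D.es_orth ρ ψ hψ _ _ (by norm_num))
    · exact herm_zero σ H _ _ _ _ (has (-1)) hA1 hA0 (D.es_orth ρ ψ hψ _ _ (by norm_num))
    · simpa [AA] using herm_same σ H _ X X (hH (D.t x0))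
  · intro i j
    split_ifs with h
    · subst h
      rw [BB, ← map_pow]
      exact herm_same σ H _ b b (hH _)
    · exact herm_zero σ H _ _ _ _ (ha _) (hB i) (hB j) (D.e_orth ρ ψ hψ fun h' => h (orbit_inj hF x0 ho y0 hy0 r hr i j h'))
  · intro i j
    exact herm_zero σ H _ _ _ _ (ha 0) (hA i) (hB j) (D.e_orth ρ ψ hψ (mul_ne_zero hy0 (Units.ne_zero _)).symm)
  · intro i j
    exact herm_zero σ H _ _ _ _ (ha _) (hB i) (hA j) (D.e_orth ρ ψ hψ (mul_ne_zero hy0 (Units.ne_zero _)))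

theorem kap1 (ε' : Fin n ≃ IX s m r) (hf0 : D.f ρ ψ 0 = 0) (hfr : ∀ a, ψ (a ^ q) = ψ a) (hy : y0 ^ q = -y0)
    (hg : ∀ x, ∃ j : ℕ, x = x0 ^ j) (hmo : Odd m) (hN : (D.N ρ ψ x0).det = -1)
    (x : Fˣ) (hxx : x ^ (q + 1) = 1) : (b' * ρ (D.t x) * b).det = 1 := by
  apply D.kappa ρ ψ hF b b' y0 hb hb' x0 ho hg _ x hxx
  have hq1 : q - 1 = r + 1 := by omega
  have hro : Odd r := by
    have := hF.odd
    rw [hr] at this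
    simpa [Nat.odd_add, Nat.even_iff, Nat.odd_iff] using this
  apply cyc ε' (D.AA ρ X x0) b (ρ (D.t x0)) (D.N ρ ψ x0) _ _ _ _ hro hmo hN
  · exact D.ddne ρ ψ X X' b b' y0 x0 hF hψ hx ho hy0 hX hX' hb hb' hr ε' hf0 hfr hy
  · intro i
    exact D.N_act1 ρ ψ x0 _ (D.e0_AA ρ ψ X X' x0 hψ hF.odd hx hX hX' i)
  · intro i
    rw [D.N_act0 ρ ψ x0 _ (D.e0_BB ρ ψ b b' y0 x0 hψ hy0 hb hb' i), ← Matrix.mul_assoc, pow_succ']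
  · rw [← map_pow, ← map_pow, hq1]
    apply D.t_b ρ ψ b b' y0 hb hb'
    rw [← hq1, ← pow_mul, mul_comm, ← hF.sq_sub, ← ho, pow_orderOf_eq_one]

theorem ddgal (hN : (D.N ρ ψ x0).det = -1) (τ : E →+* E) (hρ : ∀ g, (ρ g).map τ = ρ g)
    (hXτ : X.map τ = X) (j : ℕ) (hτ : ∀ a, τ (ψ a) = ψ (((x0 ^ j : Fˣ) : F) ^ (q + 1) * a)) :
    τ (dd ε (D.AA ρ X x0) (D.BB ρ b x0 r)) = (-1) ^ j * dd ε (D.AA ρ X x0) (D.BB ρ b x0 r)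
      * (D.Cm ρ b b' τ (x0 ^ j)).det ^ (r + 1) := by
  rw [dd_map]
  have h1 : (fun i => (D.AA ρ X x0 i).map τ) = fun i => D.N ρ ψ (x0 ^ j)⁻¹ * D.AA ρ X x0 i := by
    funext i
    rw [D.N_act1 ρ ψ _ _ (D.e0_AA ρ ψ X X' x0 hψ hF.odd hx hX hX' i)]
    fin_cases i
    · exact hXτ
    · change (ρ (D.t x0) * X).map τ = ρ (D.t x0) * X
      rw [map_rho ρ τ hρ, hXτ]
  have h2 : (fun i => (D.BB ρ b x0 r i).map τ)
      = fun i => D.N ρ ψ (x0 ^ j)⁻¹ * (D.BB ρ b x0 r i * D.Cm ρ b b' τ (x0 ^ j)) := by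
    funext i
    rw [← Matrix.mul_assoc, BB, D.N_act0 ρ ψ _ _ (D.e0_BB ρ ψ b b' y0 x0 hψ hy0 hb hb' i), ← map_pow, ← map_pow, map_rho ρ τ hρ,
      D.b_map ρ ψ b b' y0 hb hb' τ hρ _ hτ]
    simp only [← Matrix.mul_assoc, ← map_mul]
    rw [mul_comm (x0 ^ (i : ℕ))]
  rw [h1, h2, dd_mul, dd_mul_right, D.det_N ρ ψ hψ x0 hN]
  simp [mul_assoc]
end
end Dat
end Paper

set_option linter.unusedSectionVars false
set_option linter.unusedVariables false
namespace Paper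

theorem fixed_mat {L E : Type} [Field L] [Field E] [Algebra L E] [FiniteDimensional L E] [IsGalois L E]
    {a b : Type} (M : Matrix a b E) (h : ∀ γ : E ≃ₐ[L] E, M.map (γ : E → E) = M) :
    ∃ M0 : Matrix a b L, M0.map (algebraMap L E) = M := by
  have : ∀ i j, ∃ x : L, algebraMap L E x = M i j := by
    intro i j
    rw [← Set.mem_range, IsGalois.mem_range_algebraMap_iff_fixed]
    intro γ
    exact congrFun (congrFun (h γ) i) j
  choose f hf using this
  exact ⟨Matrix.of f, by ext i j; simp [hf]⟩

theorem factor_fixed {L E : Type} [Field L] [Field E] [CharZero L] [Algebra L E] [FiniteDimensional L E] [IsGalois L E]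
    {n m : ℕ} (e : Matrix (Fin n) (Fin n) E) (h : ∀ γ : E ≃ₐ[L] E, e.map (γ : E → E) = e)
    (he : e * e = e) (ht : e.trace = (m : ℕ)) :
    ∃ (X : Matrix (Fin n) (Fin m) E) (X' : Matrix (Fin m) (Fin n) E), X * X' = e ∧ X' * X = 1 ∧
      ∀ γ : E ≃ₐ[L] E, X.map (γ : E → E) = X := by
  obtain ⟨e0, rfl⟩ := fixed_mat e h
  have inj : Function.Injective (algebraMap L E) := (algebraMap L E).injective
  have he0 : e0 * e0 = e0 := by
    rw [← Matrix.map_mul] at he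
    exact Matrix.map_injective inj he
  have ht0 : e0.trace = (m : ℕ) := by
    apply inj
    rw [map_natCast, ← ht]
    simp [Matrix.trace]
  obtain ⟨b, b', h1, h2⟩ := idem_factor_trace e0 he0 ht0
  refine ⟨b.map (algebraMap L E), b'.map (algebraMap L E), ?_, ?_, ?_⟩
  · rw [← Matrix.map_mul, h1]
  · rw [← Matrix.map_mul, h2]; simp
  · intro γ; ext i j; simp

theorem h90 {L E : Type} [Field L] [Field E] [Algebra L E] [FiniteDimensional L E]
    (c : (E ≃ₐ[L] E) → E) (hc : ∀ γ, c γ ≠ 0) (h : ∀ γ τ, c (γ * τ) = γ (c τ) * c γ) :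
    ∃ β : E, β ≠ 0 ∧ ∀ γ, c γ * β = γ β := by
  obtain ⟨x, hx⟩ := groupCohomology.isMulCoboundary₁_of_isMulCocycle₁_of_aut_to_units
    (fun γ => Units.mk0 (c γ) (hc γ)) (by
      intro γ τ
      ext
      simpa using h γ τ)
  refine ⟨x, x.ne_zero, fun γ => ?_⟩
  have := congrArg Units.val (div_eq_iff_eq_mul.mp (hx γ))
  simpa using this.symm

theorem num_n (q r : ℕ) (hr : q = r + 2) (ho : Odd r) : (q-1)*(q^2-q+1) = (q^2-1)/2 * 2 + q*(q-2) * (r+1) := by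
  obtain ⟨l, rfl⟩ := ho
  subst hr
  have h1 : (2*l+1+2)^2 - 1 = (2*l^2+6*l+4) * 2 := by
    rw [show (2*l+1+2)^2 = (2*l^2+6*l+4) * 2 + 1 by ring]; simp
  have h2 : (2*l+1+2)^2 - (2*l+1+2) = 4*l^2+10*l+6 := by
    rw [show (2*l+1+2)^2 = (4*l^2+10*l+6) + (2*l+1+2) by ring]; simp
  rw [h1, h2, Nat.mul_div_cancel _ (by norm_num : 0 < 2)]
  simp only [Nat.add_sub_cancel, show 2*l+1+2-1 = 2*l+2 by omega]
  ring

namespace Dat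
variable {q : ℕ} {F G : Type} [Field F] [Group G] (D : Dat q F G) [Fintype F] [DecidableEq F]

theorem core {L E : Type} [Field L] [Field E] [CharZero L] [CharZero E] [Algebra L E] [FiniteDimensional L E]
    [IsGalois L E] {n : ℕ}
    (ρ : G →* Matrix (Fin n) (Fin n) E) (ψ : AddChar F E)
    (hn : n = (q-1)*(q^2-q+1)) (hF : FD q F) (hψ : ψ.IsPrimitive) (hfr : ∀ a, ψ (a ^ q) = ψ a)
    (σ : E →+* E) (hσσ : ∀ x, σ (σ x) = x) (hσγ : ∀ (γ : E ≃ₐ[L] E) x, γ (σ x) = σ (γ x))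
    (hσψ : ∀ a, σ (ψ a) = ψ (-a))
    (hγψ : ∀ γ : E ≃ₐ[L] E, ∃ g : F, g ≠ 0 ∧ g ^ q = g ∧ ∀ a, γ (ψ a) = ψ (g * a))
    (hγρ : ∀ (γ : E ≃ₐ[L] E) g, (ρ g).map γ = ρ g)
    (H : Matrix (Fin n) (Fin n) E) (hγH : ∀ γ : E ≃ₐ[L] E, H.map γ = H) (hHd : H.det ≠ 0)
    (hHa : adj σ H = H) (hH : ∀ g, adj σ (ρ g) * H * ρ g = H)
    (hf0 : D.f ρ ψ 0 = 0) (hA : (D.e ρ ψ 0).trace = (q ^ 2 - 1 : ℕ))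
    (hm : ∀ y, y ≠ 0 → y ^ q = -y → (D.e ρ ψ y).trace = (q * (q - 2) : ℕ))
    (hdet : ∀ x0 : Fˣ, orderOf x0 = q ^ 2 - 1 → (ρ (D.t x0) * (1 - D.e ρ ψ 0) + D.e ρ ψ 0).det = -1) :
    ∃ z : L, z ≠ 0 ∧ H.det = (q : E) * (algebraMap L E z * σ (algebraMap L E z)) := by
  obtain ⟨x0, ho, hg⟩ := hF.gen
  obtain ⟨y0, hy0, hy⟩ := Dat.exists_anti hF
  have h3 := hF.three_le
  obtain ⟨r, hr⟩ : ∃ r, q = r + 2 := ⟨q - 2, by omega⟩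
  have hro : Odd r := by
    have := hF.odd
    rw [hr] at this
    simpa [Nat.odd_add, Nat.even_iff, Nat.odd_iff] using this
  have hx := qc_gen hF.two x0 hg
  have hN : (D.N ρ ψ x0).det = -1 := hdet x0 ho
  have hj : ∀ γ : E ≃ₐ[L] E, ∃ j : ℕ, ∀ a, γ (ψ a) = ψ (((x0 ^ j : Fˣ) : F) ^ (q + 1) * a) := by
    intro γ
    obtain ⟨g, g0, gq, hg'⟩ := hγψ γ
    obtain ⟨x, hx⟩ := hF.norm_surj g g0 gq
    obtain ⟨j, rfl⟩ := hg x
    exact ⟨j, by rw [hx]; exact hg'⟩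
  choose j hj using hj
  have hesγ : ∀ γ : E ≃ₐ[L] E, (D.es ρ ψ 1).map γ = D.es ρ ψ 1 := by
    intro γ
    refine D.es_gal ρ ψ (γ : E →+* E) ((x0 ^ j γ) ^ (q + 1)) ?_ ?_ (hγρ γ) 1
    · obtain ⟨l, hl⟩ := hF.odd.add_one
      rw [hl, ← two_mul, mul_comm, pow_mul]
      push_cast
      apply quadraticChar_sq_one'
      exact pow_ne_zero _ (pow_ne_zero _ x0.ne_zero)
    · intro a; simpa using hj γ a
  obtain ⟨X, X', hX, hX', hXγ⟩ := factor_fixed _ hesγ (D.es_idem ρ ψ hψ 1) (D.es_trace ρ ψ hF hψ hf0 x0 hx hA)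
  obtain ⟨b, b', hb, hb'⟩ := idem_factor_trace _ (D.e_idem ρ ψ hψ y0) (hm y0 hy0 hy)
  have hmo : Odd (q * (q - 2)) := by
    apply hF.odd.mul
    rw [hr]; simpa using hro
  have ε : Fin n ≃ IX ((q^2-1)/2) (q*(q-2)) r := by
    apply Fintype.equivOfCardEq
    rw [hn, num_n q r hr hro]
    simp
  have hk := D.kap1 ρ ψ X X' b b' y0 x0 hF hψ hx ho hy0 hX hX' hb hb' hr ε hf0 hfr hy hg hmo hN
  have hdd := D.ddne ρ ψ X X' b b' y0 x0 hF hψ hx ho hy0 hX hX' hb hb' hr ε hf0 hfr hy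
  have hhe := D.ddherm ρ ψ X X' b b' y0 x0 hF hψ hx ho hy0 hX hX' hb hb' hr ε σ hσψ H hH
  have hga := fun γ : E ≃ₐ[L] E => D.ddgal ρ ψ X X' b b' y0 x0 hF hψ hx ho hy0 hX hX' hb hb' hr ε hN (γ : E →+* E) (hγρ γ)
    (hXγ γ) (j γ) (hj γ)
  obtain ⟨gs, hgs, hgs'⟩ := hF.gauss ψ hψ hfr σ hσψ x0 ho
  let c : (E ≃ₐ[L] E) → E := fun γ => (D.Cm ρ b b' (γ : E →+* E) (x0 ^ j γ)).det
  obtain ⟨β, hβ, hcβ⟩ := h90 c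
    (fun γ => D.Cm_ne ρ ψ b b' y0 hb hb' (γ : E →+* E) (hγρ γ) _ (hj γ))
    (fun γ τ => by
      have := D.Cm_cocycle ρ ψ b b' y0 hb hb' hψ hk (γ : E →+* E) (τ : E →+* E) (hγρ γ) (hγρ τ) _ _ (x0 ^ j (γ * τ)) (hj γ) (hj τ)
        (hj (γ * τ))
      exact this)
  obtain ⟨h, hh⟩ : ∃ h, r + 1 = 2 * h := by
    obtain ⟨l, hl⟩ := hro; exact ⟨l + 1, by omega⟩
  rw [hh] at hhe
  have hsadj : ∀ {m : ℕ} (U : Matrix (Fin n) (Fin m) E), σ (adj σ U * H * U).det = (adj σ U * H * U).det := by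
    intro m U
    rw [← det_adj, adj_mul, adj_mul, hHa, adj_adj σ hσσ, Matrix.mul_assoc]
  have hmapU : ∀ {m : ℕ} (γ : E ≃ₐ[L] E) (U : Matrix (Fin n) (Fin m) E),
      γ (adj σ U * H * U).det = (adj σ (U.map γ) * H * U.map γ).det := by
    intro m γ U
    have e1 : γ (adj σ U * H * U).det = ((adj σ U * H * U).map (γ : E →+* E)).det := RingHom.map_det (γ : E →+* E) _
    rw [e1, Matrix.map_mul, Matrix.map_mul, adj_map σ (γ : E →+* E) (hσγ γ)]
    change (adj σ (U.map γ) * H.map γ * U.map γ).det = _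
    rw [hγH]
  refine core_alg σ hσσ hσγ H.det _ _ _ β gs q h c j (by omega) hhe (hsadj X) (hsadj b) ?_ ?_ ?_ hcβ hβ hgs ?_ hdd hHd
  · intro γ; rw [hmapU, hXγ]
  · intro γ
    rw [hmapU]
    have := D.b_map ρ ψ b b' y0 hb hb' (γ : E →+* E) (hγρ γ) _ (hj γ)
    change b.map γ = _ at this
    rw [this, herm_same σ H _ _ _ (hH _), adj_mul]
    have e2 : adj σ (D.Cm ρ b b' (γ : E →+* E) (x0 ^ j γ)) * adj σ b * H * (b * D.Cm ρ b b' (γ : E →+* E) (x0 ^ j γ))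
      = adj σ (D.Cm ρ b b' (γ : E →+* E) (x0 ^ j γ)) * (adj σ b * H * b) * D.Cm ρ b b' (γ : E →+* E) (x0 ^ j γ) := by
      simp only [Matrix.mul_assoc]
    rw [e2, Matrix.det_mul, Matrix.det_mul, det_adj]
  · intro γ
    have := hga γ
    rw [hh] at this
    exact this
  · intro γ
    exact hgs' (γ : E →+* E) (j γ) (hj γ)
end Dat
end Paper

set_option linter.unusedSectionVars false
set_option linter.unusedVariables false
namespace Paper

section
variable {n : ℕ} {G : Type} [Group G] [Fintype G]

theorem schur_orth (hn : 0 < n) (ρ : G →* Matrix (Fin n) (Fin n) ℂ)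
    (hirr : ∀ W : Submodule ℂ (Fin n → ℂ), (∀ g, ∀ v ∈ W, ρ g *ᵥ v ∈ W) → W = ⊥ ∨ W = ⊤) :
    ∑ g, (ρ g).trace * (ρ g⁻¹).trace = (Fintype.card G : ℂ) := by
  have hn0 : (n : ℂ) ≠ 0 := by exact_mod_cast hn.ne'
  have key : ∀ i j, ∑ g, ρ g i i * ρ g⁻¹ j j = if i = j then (Fintype.card G : ℂ) / n else 0 := by
    intro i j
    let T : Matrix (Fin n) (Fin n) ℂ := ∑ g, ρ g * Matrix.single i j 1 * ρ g⁻¹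
    obtain ⟨l, hl⟩ := schur_scalar hn ρ hirr T (by
      intro h
      simp only [T, Finset.sum_mul, Finset.mul_sum]
      rw [← Equiv.sum_comp (Equiv.mulLeft h)]
      apply Finset.sum_congr rfl
      intro g _
      simp only [Equiv.coe_mulLeft, _root_.mul_inv_rev, map_mul, Matrix.mul_assoc]
      rw [← map_mul ρ h⁻¹ h, inv_mul_cancel, map_one, Matrix.mul_one])
    have ht : T.trace = if i = j then (Fintype.card G : ℂ) else 0 := by
      have : ∀ g, (ρ g * Matrix.single i j 1 * ρ g⁻¹).trace = if i = j then (1 : ℂ) else 0 := by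
        intro g
        rw [Matrix.trace_mul_comm, ← Matrix.mul_assoc, ← map_mul, inv_mul_cancel, map_one, Matrix.one_mul]
        split_ifs with h
        · subst h; simp
        · simp [Matrix.trace_single_eq_of_ne _ _ _ h]
      simp only [T, Matrix.trace_sum, this]
      simp
    have h2 : T i j = ∑ g, ρ g i i * ρ g⁻¹ j j := by
      simp only [T, Matrix.sum_apply]
      apply Finset.sum_congr rfl
      intro g _
      rw [Matrix.mul_assoc, Matrix.mul_apply]
      simp only [Matrix.single, Matrix.mul_apply, Matrix.of_apply, ite_and, ite_mul, one_mul, zero_mul]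
      simp
    rw [← h2, hl]
    rw [hl] at ht
    simp only [Matrix.trace_smul, Matrix.trace_one, Fintype.card_fin, smul_eq_mul] at ht
    simp only [Matrix.smul_apply, Matrix.one_apply, smul_eq_mul]
    split_ifs with h
    · rw [if_pos h] at ht; rw [← ht]; field_simp
    · simp
  calc ∑ g, (ρ g).trace * (ρ g⁻¹).trace = ∑ g, ∑ i, ∑ j, ρ g i i * ρ g⁻¹ j j := by
        simp only [Matrix.trace, Matrix.diag, Finset.sum_mul_sum]
    _ = ∑ i, ∑ j, ∑ g, ρ g i i * ρ g⁻¹ j j := by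
        rw [Finset.sum_comm]
        apply Finset.sum_congr rfl
        intro i _
        rw [Finset.sum_comm]
    _ = _ := by
        simp only [key]
        simp
        field_simp

theorem irr_transfer (hn : 0 < n) (ρ0 ρ : G →* Matrix (Fin n) (Fin n) ℂ)
    (hirr : ∀ W : Submodule ℂ (Fin n → ℂ), (∀ g, ∀ v ∈ W, ρ0 g *ᵥ v ∈ W) → W = ⊥ ∨ W = ⊤)
    (hχ : ∀ g, (ρ g).trace = (ρ0 g).trace) :
    ∀ W : Submodule ℂ (Fin n → ℂ), (∀ g, ∀ v ∈ W, ρ g *ᵥ v ∈ W) → W = ⊥ ∨ W = ⊤ := by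
  let T : Fin n → Fin n → Matrix (Fin n) (Fin n) ℂ := fun i j => ∑ g, ρ g * Matrix.single i j 1 * ρ0 g⁻¹
  have hT : ∀ i j h, ρ h * T i j = T i j * ρ0 h := by
    intro i j h
    simp only [T, Finset.sum_mul, Finset.mul_sum]
    symm
    rw [← Equiv.sum_comp (Equiv.mulLeft h)]
    apply Finset.sum_congr rfl
    intro g _
    simp only [Equiv.coe_mulLeft, _root_.mul_inv_rev, map_mul, Matrix.mul_assoc]
    rw [← map_mul ρ0 h⁻¹ h, inv_mul_cancel, map_one, Matrix.mul_one]
  have hex : ∃ i j, T i j ≠ 0 := by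
    by_contra hc
    push Not at hc
    have h2 : ∀ i j, T i j i j = ∑ g, ρ g i i * ρ0 g⁻¹ j j := by
      intro i j
      simp only [T, Matrix.sum_apply]
      apply Finset.sum_congr rfl
      intro g _
      rw [Matrix.mul_assoc, Matrix.mul_apply]
      simp only [Matrix.single, Matrix.mul_apply, Matrix.of_apply, ite_and, ite_mul, one_mul, zero_mul]
      simp
    have h3 := schur_orth hn ρ0 hirr
    simp only [← hχ] at h3
    have h4 : ∑ g, (ρ g).trace * (ρ0 g⁻¹).trace = ∑ i, ∑ j, T i j i j := by
      simp only [h2, Matrix.trace, Matrix.diag, Finset.sum_mul_sum]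
      rw [Finset.sum_comm]
      apply Finset.sum_congr rfl
      intro i _
      rw [Finset.sum_comm]
    simp only [← hχ, hc] at h4
    rw [h3] at h4
    simp at h4
  obtain ⟨i, j, hne⟩ := hex
  replace hT := hT i j
  generalize T i j = M at hne hT
  have hinj : Function.Injective (Matrix.toLin' M) := by
    rw [← LinearMap.ker_eq_bot]
    rcases hirr (LinearMap.ker (Matrix.toLin' M)) (by
      intro g v hv
      rw [LinearMap.mem_ker, Matrix.toLin'_apply] at hv ⊢
      rw [Matrix.mulVec_mulVec, ← hT, ← Matrix.mulVec_mulVec, hv, Matrix.mulVec_zero]) with h | h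
    · exact h
    · exfalso
      apply hne
      rw [LinearMap.ker_eq_top] at h
      exact Matrix.toLin'.injective (by rw [h, map_zero])
  have hsurj := LinearMap.surjective_of_injective hinj
  intro W hW
  rcases hirr (W.comap (Matrix.toLin' M)) (by
    intro g v hv
    rw [Submodule.mem_comap, Matrix.toLin'_apply] at hv ⊢
    rw [Matrix.mulVec_mulVec, ← hT, ← Matrix.mulVec_mulVec]
    exact hW g _ hv) with h | h
  · left
    rw [← Submodule.map_comap_eq_of_surjective hsurj W, h, Submodule.map_bot]
  · right
    rw [← Submodule.map_comap_eq_of_surjective hsurj W, h, Submodule.map_top, LinearMap.range_eq_top.mpr hsurj]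

theorem conj_trace (ρ : G →* Matrix (Fin n) (Fin n) ℂ) (H : Matrix (Fin n) (Fin n) ℂ) (hd : IsUnit H.det)
    (hH : ∀ g, (ρ g)ᴴ * H * ρ g = H) (g : G) : (starRingEnd ℂ) (ρ g).trace = (ρ g⁻¹).trace := by
  have h1 : (ρ g)ᴴ * H = H * ρ g⁻¹ := by
    conv_rhs => rw [← hH g]
    rw [Matrix.mul_assoc, ← map_mul, mul_inv_cancel, map_one, Matrix.mul_one]
  have h2 : (ρ g)ᴴ = H * ρ g⁻¹ * H⁻¹ := by
    rw [← h1, Matrix.mul_assoc, Matrix.mul_nonsing_inv _ hd, Matrix.mul_one]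
  rw [starRingEnd_apply, ← Matrix.trace_conjTranspose, h2, Matrix.trace_mul_comm, ← Matrix.mul_assoc,
    Matrix.nonsing_inv_mul _ hd, Matrix.one_mul]
end
end Paper

set_option linter.unusedSectionVars false
set_option linter.unusedVariables false
namespace Paper

section cyc
variable {L : Subfield ℂ} {p : ℕ} [NeZero p] {ζ : ℂ}

theorem cyc_ext (hζ : IsPrimitiveRoot ζ p) : IsCyclotomicExtension {p} L (IntermediateField.adjoin L {ζ}) := by
  have hi : IsIntegral L ζ := ⟨Polynomial.X ^ p - 1, Polynomial.monic_X_pow_sub_C 1 (NeZero.ne p), by simp [hζ.pow_eq_one]⟩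
  change IsCyclotomicExtension {p} L (IntermediateField.adjoin L {ζ}).toSubalgebra
  rw [IntermediateField.adjoin_simple_toSubalgebra_of_isAlgebraic hi.isAlgebraic]
  exact hζ.adjoin_isCyclotomicExtension L

/-- `E = L(ζ)` -/
abbrev EE (L : Subfield ℂ) (ζ : ℂ) := IntermediateField.adjoin L {ζ}

theorem conj_mem (hL : ∀ x ∈ L, (starRingEnd ℂ) x ∈ L) (hζ : (starRingEnd ℂ) ζ = ζ⁻¹) (x : ℂ) (hx : x ∈ EE L ζ) :
    (starRingEnd ℂ) x ∈ EE L ζ := by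
  induction hx using IntermediateField.adjoin_induction with
  | mem x hx =>
    rw [Set.mem_singleton_iff] at hx
    rw [hx, hζ]
    exact inv_mem (IntermediateField.mem_adjoin_simple_self L ζ)
  | algebraMap x => exact (EE L ζ).algebraMap_mem ⟨_, hL x x.2⟩
  | add x y _ _ h1 h2 => rw [map_add]; exact add_mem h1 h2
  | inv x _ h => rw [map_inv₀]; exact inv_mem h
  | mul x y _ _ h1 h2 => rw [map_mul]; exact mul_mem h1 h2

/-- complex conjugation on `E` -/
def sig (hL : ∀ x ∈ L, (starRingEnd ℂ) x ∈ L) (hζ : (starRingEnd ℂ) ζ = ζ⁻¹) : EE L ζ →+* EE L ζ :=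
  RingHom.codRestrict ((starRingEnd ℂ).comp (algebraMap (EE L ζ) ℂ)) (EE L ζ) (fun x => conj_mem hL hζ x x.2)

theorem sig_val (hL : ∀ x ∈ L, (starRingEnd ℂ) x ∈ L) (hζ : (starRingEnd ℂ) ζ = ζ⁻¹) (x : EE L ζ) :
    ((sig hL hζ x : EE L ζ) : ℂ) = (starRingEnd ℂ) x := rfl

theorem sig_sig (hL : ∀ x ∈ L, (starRingEnd ℂ) x ∈ L) (hζ : (starRingEnd ℂ) ζ = ζ⁻¹) (x : EE L ζ) :
    sig hL hζ (sig hL hζ x) = x := by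
  apply Subtype.ext; simp [sig_val]

/-- the root of unity in `E` -/
def zE (L : Subfield ℂ) (ζ : ℂ) : EE L ζ := ⟨ζ, IntermediateField.mem_adjoin_simple_self L ζ⟩

theorem gal_z (hζ : IsPrimitiveRoot ζ p) (γ : EE L ζ ≃ₐ[L] EE L ζ) : ∃ m : ℕ, m.Coprime p ∧ γ (zE L ζ) = zE L ζ ^ m := by
  have h1 : IsPrimitiveRoot (zE L ζ) p := by
    rw [← IsPrimitiveRoot.coe_submonoidClass_iff]; exact hζ
  have h2 : IsPrimitiveRoot (γ (zE L ζ)) p := h1.map_of_injective γ.injective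
  obtain ⟨m, hm, e⟩ := h1.isPrimitiveRoot_iff.mp h2
  exact ⟨m, e.1, e.2.symm⟩

theorem sig_gal (hL : ∀ x ∈ L, (starRingEnd ℂ) x ∈ L) (hζ : (starRingEnd ℂ) ζ = ζ⁻¹) (hp : IsPrimitiveRoot ζ p)
    (γ : EE L ζ ≃ₐ[L] EE L ζ) (x : EE L ζ) : γ (sig hL hζ x) = sig hL hζ (γ x) := by
  obtain ⟨x, hx⟩ := x
  have hz : sig hL hζ (zE L ζ) = (zE L ζ)⁻¹ := by
    apply Subtype.ext; rw [sig_val]; simpa [zE] using hζ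
  induction hx using IntermediateField.adjoin_induction with
  | mem x hx =>
    rw [Set.mem_singleton_iff] at hx
    subst hx
    change γ (sig hL hζ (zE L x)) = sig hL hζ (γ (zE L x))
    obtain ⟨m, -, hm⟩ := gal_z hp γ
    rw [hz, map_inv₀, hm, map_pow, hz, inv_pow]
  | algebraMap x =>
    have e1 : (⟨algebraMap L ℂ x, (EE L ζ).algebraMap_mem x⟩ : EE L ζ) = algebraMap L (EE L ζ) x := rfl
    have e2 : sig hL hζ (algebraMap L (EE L ζ) x) = algebraMap L (EE L ζ) ⟨_, hL x x.2⟩ := Subtype.ext rfl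
    change γ (sig hL hζ (algebraMap L (EE L ζ) x)) = sig hL hζ (γ (algebraMap L (EE L ζ) x))
    rw [e2, AlgEquiv.commutes, AlgEquiv.commutes, e2]
  | add x y hx hy h1 h2 =>
    have : (⟨x + y, add_mem hx hy⟩ : EE L ζ) = ⟨x, hx⟩ + ⟨y, hy⟩ := rfl
    change γ (sig hL hζ (⟨x, hx⟩ + ⟨y, hy⟩)) = sig hL hζ (γ (⟨x, hx⟩ + ⟨y, hy⟩))
    simp only [map_add, h1, h2]
  | inv x hx h =>
    change γ (sig hL hζ (⟨x, hx⟩⁻¹)) = sig hL hζ (γ (⟨x, hx⟩⁻¹))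
    simp only [map_inv₀, h]
  | mul x y hx hy h1 h2 =>
    change γ (sig hL hζ (⟨x, hx⟩ * ⟨y, hy⟩)) = sig hL hζ (γ (⟨x, hx⟩ * ⟨y, hy⟩))
    simp only [map_mul, h1, h2]
end cyc

section psi
variable {p : ℕ} [Fact p.Prime] {F : Type} [Field F] [Fintype F] [CharP F p]

theorem exists_psi {E : Type} [Field E] (z : E) (hz : IsPrimitiveRoot z p) (k : ℕ) :
    ∃ ψ : AddChar F E, ψ.IsPrimitive ∧ (∀ a, ψ (a ^ (p ^ k)) = ψ a) ∧
      (∀ (τ : E →+* E), τ z = z⁻¹ → ∀ a, τ (ψ a) = ψ (-a)) ∧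
      ∀ (τ : E →+* E) (m : ℕ), τ z = z ^ m → ∀ a, τ (ψ a) = ψ ((m : F) * a) := by
  let _ : Algebra (ZMod p) F := ZMod.algebra F p
  have : NeZero p := ⟨(Fact.out : p.Prime).ne_zero⟩
  let tr : F →+ ZMod p := (Algebra.trace (ZMod p) F).toAddMonoidHom
  let ψ0 : AddChar (ZMod p) E := AddChar.zmodChar p hz.pow_eq_one
  let ψ : AddChar F E := ψ0.compAddMonoidHom tr
  have hap : ∀ a, ψ a = z ^ (tr a).val := fun a => AddChar.zmodChar_apply hz.pow_eq_one (tr a)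
  have hmul : ∀ (m : ℕ) a, ψ ((m : F) * a) = (ψ a) ^ m := by
    intro m a
    rw [← nsmul_eq_mul, AddChar.map_nsmul_eq_pow]
  refine ⟨ψ, ?_, ?_, ?_, ?_⟩
  · apply AddChar.IsPrimitive.of_ne_one
    intro h
    obtain ⟨a, ha⟩ := Algebra.trace_surjective (ZMod p) F 1
    have h1 : ψ a = 1 := by rw [h]; rfl
    rw [hap] at h1
    have h2 : tr a = 1 := ha
    have : Fact (1 < p) := ⟨(Fact.out : p.Prime).one_lt⟩
    rw [h2, ZMod.val_one, pow_one] at h1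
    exact hz.ne_one (Fact.out : p.Prime).one_lt h1
  · intro a
    have : ∀ (k : ℕ) a, tr (a ^ p ^ k) = tr a := by
      intro k
      induction k with
      | zero => simp
      | succ k ih =>
        intro a
        rw [pow_succ, pow_mul, ← ih a]
        have := Algebra.trace_eq_of_algEquiv (FiniteField.frobeniusAlgEquiv (ZMod p) F p) (a ^ p ^ k)
        simp only [FiniteField.frobeniusAlgEquiv_apply, ZMod.card] at this
        exact this
    rw [hap, this, hap]
  · intro τ hτ a
    rw [hap, map_pow, hτ, AddChar.map_neg_eq_inv, hap, inv_pow]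
  · intro τ m hτ a
    rw [hmul, hap, map_pow, hτ, ← pow_mul, ← pow_mul, mul_comm]
end psi
end Paper

set_option linter.unusedSectionVars false
set_option linter.unusedVariables false
namespace Paper

theorem mk_FD (p k q : ℕ) (hp : p.Prime) (hpodd : Odd p) (hk : 0 < k) (hq : q = p ^ k)
    (F : Type) [Field F] [Fintype F] [CharP F p] (hF : Fintype.card F = q ^ 2) : FD q F := by
  have : Fact p.Prime := ⟨hp⟩
  have h3 : 3 ≤ p := by
    have := hp.two_le
    obtain ⟨l, hl⟩ := hpodd
    omega
  refine ⟨?_, ?_, hF, ?_, ?_, ?_⟩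
  · rw [hq]; exact hpodd.pow
  · rw [hq]; exact h3.trans (Nat.le_self_pow hk.ne' p)
  · intro a b; rw [hq]; exact add_pow_char_pow a b p k
  · intro a; rw [← pow_mul, ← sq, ← hF, FiniteField.pow_card]
  · apply Ring.two_ne_zero
    rw [ringChar.eq F p]
    omega

namespace Dat
variable {q : ℕ} {F G : Type} [Field F] [Group G] (D : Dat q F G) [Fintype F] [DecidableEq F]
  {E : Type} [Field E] [CharZero E] {n : ℕ} (ρ : G →* Matrix (Fin n) (Fin n) E) (ψ : AddChar F E)
  {E' : Type} [Field E'] [CharZero E'] (ρ' : G →* Matrix (Fin n) (Fin n) E') (ψ' : AddChar F E')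
  (f : E →+* E') (hρ : ∀ g, (ρ g).map f = ρ' g) (hψ' : ∀ a, ψ' a = f (ψ a))
include hρ hψ'

theorem e_mapf (y : F) : (D.e ρ ψ y).map f = D.e ρ' ψ' y := by
  rw [e, fam_map f y ψ' hψ']
  simp only [hρ]; rfl

theorem f_mapf (y : F) : (D.f ρ ψ y).map f = D.f ρ' ψ' y := by
  rw [Dat.f, fam_map f y ψ' hψ']
  simp only [Matrix.map_mul, hρ, D.e_mapf ρ ψ ρ' ψ' f hρ hψ']; rfl

theorem trace_mapf (M : Matrix (Fin n) (Fin n) E) : (M.map f).trace = f M.trace := by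
  simp [Matrix.trace]

theorem facts (hf0 : D.f ρ' ψ' 0 = 0) (hA : (D.e ρ' ψ' 0).trace = (q ^ 2 - 1 : ℕ))
    (hm : ∀ y, y ≠ 0 → y ^ q = -y → (D.e ρ' ψ' y).trace = (q * (q - 2) : ℕ))
    (hdet : ∀ x0 : Fˣ, orderOf x0 = q ^ 2 - 1 → (ρ' (D.t x0) * (1 - D.e ρ' ψ' 0) + D.e ρ' ψ' 0).det = -1) :
    D.f ρ ψ 0 = 0 ∧ (D.e ρ ψ 0).trace = (q ^ 2 - 1 : ℕ) ∧
    (∀ y, y ≠ 0 → y ^ q = -y → (D.e ρ ψ y).trace = (q * (q - 2) : ℕ)) ∧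
    (∀ x0 : Fˣ, orderOf x0 = q ^ 2 - 1 → (ρ (D.t x0) * (1 - D.e ρ ψ 0) + D.e ρ ψ 0).det = -1) := by
  refine ⟨?_, ?_, ?_, ?_⟩
  · apply Matrix.map_injective f.injective
    change (D.f ρ ψ 0).map f = Matrix.map 0 f
    rw [D.f_mapf ρ ψ ρ' ψ' f hρ hψ', hf0]
    simp
  · apply f.injective
    rw [← trace_mapf ρ ψ ρ' ψ' f hρ hψ', D.e_mapf ρ ψ ρ' ψ' f hρ hψ', hA, map_natCast]
  · intro y h1 h2
    apply f.injective
    rw [← trace_mapf ρ ψ ρ' ψ' f hρ hψ', D.e_mapf ρ ψ ρ' ψ' f hρ hψ', hm y h1 h2, map_natCast]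
  · intro x0 h
    apply f.injective
    rw [RingHom.map_det, map_neg, map_one, ← hdet x0 h, map_add, map_mul, map_sub, map_one]
    simp only [RingHom.mapMatrix_apply, hρ, D.e_mapf ρ ψ ρ' ψ' f hρ hψ']
end Dat

theorem sign1 (q : ℕ) (h3 : 3 ≤ q) (h : q % 4 = 1) (n : ℕ) (hn : n = (q-1)*(q^2-q+1)) : (-1 : ℂ) ^ (n*(n-1)/2) = 1 := by
  obtain ⟨l, hl⟩ : ∃ l, q - 1 = 4 * l := ⟨q / 4, by omega⟩
  apply Even.neg_one_pow
  rw [hl] at hn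
  have : n * (n-1) = 2 * (2 * (l * (q^2-q+1) * (n-1))) := by
    conv_lhs => rw [show n * (n-1) = (4 * l * (q^2-q+1)) * (n-1) by rw [← hn]]
    ring
  rw [this, Nat.mul_div_cancel_left _ (by norm_num)]
  exact even_two_mul _

theorem sign3 (q : ℕ) (h3 : 3 ≤ q) (h : q % 4 = 3) (n : ℕ) (hn : n = (q-1)*(q^2-q+1)) : (-1 : ℂ) ^ (n*(n-1)/2) = -1 := by
  obtain ⟨l, hl⟩ : ∃ l, q = 4 * l + 3 := ⟨q / 4, by omega⟩
  subst hl
  have h2 : (4*l+3)^2 - (4*l+3) = 16*l^2+20*l+6 := by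
    rw [show (4*l+3)^2 = (16*l^2+20*l+6) + (4*l+3) by ring]; simp
  have h1 : 4*l+3-1 = 4*l+2 := by omega
  rw [h2, h1] at hn
  obtain ⟨t, ht⟩ : ∃ t, n = 4 * t + 2 := ⟨16*l^3+28*l^2+17*l+3, by rw [hn]; ring⟩
  apply Odd.neg_one_pow
  have : n * (n-1) = 2 * (2 * (4 * t^2 + 3 * t) + 1) := by
    rw [ht, show 4*t+2-1 = 4*t+1 by omega]; ring
  rw [this, Nat.mul_div_cancel_left _ (by norm_num)]
  exact odd_two_mul_add_one _

theorem main_det (p k q : ℕ) (hp : p.Prime) (hpodd : Odd p) (hk : 0 < k) (hq : q = p ^ k)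
    (F : Type) [Field F] [Fintype F] [ExpChar F p] (hF : Fintype.card F = q ^ 2)
    (χ : ↥(SU3 p k F) → ℂ) (hχ : IsIrrChar χ)
    (hdeg : χ 1 = (((q - 1) * (q ^ 2 - q + 1) : ℕ) : ℂ))
    (n : ℕ) (ρ : ↥(SU3 p k F) →* GL (Fin n) ℂ) (hρχ : χ = charOf ρ)
    (hρL : ∀ g i j, ((ρ g : Matrix (Fin n) (Fin n) ℂ)) i j ∈ charField χ)
    (H : Matrix (Fin n) (Fin n) ℂ) (hHL : ∀ i j, H i j ∈ charField χ) (hHd : IsUnit H.det)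
    (hHH : H.conjTranspose = H)
    (hHρ : ∀ g, ((ρ g : Matrix (Fin n) (Fin n) ℂ)).conjTranspose * H * (ρ g : Matrix (Fin n) (Fin n) ℂ) = H) :
    n = (q-1)*(q^2-q+1) ∧ ∃ z ∈ charField χ, z ≠ 0 ∧ H.det = (q : ℂ) * (z * (starRingEnd ℂ) z) := by
  classical
  have : Fact p.Prime := ⟨hp⟩
  have : NeZero p := ⟨hp.ne_zero⟩
  have hch : CharP F p := by
    rcases ‹ExpChar F p› with _ | _
    · exact absurd rfl hp.ne_one.symm
    · assumption
  have hFD := mk_FD p k q hp hpodd hk hq F hF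
  let G := ↥(SU3 p k F)
  have : Fintype (SU3 p k F) := Fintype.ofFinite _
  obtain ⟨n0, ρ0, ⟨hn0, hirr0⟩, hχ0⟩ := hχ
  have hn : n = (q-1)*(q^2-q+1) := by
    have : χ 1 = (n : ℂ) := by rw [hρχ]; simp [charOf]
    rw [this] at hdeg
    exact_mod_cast hdeg
  have hn' : n0 = n := by
    have : χ 1 = (n : ℂ) := by rw [hρχ]; simp [charOf]
    have h2 : χ 1 = (n0 : ℂ) := by rw [hχ0]; simp [charOf]
    rw [this] at h2
    exact_mod_cast h2.symm
  subst hn'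
  refine ⟨hn, ?_⟩
  let R : SU3 p k F →* Matrix (Fin n0) (Fin n0) ℂ := (Units.coeHom _).comp ρ
  let R0 : SU3 p k F →* Matrix (Fin n0) (Fin n0) ℂ := (Units.coeHom _).comp ρ0
  have hR : ∀ g, (R g).trace = χ g := fun g => by rw [hρχ]; rfl
  have hR0 : ∀ g, (R0 g).trace = χ g := fun g => by rw [hχ0]; rfl
  have hcon : ∀ g, (starRingEnd ℂ) (χ g) = χ g⁻¹ := by
    intro g
    rw [← hR, ← hR]
    exact conj_trace R H hHd hHρ g
  have hirr := irr_transfer hn0 R0 R hirr0 (fun g => by rw [hR, hR0])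
  have hs : ∑ g, ‖(R g).trace‖ ^ 2 = (Fintype.card (SU3 p k F) : ℝ) := by
    have h1 := schur_orth hn0 R hirr
    have h2 : ((∑ g, ‖(R g).trace‖ ^ 2 : ℝ) : ℂ) = ((Fintype.card (SU3 p k F) : ℝ) : ℂ) := by
      push_cast
      rw [← h1]
      apply Finset.sum_congr rfl
      intro g _
      rw [hR, hR, ← hcon, Complex.mul_conj, Complex.normSq_eq_norm_sq]
      push_cast; rfl
    exact_mod_cast h2
  set L : Subfield ℂ := charField χ with hLdef
  have hL : ∀ x ∈ L, (starRingEnd ℂ) x ∈ L := by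
    have : L ≤ L.comap (starRingEnd ℂ) := by
      conv_lhs => rw [hLdef, charField]
      rw [Subfield.closure_le]
      rintro _ ⟨g, rfl⟩
      change (starRingEnd ℂ) (χ g) ∈ L
      rw [hcon]
      exact Subfield.subset_closure ⟨_, rfl⟩
    exact this
  obtain ⟨ζ, hζ⟩ : ∃ ζ : ℂ, IsPrimitiveRoot ζ p := ⟨_, Complex.isPrimitiveRoot_exp p hp.ne_zero⟩
  have hζc : (starRingEnd ℂ) ζ = ζ⁻¹ := by
    have h1 : ‖ζ‖ = 1 := hζ.norm'_eq_one hp.ne_zero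
    rw [Complex.inv_def, Complex.normSq_eq_norm_sq, h1]
    simp
  have hcyc := cyc_ext (L := L) hζ
  have : IsGalois L (EE L ζ) := IsCyclotomicExtension.isGalois {p} L (EE L ζ)
  have : FiniteDimensional L (EE L ζ) := IsCyclotomicExtension.finiteDimensional {p} L (EE L ζ)
  have hzE : IsPrimitiveRoot (zE L ζ) p := by
    rw [← IsPrimitiveRoot.coe_submonoidClass_iff]; exact hζ
  obtain ⟨ψ, hψ, hfr, hψσ, hψm⟩ := exists_psi (F := F) (zE L ζ) hzE k
  rw [← hq] at hfr
  let ι : EE L ζ →+* ℂ := algebraMap (EE L ζ) ℂ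
  let ψC : AddChar F ℂ := (ι : EE L ζ →* ℂ).compAddChar ψ
  have hψC : ∀ a, ψC a = ι (ψ a) := fun a => rfl
  have hψCp : ψC.IsPrimitive := by
    intro a ha h
    apply hψ ha
    ext x
    have := DFunLike.congr_fun h x
    apply congrArg Subtype.val
    apply ι.injective
    simpa [AddChar.mulShift_apply, hψC] using this
  have hmem : ∀ x ∈ L, x ∈ EE L ζ := fun x hx => (EE L ζ).algebraMap_mem ⟨x, hx⟩
  have hinj : Function.Injective (fun M : Matrix (Fin n0) (Fin n0) (EE L ζ) => M.map ι) :=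
    Matrix.map_injective ι.injective
  let ρE : SU3 p k F →* Matrix (Fin n0) (Fin n0) (EE L ζ) :=
    { toFun := fun g => Matrix.of fun i j => ⟨R g i j, hmem _ (hρL g i j)⟩
      map_one' := by
        apply hinj
        ext i j
        simp [ι, Matrix.one_apply]
      map_mul' := by
        intro g h
        apply hinj
        change _ = Matrix.map (_ * _) ι
        rw [Matrix.map_mul]
        ext i j
        change R (g * h) i j = _
        rw [map_mul]
        rfl }
  have hρE : ∀ g, (ρE g).map ι = R g := fun g => by ext i j; rfl
  let HE : Matrix (Fin n0) (Fin n0) (EE L ζ) := Matrix.of fun i j => ⟨H i j, hmem _ (hHL i j)⟩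
  have hHE : HE.map ι = H := by ext i j; rfl
  let D := suDat (p := p) (k := k) (F := F) hq hFD
  obtain ⟨c1, c2, c3, c4⟩ := D.partI R ψC hn hψCp hFD (fun a => by rw [hψC, hfr, hψC]) hs hirr
  obtain ⟨d1, d2, d3, d4⟩ := D.facts ρE ψ R ψC ι hρE hψC c1 c2 c3 c4
  have hadj : ∀ M : Matrix (Fin n0) (Fin n0) (EE L ζ), (adj (sig hL hζc) M).map ι = (M.map ι)ᴴ := by
    intro M; ext i j; rfl
  have hdetE : ι HE.det = H.det := by
    rw [RingHom.map_det, ← hHE]; rfl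
  obtain ⟨z, hz0, hz⟩ := D.core (L := L) ρE ψ hn hFD hψ hfr (sig hL hζc) (sig_sig hL hζc) (sig_gal hL hζc hζ)
    (hψσ _ (by apply Subtype.ext; rw [sig_val]; simpa [zE] using hζc))
    (by
      intro γ
      obtain ⟨m, hm, hγ⟩ := gal_z hζ γ
      refine ⟨(m : F), ?_, ?_, hψm (γ : EE L ζ →+* EE L ζ) m hγ⟩
      · rw [Ne, CharP.cast_eq_zero_iff F p]
        intro hd
        exact hp.ne_one (Nat.eq_one_of_dvd_coprimes hm.symm dvd_rfl hd)
      · rw [hq, ← iterateFrobenius_def, map_natCast])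
    (by
      intro γ g
      apply Matrix.ext; intro i j
      exact γ.commutes ⟨R g i j, hρL g i j⟩)
    HE
    (by
      intro γ
      apply Matrix.ext; intro i j
      exact γ.commutes ⟨H i j, hHL i j⟩)
    (by
      intro h
      rw [h, map_zero] at hdetE
      exact hHd.ne_zero hdetE.symm)
    (by
      apply hinj
      change (adj (sig hL hζc) HE).map ι = HE.map ι
      rw [hadj, hHE, hHH])
    (by
      intro g
      apply hinj
      change (adj (sig hL hζc) (ρE g) * HE * ρE g).map ι = HE.map ι
      rw [Matrix.map_mul, Matrix.map_mul, hadj, hHE, hρE]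
      exact hHρ g)
    d1 d2 d3 d4
  refine ⟨z, z.2, ?_, ?_⟩
  · intro h; exact hz0 (Subtype.ext h)
  · rw [← hdetE, hz, map_mul, map_mul, map_natCast]
    rfl
end Paper

namespace Paper

/-- every irreducible character of `SU₃(q)`, `q` odd, of degree
`(q-1)(q²-q+1)` with non-real character field has unitary discriminant `q` if
`q ≡ 1 (mod 4)` and `-q` if `q ≡ 3 (mod 4)`. -/
theorem stmt14 (p k q : ℕ) (hp : p.Prime) (hpodd : Odd p) (hk : 0 < k) (hq : q = p ^ k)
    (F : Type) [Field F] [Fintype F] [ExpChar F p] (hF : Fintype.card F = q ^ 2)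
    (χ : ↥(SU3 p k F) → ℂ) (hχ : IsIrrChar χ)
    (hdeg : χ 1 = (((q - 1) * (q ^ 2 - q + 1) : ℕ) : ℂ))
    (hnr : NotReal χ) :
    (q % 4 = 1 → HasUnitaryDisc χ (q : ℂ)) ∧
    (q % 4 = 3 → HasUnitaryDisc χ (-(q : ℂ))) := by
  have h3 : 3 ≤ q := by
    have h2 := hp.two_le
    obtain ⟨l, hl⟩ := hpodd
    have h3 : 3 ≤ p := by omega
    rw [hq]; exact h3.trans (Nat.le_self_pow hk.ne' p)
  refine ⟨fun h n ρ h1 h2 H h4 h5 h6 h7 => ?_, fun h n ρ h1 h2 H h4 h5 h6 h7 => ?_⟩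
  · obtain ⟨hn, z, hzL, hz0, hz⟩ :=
      main_det p k q hp hpodd hk hq F hF χ hχ hdeg n ρ h1 h2 H h4 h5 h6 h7
    exact ⟨z, hzL, hz0, by rw [sign1 q h3 h n hn, hz, one_mul]⟩
  · obtain ⟨hn, z, hzL, hz0, hz⟩ :=
      main_det p k q hp hpodd hk hq F hF χ hχ hdeg n ρ h1 h2 H h4 h5 h6 h7
    exact ⟨z, hzL, hz0, by rw [sign3 q h3 h n hn, hz]; ring⟩

end Paper
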